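/- arXiv:1708.06659 — 2 statements merged into one kernel-verified Lean document; each statement's English description precedes it below -/
import Mathlib

section
/- Let d, n ∈ ℕ, 1 ≤ r < s < t < ∞ and C > 0. There exists ε₀ > 0, depending only on d, n, r, s, t, C, with the following property. Let Q ⊂ ℝ^d be a cube, f, g ∈ L^s(4Q) and w ∈ L^r(4Q;ℝ^n). Suppose there exists ε ∈ (0,ε₀) such that for every dyadic subcube Q_k of Q with Q_k ≠ Q, with predecessor Q̃_k, there exists a measurable w_a : 4Q̃_k → ℝ^n with w_a ∈ L^t(2Q̃_k) ∩ L^r(4Q̃_k) satisfying: (1) (⨍_{2Q̃_k}|w_a|^t)^{1/t} ≤ (C/2)(⨍_{4Q̃_k}|w_a|^r)^{1/r}; (2) ⨍_{4Q̃_k}|w_a|^r ≤ C⨍_{4Q̃_k}|w|^r + C⨍_{4Q̃_k}|g|^r; (3) ⨍_{4Q̃_k}|w − w_a|^r ≤ ε⨍_{4Q̃_k}|w|^r + C⨍_{4Q̃_k}|f|^r. Then w ∈ L^s(Q;ℝ^n), and there is c > 0 depending only on d, n, r, s, t, C (independent of f, g, w, Q) such that (⨍_Q|w|^s)^{1/s}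 ≤ c[(⨍_{4Q}|f|^s)^{1/s} + (⨍_{4Q}|g|^s)^{1/s} + (⨍_{4Q}|w|^r)^{1/r}]. -/
open MeasureTheory Filter Metric Set
open scoped ENNReal Topology RealInnerProductSpace

noncomputable section

/-- `ℝ^d` with the Euclidean norm. -/
abbrev Ed (d : ℕ) : Type := EuclideanSpace ℝ (Fin d)
/-- `ℝ^N` with the Euclidean norm. -/
abbrev En (N : ℕ) : Type := EuclideanSpace ℝ (Fin N)
/-- The space of `N × d` matrices with the Euclidean (Frobenius) norm. -/
abbrev Mat (N d : ℕ) : Type := EuclideanSpace ℝ (Fin N × Fin d)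

/-- The open axis-parallel cube with center `c` and sidelength `R`. -/
def cube {d : ℕ} (c : Ed d) (R : ℝ) : Set (Ed d) := {x | ∀ i, |x i - c i| < R / 2}

/-- The `i`-th partial derivative of a scalar function. -/
def pder {d : ℕ} (φ : Ed d → ℝ) (i : Fin d) (x : Ed d) : ℝ :=
  fderiv ℝ φ x (EuclideanSpace.single i 1)

/-- `g` is the weak gradient of `f` on `U`: for every smooth compactly supported scalar test
function `φ` with support in `U` and all indices `a`, `i`,
`∫_U f^a ∂_i φ = −∫_U g^a_i φ`. -/
def IsWeakGrad {d : ℕ} {ι : Type} [Fintype ι] (U : Set (Ed d))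
    (f : Ed d → EuclideanSpace ℝ ι) (g : Ed d → EuclideanSpace ℝ (ι × Fin d)) : Prop :=
  ∀ φ : Ed d → ℝ, ContDiff ℝ (⊤ : ℕ∞) φ → HasCompactSupport φ → tsupport φ ⊆ U →
    ∀ (a : ι) (i : Fin d),
      ∫ x in U, f x a * pder φ i x = - ∫ x in U, g x (a, i) * φ x


/-- Center of the dyadic subcube of generation `k`, index `m` (with `m i < 2^k`), of the cube
with center `c` and sidelength `R`. -/
def dyadicCenter {d : ℕ} (c : Ed d) (R : ℝ) (k : ℕ) (m : Fin d → ℕ) : Ed d :=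
  (WithLp.equiv 2 _).symm fun i => c i - R / 2 + R / 2 ^ k * ((m i : ℝ) + 1 / 2)

/-- The `scale`-fold dilate of the dyadic subcube of generation `k`, index `m`, of the cube
with center `c` and sidelength `R`. -/
def dyadicCube {d : ℕ} (c : Ed d) (R : ℝ) (k : ℕ) (m : Fin d → ℕ) (scale : ℝ) :
    Set (Ed d) :=
  cube (dyadicCenter c R k m) (scale * (R / 2 ^ k))

lemma rect_meas {d : ℕ} (c : Ed d) (R : ℝ) : MeasurableSet (cube c R) := by
  have : cube c R = ⋂ i, {x : Ed d | |x i - c i| < R / 2} := by ext; simp [cube]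
  rw [this]
  refine MeasurableSet.iInter fun i => measurableSet_lt ?_ measurable_const
  fun_prop

lemma cube_eq_preimage {d : ℕ} (c : Ed d) {R : ℝ} (hR : 0 < R) :
    cube c R = WithLp.ofLp ⁻¹' (Metric.ball (WithLp.ofLp c) (R / 2)) := by
  ext x
  rw [mem_preimage, Metric.mem_ball, dist_pi_lt_iff (by positivity)]
  simp [cube, Real.dist_eq]

lemma cube_vol {d : ℕ} (c : Ed d) {R : ℝ} (hR : 0 < R) :
    volume (cube c R) = ENNReal.ofReal R ^ d := by
  rw [cube_eq_preimage c hR, (PiLp.volume_preserving_ofLp (Fin d)).measure_preimage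
    Metric.isOpen_ball.measurableSet.nullMeasurableSet, Real.volume_pi_ball _ (by positivity)]
  rw [ENNReal.ofReal_pow (by positivity), Fintype.card_fin, mul_div_cancel₀ _ (two_ne_zero)]

lemma cube_sub {d : ℕ} {c c' : Ed d} {S S' : ℝ} (h : ∀ i, |c' i - c i| ≤ (S - S') / 2) :
    cube c' S' ⊆ cube c S := by
  intro x hx i
  have h1 := hx i
  have h2 := h i
  have h3 := abs_add_le (x i - c' i) (c' i - c i)
  rw [show x i - c' i + (c' i - c i) = x i - c i by ring] at h3
  linarith

/-- index of the dyadic cell containing `x` -/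
def idx {d : ℕ} (c : Ed d) (R : ℝ) (k : ℕ) (x : Ed d) : Fin d → ℕ :=
  fun i => ⌊(x i - (c i - R / 2)) / R * 2 ^ k⌋₊

lemma idx_meas {d : ℕ} (c : Ed d) (R : ℝ) (k : ℕ) : Measurable (idx c R k) := by
  refine measurable_pi_lambda _ fun i => ?_
  refine Nat.measurable_floor.comp ?_
  fun_prop

lemma idx_succ {d : ℕ} (c : Ed d) (R : ℝ) (k : ℕ) (x : Ed d) (i : Fin d) :
    idx c R k x i = idx c R (k + 1) x i / 2 := by
  unfold idx
  have := Nat.floor_div_natCast ((x i - (c i - R / 2)) / R * 2 ^ (k + 1)) 2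
  rw [← this]
  congr 1
  push_cast
  rw [pow_succ]; ring

lemma idx_eq_of_le {d : ℕ} {c : Ed d} {R : ℝ} {k j : ℕ} (hjk : j ≤ k) {x y : Ed d}
    (h : idx c R k x = idx c R k y) : idx c R j x = idx c R j y := by
  induction k, hjk using Nat.le_induction with
  | base => exact h
  | succ k hk ih =>
    apply ih
    funext i
    rw [idx_succ c R k x, idx_succ c R k y, h]

lemma idx_lt {d : ℕ} {c : Ed d} {R : ℝ} (hR : 0 < R) (k : ℕ) {x : Ed d} (hx : x ∈ cube c R)
    (i : Fin d) : idx c R k x i < 2 ^ k := by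
  unfold idx
  have := abs_lt.1 (hx i)
  have h1 : (x i - (c i - R / 2)) / R < 1 := by rw [div_lt_one hR]; linarith
  have h0 : 0 < (x i - (c i - R / 2)) / R := by apply div_pos _ hR; linarith
  rw [Nat.floor_lt (by positivity)]
  push_cast
  exact mul_lt_of_lt_one_left (by positivity) h1

lemma center_apply {d : ℕ} (c : Ed d) (R : ℝ) (k : ℕ) (m : Fin d → ℕ) (i : Fin d) :
    dyadicCenter c R k m i = c i - R / 2 + R / 2 ^ k * ((m i : ℝ) + 1 / 2) := rfl

lemma mem_dyadic {d : ℕ} {c : Ed d} {R : ℝ} (hR : 0 < R) (k : ℕ) {x : Ed d} (hx : x ∈ cube c R)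
    {s : ℝ} (hs : 1 < s) : x ∈ dyadicCube c R k (idx c R k x) s := by
  intro i
  rw [center_apply]
  have := abs_lt.1 (hx i)
  have h0 : 0 < (x i - (c i - R / 2)) / R := by apply div_pos _ hR; linarith
  set y := (x i - (c i - R / 2)) / R with hy
  have hx' : x i = c i - R / 2 + R / 2 ^ k * (y * 2 ^ k) := by
    rw [hy]; field_simp; ring
  have e1 := Nat.floor_le (a := y * 2 ^ k) (by positivity)
  have e2 := Nat.lt_floor_add_one (y * 2 ^ k)
  have e3 : idx c R k x i = ⌊y * 2 ^ k⌋₊ := rfl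
  rw [e3, hx']
  have hl : 0 < R / 2 ^ k := by positivity
  generalize R / 2 ^ k = l at *
  generalize y * 2 ^ k = z at *
  rw [show c i - R / 2 + l * z - (c i - R / 2 + l * (↑⌊z⌋₊ + 1 / 2)) = l * (z - ⌊z⌋₊ - 1 / 2) by ring,
    abs_mul, abs_of_pos hl]
  have : |z - ⌊z⌋₊ - 1 / 2| ≤ 1 / 2 := by rw [abs_le]; constructor <;> linarith
  nlinarith

lemma dyadic_one_sub {d : ℕ} {c : Ed d} {R : ℝ} (hR : 0 < R) (k : ℕ) {m : Fin d → ℕ}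
    (hm : ∀ i, m i < 2 ^ k) :
    dyadicCube c R k m 1 ⊆ cube c R ∩ {x | idx c R k x = m} := by
  intro x hx
  have key : ∀ i, (m i : ℝ) < (x i - (c i - R / 2)) / R * 2 ^ k ∧
      (x i - (c i - R / 2)) / R * 2 ^ k < m i + 1 := by
    intro i
    have := hx i
    rw [center_apply] at this
    set y := (x i - (c i - R / 2)) / R with hy
    have hx' : x i = c i - R / 2 + R / 2 ^ k * (y * 2 ^ k) := by
      rw [hy]; field_simp; ring
    rw [hx'] at this
    have hl : 0 < R / 2 ^ k := by positivity
    generalize R / 2 ^ k = l at *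
    generalize y * 2 ^ k = z at *
    rw [show c i - R / 2 + l * z - (c i - R / 2 + l * (↑(m i) + 1 / 2)) = l * (z - m i - 1 / 2) by ring,
      abs_mul, abs_of_pos hl] at this
    have : |z - m i - 1 / 2| < 1 / 2 := by
      by_contra hh; push Not at hh; nlinarith
    rw [abs_lt] at this
    constructor <;> linarith
  constructor
  · intro i
    obtain ⟨k1, k2⟩ := key i
    have h3 : (m i : ℝ) + 1 ≤ 2 ^ k := by exact_mod_cast hm i
    have h4 : (0 : ℝ) < 2 ^ k := by positivity
    have h5 : (0 : ℝ) ≤ m i := by positivity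
    set y := (x i - (c i - R / 2)) / R with hy
    have hx' : x i = c i - R / 2 + R * y := by
      rw [hy]; field_simp; ring
    have y0 : 0 < y := by by_contra hh; push Not at hh; nlinarith
    have y1 : y < 1 := by by_contra hh; push Not at hh; nlinarith
    rw [hx', abs_lt]
    constructor <;> nlinarith
  · funext i
    obtain ⟨k1, k2⟩ := key i
    exact (Nat.floor_eq_iff (by linarith [Nat.cast_nonneg (α := ℝ) (m i)])).2 ⟨k1.le, k2⟩

lemma center_succ {d : ℕ} (c : Ed d) {R : ℝ} (hR : 0 < R) (k : ℕ) (m : Fin d → ℕ) (i : Fin d) :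
    |dyadicCenter c R (k + 1) m i - dyadicCenter c R k (fun i => m i / 2) i| ≤
      (R / 2 ^ k - R / 2 ^ (k + 1)) / 2 := by
  rw [center_apply, center_apply, pow_succ]
  have hl : 0 < R / 2 ^ k := by positivity
  rw [← div_div]
  generalize R / 2 ^ k = l at *
  have h1 : (m i : ℝ) = 2 * ((m i / 2 : ℕ) : ℝ) + ((m i % 2 : ℕ) : ℝ) := by
    exact_mod_cast (Nat.div_add_mod (m i) 2).symm
  have h2 : ((m i % 2 : ℕ) : ℝ) ≤ 1 := by exact_mod_cast Nat.le_of_lt_succ (Nat.mod_lt _ two_pos)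
  have h3 : (0 : ℝ) ≤ ((m i % 2 : ℕ) : ℝ) := by positivity
  rw [h1, abs_le]
  constructor <;> nlinarith

lemma center_nest {d : ℕ} {c : Ed d} {R : ℝ} (hR : 0 < R) {k j : ℕ} (hkj : k ≤ j) (x : Ed d)
    (i : Fin d) :
    |dyadicCenter c R j (idx c R j x) i - dyadicCenter c R k (idx c R k x) i| ≤
      (R / 2 ^ k - R / 2 ^ j) / 2 := by
  induction j, hkj using Nat.le_induction with
  | base => simp
  | succ j hj ih =>
    have h1 := center_succ c hR j (idx c R (j + 1) x) i
    have h2 : (fun i => idx c R (j + 1) x i / 2) = idx c R j x := by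
      funext i; rw [idx_succ c R j]
    rw [h2] at h1
    have := abs_sub_le (dyadicCenter c R (j+1) (idx c R (j+1) x) i)
      (dyadicCenter c R j (idx c R j x) i) (dyadicCenter c R k (idx c R k x) i)
    linarith

lemma dyadic_four_sub {d : ℕ} {c : Ed d} {R : ℝ} (hR : 0 < R) {k j : ℕ} (hkj : k ≤ j) (x : Ed d) :
    dyadicCube c R j (idx c R j x) 4 ⊆ dyadicCube c R k (idx c R k x) 4 := by
  refine cube_sub fun i => (center_nest hR hkj x i).trans ?_
  have : R / 2 ^ j ≤ R / 2 ^ k := by gcongr; norm_num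
  linarith

lemma dyadic_two_sub {d : ℕ} {c : Ed d} {R : ℝ} (hR : 0 < R) {k j : ℕ} (hkj : k + 2 ≤ j) (x : Ed d) :
    dyadicCube c R j (idx c R j x) 4 ⊆ dyadicCube c R k (idx c R k x) 2 := by
  refine cube_sub fun i => (center_nest hR (by omega) x i).trans ?_
  have : R / 2 ^ j ≤ R / 2 ^ (k + 2) := by gcongr; norm_num
  have h2 : R / 2 ^ (k + 2) = R / 2 ^ k / 4 := by rw [pow_add, ← div_div]; norm_num
  have h3 : 0 < R / 2 ^ k := by positivity
  linarith

lemma dyadic_scale_sub {d : ℕ} (c : Ed d) {R : ℝ} (hR : 0 < R) (k : ℕ) (m : Fin d → ℕ) {s s' : ℝ}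
    (hs : s ≤ s') : dyadicCube c R k m s ⊆ dyadicCube c R k m s' := by
  refine cube_sub fun i => ?_
  have h3 : 0 < R / 2 ^ k := by positivity
  simp; nlinarith

lemma dyadic_zero {d : ℕ} (c : Ed d) (R : ℝ) (s : ℝ) :
    dyadicCube c R 0 (fun _ => 0) s = cube c (s * R) := by
  have : dyadicCenter c R 0 (fun _ => 0) = c := by
    ext i; rw [center_apply]; simp; ring
  simp [dyadicCube, this]

lemma idx_zero {d : ℕ} {c : Ed d} {R : ℝ} (hR : 0 < R) {x : Ed d} (hx : x ∈ cube c R) :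
    idx c R 0 x = fun _ => 0 := by
  funext i
  have := idx_lt hR 0 hx i
  simpa using this

/-- a point of the cell -/
lemma exists_idx {d : ℕ} (c : Ed d) {R : ℝ} (hR : 0 < R) (k : ℕ) {m : Fin d → ℕ}
    (hm : ∀ i, m i < 2 ^ k) : ∃ x ∈ cube c R, idx c R k x = m := by
  have : dyadicCenter c R k m ∈ dyadicCube c R k m 1 := by
    intro i; simp; positivity
  exact ⟨_, dyadic_one_sub hR k hm this⟩

lemma dyadic_four_sub_Q {d : ℕ} {c : Ed d} {R : ℝ} (hR : 0 < R) (k : ℕ) {m : Fin d → ℕ}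
    (hm : ∀ i, m i < 2 ^ k) : dyadicCube c R k m 4 ⊆ cube c (4 * R) := by
  obtain ⟨x, hx, rfl⟩ := exists_idx c hR k hm
  have := dyadic_four_sub hR (Nat.zero_le k) (c := c) x
  rwa [idx_zero hR hx, dyadic_zero] at this

lemma dyadic_vol {d : ℕ} (c : Ed d) {R : ℝ} (hR : 0 < R) (k : ℕ) (m : Fin d → ℕ) {s : ℝ}
    (hs : 0 < s) : volume (dyadicCube c R k m s) = ENNReal.ofReal s ^ d * ENNReal.ofReal (R / 2 ^ k) ^ d := by
  rw [dyadicCube, cube_vol _ (by positivity), ENNReal.ofReal_mul hs.le, mul_pow]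

/-- average over the four-fold dilate -/
def cav {d : ℕ} (c : Ed d) (R : ℝ) (h : Ed d → ℝ≥0∞) (k : ℕ) (m : Fin d → ℕ) : ℝ≥0∞ :=
  (volume (dyadicCube c R k m 4))⁻¹ * ∫⁻ x in dyadicCube c R k m 4, h x

/-- truncated dyadic maximal function -/
def mx {d : ℕ} (c : Ed d) (R : ℝ) (K : ℕ) (h : Ed d → ℝ≥0∞) (x : Ed d) : ℝ≥0∞ :=
  (Finset.range (K + 1)).sup fun k => cav c R h k (idx c R k x)

lemma dyadic_meas {d : ℕ} (c : Ed d) (R : ℝ) (k : ℕ) (m : Fin d → ℕ) (s : ℝ) :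
    MeasurableSet (dyadicCube c R k m s) := rect_meas _ _

lemma dyadic_vol_ne_zero {d : ℕ} (c : Ed d) {R : ℝ} (hR : 0 < R) (k : ℕ) (m : Fin d → ℕ) {s : ℝ}
    (hs : 0 < s) : volume (dyadicCube c R k m s) ≠ 0 := by
  rw [dyadic_vol c hR k m hs]
  have : 0 < R / 2 ^ k := by positivity
  refine mul_ne_zero (pow_ne_zero _ ?_) (pow_ne_zero _ ?_) <;> simpa

lemma dyadic_vol_ne_top {d : ℕ} (c : Ed d) {R : ℝ} (hR : 0 < R) (k : ℕ) (m : Fin d → ℕ) {s : ℝ}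
    (hs : 0 < s) : volume (dyadicCube c R k m s) ≠ ∞ := by
  rw [dyadic_vol c hR k m hs]
  exact ENNReal.mul_ne_top (by simp) (by simp)

lemma cav_mul {d : ℕ} (c : Ed d) {R : ℝ} (hR : 0 < R) (h : Ed d → ℝ≥0∞) (k : ℕ) (m : Fin d → ℕ) :
    volume (dyadicCube c R k m 4) * cav c R h k m = ∫⁻ x in dyadicCube c R k m 4, h x := by
  rw [cav, ← mul_assoc, ENNReal.mul_inv_cancel (dyadic_vol_ne_zero c hR k m (by norm_num))
    (dyadic_vol_ne_top c hR k m (by norm_num)), one_mul]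

lemma mx_meas {d : ℕ} (c : Ed d) (R : ℝ) (K : ℕ) (h : Ed d → ℝ≥0∞) : Measurable (mx c R K h) := by
  have : mx c R K h = fun x => ⨆ k ∈ Finset.range (K + 1), cav c R h k (idx c R k x) := by
    funext x; unfold mx; rw [Finset.sup_eq_iSup]
  rw [this]
  refine Measurable.biSup _ (Finset.countable_toSet _) fun k hk => ?_
  exact (Measurable.of_discrete (f := cav c R h k)).comp (idx_meas c R k)

lemma le_mx {d : ℕ} (c : Ed d) (R : ℝ) {K k : ℕ} (hk : k ≤ K) (h : Ed d → ℝ≥0∞) (x : Ed d) :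
    cav c R h k (idx c R k x) ≤ mx c R K h x :=
  Finset.le_sup (f := fun k => cav c R h k (idx c R k x)) (by simpa [Nat.lt_succ_iff] using hk)

lemma lt_mx {d : ℕ} {c : Ed d} {R : ℝ} {K : ℕ} {h : Ed d → ℝ≥0∞} {x : Ed d} {l : ℝ≥0∞} :
    l < mx c R K h x ↔ ∃ k ≤ K, l < cav c R h k (idx c R k x) := by
  unfold mx
  rw [Finset.lt_sup_iff]
  simp [Nat.lt_succ_iff]

lemma mx_lt_top {d : ℕ} (c : Ed d) {R : ℝ} (hR : 0 < R) (K : ℕ) {h : Ed d → ℝ≥0∞}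
    (hh : ∫⁻ x, h x ≠ ∞) (x : Ed d) : mx c R K h x ≠ ∞ := by
  unfold mx
  rw [← lt_top_iff_ne_top, Finset.sup_lt_iff (by simp)]
  intro k hk
  unfold cav
  exact ENNReal.mul_lt_top (ENNReal.inv_lt_top.2 (pos_iff_ne_zero.2
    (dyadic_vol_ne_zero c hR k _ (by norm_num))))
    ((setLIntegral_le_lintegral _ _).trans_lt hh.lt_top)

lemma mx_bdd {d : ℕ} (c : Ed d) {R : ℝ} (hR : 0 < R) (K : ℕ) {h : Ed d → ℝ≥0∞}
    (hh : ∫⁻ x, h x ≠ ∞) : ∃ B : ℝ≥0∞, B ≠ ∞ ∧ ∀ x, mx c R K h x ≤ B := by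
  refine ⟨(ENNReal.ofReal 4 ^ d * ENNReal.ofReal (R / 2 ^ K) ^ d)⁻¹ * ∫⁻ x, h x, ?_, fun x => ?_⟩
  · have : 0 < R / 2 ^ K := by positivity
    refine ENNReal.mul_ne_top (ENNReal.inv_ne_top.2 (mul_ne_zero (pow_ne_zero _ ?_)
      (pow_ne_zero _ ?_))) hh <;> simpa
  · unfold mx
    refine Finset.sup_le fun k hk => ?_
    unfold cav
    rw [dyadic_vol c hR k _ (by norm_num)]
    have : k ≤ K := by simpa [Nat.lt_succ_iff] using hk
    gcongr
    · norm_num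
    · exact Measure.restrict_le_self

lemma cav_le {d : ℕ} {c : Ed d} {R : ℝ} {h h' : Ed d → ℝ≥0∞} {k : ℕ} {m : Fin d → ℕ}
    (hh : ∀ x ∈ dyadicCube c R k m 4, h x ≤ h' x) : cav c R h k m ≤ cav c R h' k m := by
  unfold cav
  exact mul_le_mul_right (setLIntegral_mono' (dyadic_meas ..) hh) _

lemma cav_add {d : ℕ} {c : Ed d} {R : ℝ} {h h' : Ed d → ℝ≥0∞} (hm : Measurable h) {k : ℕ}
    {m : Fin d → ℕ} :
    cav c R (fun x => h x + h' x) k m = cav c R h k m + cav c R h' k m := by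
  unfold cav
  rw [lintegral_add_left hm, mul_add]

lemma cav_const {d : ℕ} {c : Ed d} {R : ℝ} (hR : 0 < R) (a : ℝ≥0∞) (k : ℕ) (m : Fin d → ℕ) :
    cav c R (fun _ => a) k m = a := by
  unfold cav
  rw [setLIntegral_const, mul_comm a, ← mul_assoc, ENNReal.inv_mul_cancel
    (dyadic_vol_ne_zero c hR k m (by norm_num))
    (dyadic_vol_ne_top c hR k m (by norm_num)), one_mul]

lemma weak_type {d : ℕ} (c : Ed d) {R : ℝ} (hR : 0 < R) (K : ℕ) (h : Ed d → ℝ≥0∞) (l : ℝ≥0∞) :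
    l * volume {x | x ∈ cube c R ∧ l < mx c R K h x} ≤ 5 ^ d * ∫⁻ x, h x := by
  let B : ℕ × (Fin d → ℕ) → Set (Ed d) := fun a => dyadicCube c R a.1 a.2 4
  let T : Set (ℕ × (Fin d → ℕ)) := {a | l < cav c R h a.1 a.2}
  obtain ⟨u, huT, hdis, hcov⟩ := Vitali.exists_disjoint_subfamily_covering_enlargement B T
    (fun a => R / 2 ^ a.1) 2 (by norm_num) (fun a _ => by positivity) R
    (fun a _ => div_le_self hR.le (one_le_pow₀ (by norm_num)))
    (fun a _ => ⟨dyadicCenter c R a.1 a.2, fun i => by simp; positivity⟩)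
  have hsub : {x | x ∈ cube c R ∧ l < mx c R K h x} ⊆ ⋃ a ∈ u, dyadicCube c R a.1 a.2 20 := by
    rintro x ⟨hx, hl⟩
    obtain ⟨k, hk, hlk⟩ := lt_mx.1 hl
    obtain ⟨b, hb, ⟨y, hy1, hy2⟩, hδ⟩ := hcov (k, idx c R k x) hlk
    rw [mem_iUnion₂]
    refine ⟨b, hb, fun i => ?_⟩
    have h1 := mem_dyadic hR k hx (s := 4) (by norm_num) i
    have h2 := hy1 i
    have h3 := hy2 i
    simp only at h1 h2 h3 hδ
    rw [abs_sub_comm] at h2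
    have h4 := abs_sub_le (x i) (dyadicCenter c R k (idx c R k x) i) (y i)
    have h5 := abs_sub_le (x i) (y i) (dyadicCenter c R b.1 b.2 i)
    linarith
  calc l * volume {x | x ∈ cube c R ∧ l < mx c R K h x}
      ≤ l * ∑' a : u, volume (dyadicCube c R a.1.1 a.1.2 20) := by
        gcongr
        exact (measure_mono hsub).trans (measure_biUnion_le _ (to_countable u) _)
    _ = 5 ^ d * ∑' a : u, l * volume (B a.1) := by
        rw [← ENNReal.tsum_mul_left, ← ENNReal.tsum_mul_left]
        congr 1; funext a
        rw [dyadic_vol c hR _ _ (by norm_num), dyadic_vol c hR _ _ (by norm_num),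
          show (20 : ℝ) = 5 * 4 by norm_num, ENNReal.ofReal_mul (by norm_num), mul_pow]
        simp only [ENNReal.ofReal_ofNat]
        ring
    _ ≤ 5 ^ d * ∑' a : u, ∫⁻ x in B a.1, h x := by
        gcongr with a
        have : l < cav c R h a.1.1 a.1.2 := huT a.2
        rw [← cav_mul c hR, mul_comm]
        gcongr
    _ = 5 ^ d * ∫⁻ x in ⋃ a ∈ u, B a, h x := by
        rw [lintegral_biUnion (to_countable u) (fun a _ => dyadic_meas ..) hdis]
    _ ≤ 5 ^ d * ∫⁻ x, h x := by gcongr; exact Measure.restrict_le_self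

lemma layer {α : Type*} [MeasurableSpace α] (μ : Measure α) {φ : α → ℝ≥0∞} (hφ : Measurable φ)
    (hf : ∀ x, φ x ≠ ∞) {p : ℝ} (hp : 0 < p) :
    ∫⁻ x, φ x ^ p ∂μ = ENNReal.ofReal p *
      ∫⁻ t in Ioi (0 : ℝ), μ {x | ENNReal.ofReal t < φ x} * ENNReal.ofReal (t ^ (p - 1)) := by
  have := lintegral_rpow_eq_lintegral_meas_lt_mul μ (f := fun x => (φ x).toReal)
    (Eventually.of_forall fun x => ENNReal.toReal_nonneg) hφ.ennreal_toReal.aemeasurable hp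
  have e1 : ∀ x, ENNReal.ofReal ((φ x).toReal ^ p) = φ x ^ p := fun x => by
    rw [← ENNReal.ofReal_rpow_of_nonneg ENNReal.toReal_nonneg hp.le, ENNReal.ofReal_toReal (hf x)]
  simp only [e1] at this
  rw [this]
  congr 1
  refine setLIntegral_congr_fun measurableSet_Ioi fun t ht => ?_
  congr 3
  ext x
  exact (ENNReal.ofReal_lt_iff_lt_toReal (le_of_lt ht) (hf x)).symm

lemma strong_type {d : ℕ} {p : ℝ} (hp : 1 < p) (c : Ed d) {R : ℝ} (hR : 0 < R) (K : ℕ)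
    {h : Ed d → ℝ≥0∞} (hm : Measurable h) (hf : ∀ x, h x ≠ ∞) (hi : ∫⁻ x, h x ≠ ∞) :
    ∫⁻ x in cube c R, mx c R K h x ^ p ≤
      (ENNReal.ofReal p * (ENNReal.ofReal (p - 1))⁻¹ * (2 * 5 ^ d) * 2 ^ (p - 1)) *
        ∫⁻ x, h x ^ p := by
  rw [layer _ (mx_meas c R K h) (mx_lt_top c hR K hi) (by linarith)]
  have key : ∀ t ∈ Ioi (0 : ℝ), (volume.restrict (cube c R)) {x | ENNReal.ofReal t < mx c R K h x} *
      ENNReal.ofReal (t ^ (p - 1)) ≤ (2 * 5 ^ d) *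
      ((volume.withDensity h) {x | ENNReal.ofReal t < 2 * h x} *
        ENNReal.ofReal (t ^ (p - 1 - 1))) := by
    intro t ht
    have ht : 0 < t := ht
    have hset : MeasurableSet {x | ENNReal.ofReal t < 2 * h x} :=
      measurableSet_lt measurable_const (by fun_prop)
    let h1 : Ed d → ℝ≥0∞ := indicator {x | ENNReal.ofReal t < 2 * h x} h
    have hsub : {x | ENNReal.ofReal t < mx c R K h x} ∩ cube c R ⊆
        {x | x ∈ cube c R ∧ ENNReal.ofReal (t / 2) < mx c R K h1 x} := by
      rintro x ⟨hx1, hx2⟩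
      refine ⟨hx2, ?_⟩
      obtain ⟨k, hk, hlt⟩ := lt_mx.1 hx1
      refine lt_mx.2 ⟨k, hk, ?_⟩
      have h2 : cav c R h k (idx c R k x) ≤ cav c R h1 k (idx c R k x) + ENNReal.ofReal (t / 2) := by
        rw [← cav_const hR (ENNReal.ofReal (t / 2)) k (idx c R k x),
          ← cav_add (hm.indicator hset)]
        refine cav_le fun y _ => ?_
        by_cases hy : ENNReal.ofReal t < 2 * h y
        · have : h1 y = h y := indicator_of_mem (s := {x | ENNReal.ofReal t < 2 * h x}) hy h
          exact this.ge.trans le_self_add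
        · have : h y ≤ ENNReal.ofReal (t / 2) := by
            rw [ENNReal.ofReal_div_of_pos (by norm_num)]
            rw [ENNReal.le_div_iff_mul_le (by simp) (by simp)]
            simpa [mul_comm] using hy
          exact this.trans le_add_self
      have h3 := hlt.trans_le h2
      rw [show ENNReal.ofReal t = ENNReal.ofReal (t / 2) + ENNReal.ofReal (t / 2) by
        rw [← ENNReal.ofReal_add (by positivity) (by positivity)]; ring_nf] at h3
      exact lt_of_add_lt_add_right h3
    have hw := weak_type c hR K h1 (ENNReal.ofReal (t / 2))
    rw [show ∫⁻ x, h1 x = (volume.withDensity h) {x | ENNReal.ofReal t < 2 * h x} by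
      rw [withDensity_apply _ hset, lintegral_indicator hset]] at hw
    have e1 : ENNReal.ofReal (t ^ (p - 1)) =
        2 * ENNReal.ofReal (t / 2) * ENNReal.ofReal (t ^ (p - 1 - 1)) := by
      rw [← ENNReal.ofReal_ofNat 2, ← ENNReal.ofReal_mul (by norm_num),
        ← ENNReal.ofReal_mul (by positivity)]
      congr 1
      rw [Real.rpow_sub_one ht.ne' (p - 1)]; field_simp
    rw [Measure.restrict_apply (measurableSet_lt measurable_const (mx_meas c R K h)), e1]
    calc _ = 2 * (ENNReal.ofReal (t / 2) * volume ({x | ENNReal.ofReal t < mx c R K h x} ∩ cube c R))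
          * ENNReal.ofReal (t ^ (p - 1 - 1)) := by ring
      _ ≤ 2 * (5 ^ d * (volume.withDensity h) {x | ENNReal.ofReal t < 2 * h x})
          * ENNReal.ofReal (t ^ (p - 1 - 1)) := by
          refine mul_le_mul_left (mul_le_mul_right (le_trans ?_ hw) _) _
          exact mul_le_mul_right (measure_mono hsub) _
      _ = _ := by ring
  have hl := layer (volume.withDensity h) (φ := fun x => 2 * h x) (by fun_prop)
    (fun x => ENNReal.mul_ne_top (by simp) (hf x)) (p := p - 1) (by linarith)
  have hq0 : ENNReal.ofReal (p - 1) ≠ 0 := by simpa using hp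
  have e2 : ∫⁻ x, (2 * h x) ^ (p - 1) ∂(volume.withDensity h) = 2 ^ (p - 1) * ∫⁻ x, h x ^ p := by
    rw [lintegral_withDensity_eq_lintegral_mul _ hm (by fun_prop), ← lintegral_const_mul _ (by fun_prop)]
    congr 1; funext x
    simp only [Pi.mul_apply]
    rw [ENNReal.mul_rpow_of_nonneg _ _ (by linarith)]
    rcases eq_or_ne (h x) 0 with h0 | h0
    · rw [h0, ENNReal.zero_rpow_of_pos (by linarith : 0 < p)]; simp
    · rw [ENNReal.rpow_sub _ _ h0 (hf x), ENNReal.rpow_one, div_eq_mul_inv]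
      rw [show h x * (2 ^ (p - 1) * (h x ^ p * (h x)⁻¹)) = 2 ^ (p-1) * h x ^ p * (h x * (h x)⁻¹) by ring,
        ENNReal.mul_inv_cancel h0 (hf x), mul_one]
  calc _ ≤ ENNReal.ofReal p * ∫⁻ t in Ioi (0 : ℝ), (2 * 5 ^ d) *
      ((volume.withDensity h) {x | ENNReal.ofReal t < 2 * h x} *
        ENNReal.ofReal (t ^ (p - 1 - 1))) := by
        exact mul_le_mul_right (setLIntegral_mono' measurableSet_Ioi key) _
    _ = ENNReal.ofReal p * ((2 * 5 ^ d) * ((ENNReal.ofReal (p - 1))⁻¹ * (2 ^ (p - 1) * ∫⁻ x, h x ^ p))) := by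
        rw [lintegral_const_mul' _ _ (ENNReal.mul_ne_top (by simp) (by simp)), ← e2, hl, ← mul_assoc (ENNReal.ofReal (p-1))⁻¹,
          ENNReal.inv_mul_cancel hq0 (by simp), one_mul]
    _ = _ := by ring

lemma cav_jensen {d : ℕ} {c : Ed d} {R : ℝ} (hR : 0 < R) {q : ℝ} (hq : 1 ≤ q)
    {h : Ed d → ℝ≥0∞} (hm : Measurable h) (k : ℕ) (m : Fin d → ℕ) :
    cav c R h k m ^ q ≤ cav c R (fun x => h x ^ q) k m := by
  have h0 := dyadic_vol_ne_zero c hR k m (s := 4) (by norm_num)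
  have h1 := dyadic_vol_ne_top c hR k m (s := 4) (by norm_num)
  let μ : Measure (Ed d) := (volume (dyadicCube c R k m 4))⁻¹ • volume.restrict (dyadicCube c R k m 4)
  have : IsProbabilityMeasure μ := ⟨by
    simp only [μ, Measure.smul_apply, Measure.restrict_apply_univ, smul_eq_mul]
    exact ENNReal.inv_mul_cancel h0 h1⟩
  have hq0 : 0 < q := by linarith
  have key := eLpNorm'_le_eLpNorm'_of_exponent_le (p := 1) (q := q) one_pos hq μ
    (f := h) hm.aestronglyMeasurable
  simp only [eLpNorm', enorm_eq_self, ENNReal.rpow_one, div_one, one_div] at key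
  have e : ∀ g : Ed d → ℝ≥0∞, cav c R g k m = ∫⁻ x, g x ∂μ := fun g => by
    simp only [μ, lintegral_smul_measure, cav, smul_eq_mul]
  rw [e, e]
  calc _ ≤ ((∫⁻ x, h x ^ q ∂μ) ^ q⁻¹) ^ q := by gcongr
    _ = _ := by rw [← ENNReal.rpow_mul, inv_mul_cancel₀ hq0.ne', ENNReal.rpow_one]

/-- comparison hypothesis -/
def Comp {d : ℕ} (c : Ed d) (R : ℝ) (u F G : Ed d → ℝ≥0∞) (ε K1 : ℝ≥0∞) (q : ℝ) : Prop :=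
  ∀ (k : ℕ) (m : Fin d → ℕ), (∀ i, m i < 2 ^ k) → ∃ D V : Ed d → ℝ≥0∞,
    Measurable D ∧ Measurable V ∧ (∀ x ∈ dyadicCube c R k m 2, u x ≤ D x + V x) ∧
    (∫⁻ x in dyadicCube c R k m 2, D x ≤
      volume (dyadicCube c R k m 4) * (ε * cav c R u k m + K1 * cav c R F k m)) ∧
    (∫⁻ x in dyadicCube c R k m 2, V x ^ q ≤
      volume (dyadicCube c R k m 2) * (K1 * (cav c R u k m + cav c R G k m)) ^ q)

lemma half_succ_vol {d : ℕ} (c : Ed d) {R : ℝ} (hR : 0 < R) (k : ℕ) (m m' : Fin d → ℕ) {s : ℝ}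
    (hs : 0 < s) : volume (dyadicCube c R k m s) =
      ENNReal.ofReal s ^ d * 2 ^ d * volume (dyadicCube c R (k + 1) m' 1) := by
  rw [dyadic_vol c hR k m hs, dyadic_vol c hR (k+1) m' one_pos, mul_assoc]
  congr 1
  rw [ENNReal.ofReal_one, one_pow, one_mul, ← mul_pow, ← ENNReal.ofReal_ofNat 2,
    ← ENNReal.ofReal_mul (by norm_num)]
  congr 2
  rw [pow_succ]; field_simp

lemma cav_succ_le {d : ℕ} {c : Ed d} {R : ℝ} (hR : 0 < R) (u : Ed d → ℝ≥0∞) (k : ℕ) (x : Ed d) :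
    cav c R u (k + 1) (idx c R (k + 1) x) ≤ 2 ^ d * cav c R u k (idx c R k x) := by
  have h0 := dyadic_vol_ne_zero c hR (k+1) (idx c R (k + 1) x) (s := 4) (by norm_num)
  have h1 := dyadic_vol_ne_top c hR (k+1) (idx c R (k + 1) x) (s := 4) (by norm_num)
  rw [← ENNReal.mul_le_mul_iff_right h0 h1, cav_mul c hR]
  have : volume (dyadicCube c R (k+1) (idx c R (k + 1) x) 4) * (2 ^ d * cav c R u k (idx c R k x)) =
      ∫⁻ y in dyadicCube c R k (idx c R k x) 4, u y := by
    rw [← cav_mul c hR, half_succ_vol c hR k _ (idx c R (k+1) x) (by norm_num : (0:ℝ) < 4),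
      dyadic_vol c hR (k+1) _ (by norm_num : (0:ℝ) < 4), dyadic_vol c hR (k+1) _ one_pos]
    simp
    ring
  rw [this]
  exact lintegral_mono_set (dyadic_four_sub hR (Nat.le_succ k) x)

lemma local_est {d : ℕ} {c : Ed d} {R : ℝ} (hR : 0 < R) {u F G : Ed d → ℝ≥0∞} {ε K1 : ℝ≥0∞} {q : ℝ}
    (hq : 1 ≤ q) (hC : Comp c R u F G ε K1 q) {N δ η₁ η₂ l : ℝ≥0∞}
    (hN : 2 ^ d ≤ N) (hNt : N ≠ ∞) (hl : l ≠ 0) (hlt : l ≠ ∞)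
    (hη₁ : 2 * 5 ^ d * 8 ^ d * (ε + K1 * δ) ≤ η₁ * N)
    (hη₂ : 5 ^ d * 4 ^ d * (4 * K1) ^ q ≤ η₂ * N ^ q)
    (K k : ℕ) {x0 : Ed d} (hx0 : x0 ∈ cube c R) (hu : ∀ j ≤ k, cav c R u j (idx c R j x0) ≤ l)
    (hF : cav c R F k (idx c R k x0) ≤ δ * l) (hG : cav c R G k (idx c R k x0) ≤ l) :
    volume {x | x ∈ cube c R ∧ idx c R (k + 1) x = idx c R (k + 1) x0 ∧ N * l < mx c R K u x} ≤
      (η₁ + η₂) * volume (dyadicCube c R (k + 1) (idx c R (k + 1) x0) 1) := by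
  obtain ⟨D, V, hD, hV, hDV, hDi, hVi⟩ := hC k (idx c R k x0) (idx_lt hR k hx0)
  have hq0 : 0 < q := by linarith
  set S := dyadicCube c R k (idx c R k x0) 2 with hS
  set v := volume (dyadicCube c R (k + 1) (idx c R (k + 1) x0) 1) with hv
  have hSm : MeasurableSet S := dyadic_meas ..
  have hN0 : N ≠ 0 := by
    rintro rfl
    simp at hN
  have hN1 : 1 ≤ N := le_trans (one_le_pow₀ (by norm_num)) hN
  set a := N * (l / 2) with ha
  have haa : a + a = N * l := by rw [ha, ← mul_add, ENNReal.add_halves]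
  have ha0 : a ≠ 0 := mul_ne_zero hN0 (ENNReal.div_ne_zero.2 ⟨hl, by simp⟩)
  have hat : a ≠ ∞ := ENNReal.mul_ne_top hNt (ENNReal.div_ne_top hlt (by simp))
  let D1 := S.indicator D
  let V1 := S.indicator V
  have hD1 : Measurable D1 := hD.indicator hSm
  have hV1 : Measurable V1 := hV.indicator hSm
  have hsub : {x | x ∈ cube c R ∧ idx c R (k + 1) x = idx c R (k + 1) x0 ∧ N * l < mx c R K u x} ⊆
      {x | x ∈ cube c R ∧ a < mx c R K D1 x} ∪
      {x | x ∈ cube c R ∧ a ^ q < mx c R K (fun x => V1 x ^ q) x} := by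
    rintro x ⟨hx, hix, hlx⟩
    obtain ⟨j, hj, hlj⟩ := lt_mx.1 hlx
    have hjk : k + 2 ≤ j := by
      by_contra hcon
      have hj1 : j ≤ k ∨ j = k + 1 := by omega
      refine absurd hlj (not_lt.2 ?_)
      rcases hj1 with hj1 | rfl
      · rw [idx_eq_of_le (by omega) hix]
        exact (hu j hj1).trans (le_mul_of_one_le_left' hN1)
      · rw [hix]
        exact (cav_succ_le hR u k x0).trans (mul_le_mul' hN (hu k le_rfl))
    have hsubS : dyadicCube c R j (idx c R j x) 4 ⊆ S := by
      have := dyadic_two_sub hR hjk (c := c) x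
      rwa [idx_eq_of_le (Nat.le_succ k) hix] at this
    have h1 : cav c R u j (idx c R j x) ≤ cav c R D1 j (idx c R j x) + cav c R V1 j (idx c R j x) := by
      rw [← cav_add hD1]
      refine cav_le fun y hy => ?_
      have hyS := hsubS hy
      simp only [D1, V1, indicator_of_mem hyS]
      exact hDV y hyS
    have h2 := hlj.trans_le h1
    rw [← haa] at h2
    rcases lt_or_ge a (cav c R D1 j (idx c R j x)) with h3 | h3
    · exact Or.inl ⟨hx, lt_mx.2 ⟨j, hj, h3⟩⟩
    · right
      refine ⟨hx, lt_mx.2 ⟨j, hj, ?_⟩⟩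
      have h4 : a < cav c R V1 j (idx c R j x) := by
        by_contra h5
        exact absurd h2 (not_lt.2 (add_le_add h3 (not_lt.1 h5)))
      exact (ENNReal.rpow_lt_rpow h4 hq0).trans_le (cav_jensen hR hq hV1 _ _)
  have w1 : volume {x | x ∈ cube c R ∧ a < mx c R K D1 x} ≤ η₁ * v := by
    rw [← ENNReal.mul_le_mul_iff_right ha0 hat]
    calc _ ≤ 5 ^ d * ∫⁻ x, D1 x := weak_type c hR K D1 a
      _ = 5 ^ d * ∫⁻ x in S, D x := by rw [lintegral_indicator hSm]
      _ ≤ 5 ^ d * (volume (dyadicCube c R k (idx c R k x0) 4) *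
          (ε * l + K1 * (δ * l))) := by
          refine mul_le_mul_right (hDi.trans ?_) _
          gcongr
          exact hu k le_rfl
      _ = (2 * 5 ^ d * 8 ^ d * (ε + K1 * δ)) * v * (l / 2) := by
          rw [half_succ_vol c hR k _ (idx c R (k+1) x0) (by norm_num : (0:ℝ) < 4), ← hv,
            ENNReal.ofReal_ofNat, ← mul_pow, show (4 * 2 : ℝ≥0∞) = 8 by norm_num]
          nth_rw 1 2 [← ENNReal.add_halves l]
          ring
      _ ≤ η₁ * N * v * (l / 2) := by gcongr
      _ = a * (η₁ * v) := by rw [ha]; ring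
  have w2 : volume {x | x ∈ cube c R ∧ a ^ q < mx c R K (fun x => V1 x ^ q) x} ≤ η₂ * v := by
    have haq0 : a ^ q ≠ 0 := by simp [ENNReal.rpow_eq_zero_iff, ha0, hat]
    have haqt : a ^ q ≠ ∞ := ENNReal.rpow_ne_top_of_nonneg hq0.le hat
    rw [← ENNReal.mul_le_mul_iff_right haq0 haqt]
    calc _ ≤ 5 ^ d * ∫⁻ x, V1 x ^ q := weak_type c hR K _ _
      _ = 5 ^ d * ∫⁻ x in S, V x ^ q := by
          rw [← lintegral_indicator hSm]
          congr 2; funext x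
          by_cases hx : x ∈ S <;> simp [V1, hx, hq0]
      _ ≤ 5 ^ d * (volume S * (K1 * (l + l)) ^ q) := by
          refine mul_le_mul_right (hVi.trans ?_) _
          gcongr
          exact hu k le_rfl
      _ = (5 ^ d * 4 ^ d * (4 * K1) ^ q) * v * (l / 2) ^ q := by
          rw [hS, half_succ_vol c hR k _ (idx c R (k+1) x0) (by norm_num : (0:ℝ) < 2), ← hv,
            ENNReal.ofReal_ofNat, ← mul_pow, show (2 * 2 : ℝ≥0∞) = 4 by norm_num]
          have : K1 * (l + l) = 4 * K1 * (l / 2) := by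
            nth_rw 1 2 [← ENNReal.add_halves l]
            ring
          rw [this, ENNReal.mul_rpow_of_nonneg _ _ hq0.le]
          ring
      _ ≤ η₂ * N ^ q * v * (l / 2) ^ q := by gcongr
      _ = a ^ q * (η₂ * v) := by rw [ha, ENNReal.mul_rpow_of_nonneg _ _ hq0.le]; ring
  calc _ ≤ _ := measure_mono hsub
    _ ≤ _ := measure_union_le _ _
    _ ≤ η₁ * v + η₂ * v := add_le_add w1 w2
    _ = _ := by rw [add_mul]

/-- the control function of the good-lambda inequality -/
def ctl {d : ℕ} (c : Ed d) (R : ℝ) (K : ℕ) (u F G : Ed d → ℝ≥0∞) (δ : ℝ≥0∞) (x : Ed d) : ℝ≥0∞ :=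
  δ⁻¹ * mx c R K F x + mx c R K G x + cav c R u 0 (fun _ => 0)

lemma ctl_meas {d : ℕ} (c : Ed d) (R : ℝ) (K : ℕ) (u F G : Ed d → ℝ≥0∞) (δ : ℝ≥0∞) :
    Measurable (ctl c R K u F G δ) :=
  ((measurable_const.mul (mx_meas ..)).add (mx_meas ..)).add measurable_const

lemma good_lambda {d : ℕ} {c : Ed d} {R : ℝ} (hR : 0 < R) {u F G : Ed d → ℝ≥0∞} {ε K1 : ℝ≥0∞}
    {q : ℝ} (hq : 1 ≤ q) (hC : Comp c R u F G ε K1 q) {N δ η₁ η₂ l : ℝ≥0∞}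
    (hN : 2 ^ d ≤ N) (hNt : N ≠ ∞) (hl : l ≠ 0) (hlt : l ≠ ∞) (hδ : δ ≠ 0) (hδt : δ ≠ ∞)
    (hη₁ : 2 * 5 ^ d * 8 ^ d * (ε + K1 * δ) ≤ η₁ * N)
    (hη₂ : 5 ^ d * 4 ^ d * (4 * K1) ^ q ≤ η₂ * N ^ q) (K : ℕ) :
    volume.restrict (cube c R) {x | N * l < mx c R K u x} ≤
      (η₁ + η₂) * volume.restrict (cube c R) {x | l < mx c R K u x} +
      volume.restrict (cube c R) {x | l < ctl c R K u F G δ x} := by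
  have hN1 : 1 ≤ N := le_trans (one_le_pow₀ (by norm_num)) hN
  let A : ℕ × (Fin d → ℕ) → Set (Ed d) := fun b => {x | x ∈ cube c R ∧ N * l < mx c R K u x ∧
    ctl c R K u F G δ x ≤ l ∧ b.1 + 1 ≤ K ∧ idx c R (b.1 + 1) x = b.2 ∧ l < cav c R u (b.1 + 1) b.2 ∧
    ∀ j ≤ b.1, cav c R u j (idx c R j x) ≤ l}
  let B : ℕ × (Fin d → ℕ) → Set (Ed d) := fun b => {x | x ∈ cube c R ∧
    b.1 + 1 ≤ K ∧ idx c R (b.1 + 1) x = b.2 ∧ l < cav c R u (b.1 + 1) b.2 ∧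
    ∀ j ≤ b.1, cav c R u j (idx c R j x) ≤ l}
  have hBm : ∀ b, MeasurableSet (B b) := by
    intro b
    have hm : ∀ j, Measurable fun x => cav c R u j (idx c R j x) := fun j =>
      (Measurable.of_discrete (f := cav c R u j)).comp (idx_meas c R j)
    refine (rect_meas c R).inter ((MeasurableSet.const _).inter (MeasurableSet.inter ?_
      ((MeasurableSet.const _).inter ?_)))
    · exact idx_meas c R _ (measurableSet_singleton b.2)
    · have : {x | ∀ j ≤ b.1, cav c R u j (idx c R j x) ≤ l} =
        ⋂ j, ⋂ (_ : j ≤ b.1), {x | cav c R u j (idx c R j x) ≤ l} := by ext; simp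
      change MeasurableSet {x | ∀ j ≤ b.1, cav c R u j (idx c R j x) ≤ l}
      rw [this]
      exact MeasurableSet.iInter fun j => MeasurableSet.iInter fun _ =>
        measurableSet_le (hm j) measurable_const
  have hdis : Pairwise (Function.onFun Disjoint B) := by
    rintro ⟨k, m⟩ ⟨k', m'⟩ hne
    rw [Function.onFun, Set.disjoint_left]
    rintro x ⟨_, _, h1, h2, h3⟩ ⟨_, _, h1', h2', h3'⟩
    simp only at h1 h2 h3 h1' h2' h3'
    subst h1 h1'
    rcases lt_trichotomy k k' with h | h | h
    · exact absurd h2 (not_lt.2 (h3' (k + 1) (by omega)))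
    · subst h; exact hne rfl
    · exact absurd h2' (not_lt.2 (h3 (k' + 1) (by omega)))
  have hAB : ∀ b, volume (A b) ≤ (η₁ + η₂) * volume (B b) := by
    rintro ⟨k, m⟩
    rcases (A (k, m)).eq_empty_or_nonempty with h | ⟨x0, hx0, h1, h2, h3, h4, h5, h6⟩
    · rw [h]; simp
    simp only at h1 h2 h3 h4 h5 h6
    have hkK : k ≤ K := by omega
    have hF : cav c R F k (idx c R k x0) ≤ δ * l := by
      have : δ⁻¹ * cav c R F k (idx c R k x0) ≤ l :=
        le_trans (by
          unfold ctl
          refine le_trans (mul_le_mul_right (le_mx c R hkK F x0) _) ?_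
          rw [add_assoc]; exact le_self_add) h2
      calc _ = δ * (δ⁻¹ * cav c R F k (idx c R k x0)) := by
            rw [← mul_assoc, ENNReal.mul_inv_cancel hδ hδt, one_mul]
        _ ≤ _ := by gcongr
    have hG : cav c R G k (idx c R k x0) ≤ l := by
      refine (le_mx c R hkK G x0).trans (le_trans ?_ h2)
      unfold ctl
      exact le_add_self.trans le_self_add
    have := local_est hR hq hC hN hNt hl hlt hη₁ hη₂ K k hx0 h6 hF hG
    refine le_trans (measure_mono ?_) (this.trans ?_)
    · rintro x ⟨g0, g1, g2, g3, g4, g5, g6⟩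
      exact ⟨g0, by rw [h4]; exact g4, g1⟩
    · refine mul_le_mul_right (measure_mono ?_) _
      intro x hx
      obtain ⟨hxQ, hxi⟩ := dyadic_one_sub hR (k+1) (idx_lt hR (k+1) hx0) hx
      refine ⟨hxQ, h3, by rw [← h4]; exact hxi, h5, fun j hj => ?_⟩
      have : idx c R j x = idx c R j x0 := idx_eq_of_le (by simp only at hj; omega) hxi
      rw [this]
      exact h6 j hj
  have hQm := rect_meas c R
  rw [Measure.restrict_apply' hQm, Measure.restrict_apply' hQm, Measure.restrict_apply' hQm]
  have hcov : {x | N * l < mx c R K u x} ∩ cube c R ⊆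
      (⋃ b, A b) ∪ ({x | l < ctl c R K u F G δ x} ∩ cube c R) := by
    rintro x ⟨hx1, hx2⟩
    by_cases hH : l < ctl c R K u F G δ x
    · exact Or.inr ⟨hH, hx2⟩
    left
    have hH := not_lt.1 hH
    have hex : ∃ k, k ≤ K ∧ l < cav c R u k (idx c R k x) :=
      lt_mx.1 (lt_of_le_of_lt (le_mul_of_one_le_left' hN1) hx1)
    classical
    obtain ⟨hk1, hk2⟩ := Nat.find_spec hex
    have hmin := fun j (hj : j < Nat.find hex) => Nat.find_min hex hj
    rcases hk : Nat.find hex with _ | k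
    · rw [hk, idx_zero hR hx2] at hk2
      refine absurd hk2 (not_lt.2 (le_trans ?_ hH))
      unfold ctl
      exact le_add_self
    · rw [hk] at hk1 hk2 hmin
      refine mem_iUnion.2 ⟨(k, idx c R (k+1) x), hx2, hx1, hH, hk1, rfl, hk2, fun j hj => ?_⟩
      have := hmin j (Nat.lt_succ_of_le hj)
      by_contra hcon
      exact this ⟨by simp only at hj; omega, not_le.1 hcon⟩
  calc _ ≤ _ := measure_mono hcov
    _ ≤ volume (⋃ b, A b) + _ := measure_union_le _ _
    _ ≤ ∑' b, volume (A b) + _ := by gcongr; exact measure_iUnion_le _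
    _ ≤ ∑' b, (η₁ + η₂) * volume (B b) + _ := by gcongr with b; exact hAB b
    _ = (η₁ + η₂) * volume (⋃ b, B b) + _ := by
        rw [ENNReal.tsum_mul_left, measure_iUnion hdis hBm]
    _ ≤ _ := by
        gcongr
        refine iUnion_subset ?_
        rintro b x ⟨g0, g1, g2, g3, g4⟩
        refine ⟨lt_mx.2 ⟨b.1 + 1, g1, ?_⟩, g0⟩
        rw [g2]; exact g3

lemma absorb {α : Type*} [MeasurableSpace α] (μ : Measure α) {φ H : α → ℝ≥0∞} (hφ : Measurable φ)
    (hf : ∀ x, φ x ≠ ∞) (hH : Measurable H) (hHf : ∀ x, H x ≠ ∞) {p : ℝ} (hp : 0 < p) {N η : ℝ≥0∞}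
    (hN : N ≠ 0) (hNt : N ≠ ∞) (hη : η * N ^ p ≤ 1 / 2) (hfin : ∫⁻ x, φ x ^ p ∂μ ≠ ∞)
    (hgl : ∀ l : ℝ≥0∞, l ≠ 0 → l ≠ ∞ → μ {x | N * l < φ x} ≤ η * μ {x | l < φ x} + μ {x | l < H x}) :
    ∫⁻ x, φ x ^ p ∂μ ≤ 2 * N ^ p * ∫⁻ x, H x ^ p ∂μ := by
  have hNp0 : N ^ p ≠ 0 := by simp [ENNReal.rpow_eq_zero_iff, hN, hNt]
  have hNpt : N ^ p ≠ ∞ := ENNReal.rpow_ne_top_of_nonneg hp.le hNt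
  have hηt : η ≠ ∞ := by
    rintro rfl
    rw [ENNReal.top_mul hNp0] at hη
    simp at hη
  have h1 : ∫⁻ x, (N⁻¹ * φ x) ^ p ∂μ ≤ η * ∫⁻ x, φ x ^ p ∂μ + ∫⁻ x, H x ^ p ∂μ := by
    rw [layer μ (φ := fun x => N⁻¹ * φ x) (by fun_prop)
      (fun x => ENNReal.mul_ne_top (ENNReal.inv_ne_top.2 hN) (hf x)) hp, layer μ hφ hf hp,
      layer μ hH hHf hp, ← mul_assoc, mul_comm η, mul_assoc, ← mul_add,
      ← lintegral_const_mul' _ _ hηt]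
    refine mul_le_mul_right ?_ _
    have hmeas : Measurable fun t : ℝ => η * (μ {x | ENNReal.ofReal t < φ x} * ENNReal.ofReal (t ^ (p - 1))) := by
      have : Antitone fun t : ℝ => μ {x | ENNReal.ofReal t < φ x} := fun a b hab =>
        measure_mono fun x hx => lt_of_le_of_lt (ENNReal.ofReal_le_ofReal hab) hx
      exact measurable_const.mul (this.measurable.mul (by fun_prop))
    rw [← lintegral_add_left hmeas]
    refine setLIntegral_mono' measurableSet_Ioi fun t ht => ?_
    have ht : 0 < t := ht
    have := hgl (ENNReal.ofReal t) (by simpa using ht) (by simp)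
    calc _ ≤ (η * μ {x | ENNReal.ofReal t < φ x} + μ {x | ENNReal.ofReal t < H x}) *
          ENNReal.ofReal (t ^ (p - 1)) := by
          refine mul_le_mul_left (le_trans (measure_mono fun x hx => ?_) this) _
          have hx : ENNReal.ofReal t < N⁻¹ * φ x := hx
          change N * ENNReal.ofReal t < φ x
          rw [mul_comm, ← div_eq_mul_inv] at hx
          rw [mul_comm]
          exact (ENNReal.lt_div_iff_mul_lt (Or.inl hN) (Or.inl hNt)).1 hx
      _ = _ := by ring
  have h2 : ∫⁻ x, φ x ^ p ∂μ = N ^ p * ∫⁻ x, (N⁻¹ * φ x) ^ p ∂μ := by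
    rw [← lintegral_const_mul' _ _ hNpt]
    congr 1; funext x
    rw [← ENNReal.mul_rpow_of_nonneg _ _ hp.le, ← mul_assoc, ENNReal.mul_inv_cancel hN hNt, one_mul]
  set I := ∫⁻ x, φ x ^ p ∂μ
  have h3 : I ≤ I / 2 + N ^ p * ∫⁻ x, H x ^ p ∂μ := by
    calc I ≤ N ^ p * (η * I + ∫⁻ x, H x ^ p ∂μ) := h2.le.trans (mul_le_mul_right h1 _)
      _ = (η * N ^ p) * I + N ^ p * ∫⁻ x, H x ^ p ∂μ := by ring
      _ ≤ (1 / 2) * I + N ^ p * ∫⁻ x, H x ^ p ∂μ := by gcongr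
      _ = _ := by rw [one_div, mul_comm, div_eq_mul_inv]
  have h4 : I / 2 ≤ N ^ p * ∫⁻ x, H x ^ p ∂μ := by
    nth_rw 1 [← ENNReal.add_halves I] at h3
    exact (ENNReal.add_le_add_iff_left (ENNReal.div_ne_top hfin (by simp))).1 h3
  calc I = 2 * (I / 2) := by rw [ENNReal.mul_div_cancel (by simp) (by simp)]
    _ ≤ 2 * (N ^ p * ∫⁻ x, H x ^ p ∂μ) := by gcongr
    _ = _ := by ring

lemma three_rpow (a b e : ℝ≥0∞) {p : ℝ} (hp : 0 ≤ p) :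
    (a + b + e) ^ p ≤ 3 ^ p * (a ^ p + b ^ p + e ^ p) := by
  have h1 : a + b + e ≤ 3 * max a (max b e) := by
    calc a + b + e ≤ max a (max b e) + max a (max b e) + max a (max b e) := by
          gcongr <;> simp
      _ = _ := by ring
  calc (a + b + e) ^ p ≤ (3 * max a (max b e)) ^ p := by gcongr
    _ = 3 ^ p * (max a (max b e)) ^ p := ENNReal.mul_rpow_of_nonneg _ _ hp
    _ ≤ _ := by
      gcongr
      rcases max_choice a (max b e) with h | h
      · rw [h, add_assoc]; exact le_self_add
      · rw [h]
        rcases max_choice b e with h | h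
        · rw [h]; exact le_add_self.trans le_self_add
        · rw [h]; exact le_add_self

lemma core {d : ℕ} {p q : ℝ} (hp : 1 < p) (hpq : p < q) {K1 : ℝ≥0∞} (hK : K1 ≠ ∞) :
    ∃ ε₀ : ℝ, 0 < ε₀ ∧ ∃ c1 : ℝ≥0∞, c1 ≠ ∞ ∧ ∀ (c : Ed d) (R : ℝ), 0 < R →
      ∀ u F G : Ed d → ℝ≥0∞, Measurable F → Measurable G →
      (∀ x, F x ≠ ∞) → (∀ x, G x ≠ ∞) → ∫⁻ x, u x ≠ ∞ → ∫⁻ x, F x ≠ ∞ → ∫⁻ x, G x ≠ ∞ →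
      Comp c R u F G (ENNReal.ofReal ε₀) K1 q → ∀ K,
      ∫⁻ x in cube c R, mx c R K u x ^ p ≤
        c1 * ((∫⁻ x, F x ^ p) + (∫⁻ x, G x ^ p) +
          cav c R u 0 (fun _ => 0) ^ p * volume (cube c R)) := by
  have hq : 1 ≤ q := by linarith
  have hp0 : 0 < p := by linarith
  set A : ℝ≥0∞ := 5 ^ d * 4 ^ d * (4 * K1) ^ q with hA
  have hAt : A ≠ ∞ := by
    refine ENNReal.mul_ne_top (ENNReal.mul_ne_top (by simp) (by simp)) ?_
    exact ENNReal.rpow_ne_top_of_nonneg (by linarith) (ENNReal.mul_ne_top (by simp) hK)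
  obtain ⟨n, hn1, hn2⟩ := (((tendsto_rpow_atTop (show 0 < q - p by linarith)).eventually_ge_atTop
    (4 * A.toReal)).and (eventually_ge_atTop ((2 : ℝ) ^ d))).exists
  have hn0 : 0 < n := lt_of_lt_of_le (by positivity) hn2
  set N : ℝ≥0∞ := ENNReal.ofReal n with hNdef
  have hN0 : N ≠ 0 := by simpa [hNdef] using hn0
  have hNt : N ≠ ∞ := by simp [hNdef]
  have hN2 : 2 ^ d ≤ N := by
    rw [hNdef, ← ENNReal.ofReal_ofNat 2, ← ENNReal.ofReal_pow (by norm_num)]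
    exact ENNReal.ofReal_le_ofReal hn2
  have hNp0 : N ^ p ≠ 0 := by simp [ENNReal.rpow_eq_zero_iff, hN0, hNt]
  have hNpt : N ^ p ≠ ∞ := ENNReal.rpow_ne_top_of_nonneg hp0.le hNt
  set η : ℝ≥0∞ := (N ^ p)⁻¹ * 4⁻¹ with hη
  have hη0 : η ≠ 0 := mul_ne_zero (ENNReal.inv_ne_zero.2 hNpt) (by simp)
  have hηt : η ≠ ∞ := ENNReal.mul_ne_top (ENNReal.inv_ne_top.2 hNp0) (by simp)
  have hη2 : A ≤ η * N ^ q := by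
    have e1 : η * N ^ q = 4⁻¹ * N ^ (q - p) := by
      rw [ENNReal.rpow_sub _ _ hN0 hNt, hη, div_eq_mul_inv]; ring
    rw [e1, hNdef, ENNReal.ofReal_rpow_of_pos hn0, ← ENNReal.ofReal_toReal hAt]
    calc ENNReal.ofReal A.toReal = 4⁻¹ * ENNReal.ofReal (4 * A.toReal) := by
          rw [ENNReal.ofReal_mul (by norm_num), ← mul_assoc, ENNReal.ofReal_ofNat,
            ENNReal.inv_mul_cancel (by simp) (by simp), one_mul]
      _ ≤ _ := by gcongr
  have hηN : (η + η) * N ^ p ≤ 1 / 2 := by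
    have : (η + η) * N ^ p = (N ^ p * (N ^ p)⁻¹) * (4⁻¹ + 4⁻¹) := by rw [hη]; ring
    rw [this, ENNReal.mul_inv_cancel hNp0 hNpt, one_mul, one_div]
    rw [← ENNReal.toReal_le_toReal (by simp) (by simp), ENNReal.toReal_add (by simp) (by simp)]
    simp; norm_num
  set B : ℝ≥0∞ := 2 * 5 ^ d * 8 ^ d with hB
  have hB0 : B ≠ 0 := by simp [hB]
  have hBt : B ≠ ∞ := ENNReal.mul_ne_top (ENNReal.mul_ne_top (by simp) (by simp)) (by simp)
  set θ : ℝ≥0∞ := η * N / 2 / B with hθ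
  have hηN0 : η * N ≠ 0 := mul_ne_zero hη0 hN0
  have hηNt : η * N ≠ ∞ := ENNReal.mul_ne_top hηt hNt
  have hθ0 : θ ≠ 0 := ENNReal.div_ne_zero.2 ⟨ENNReal.div_ne_zero.2 ⟨hηN0, by simp⟩, hBt⟩
  have hθt : θ ≠ ∞ := ENNReal.div_ne_top (ENNReal.div_ne_top hηNt (by simp)) hB0
  set δ : ℝ≥0∞ := θ / (K1 + 1) with hδ
  have hδ0 : δ ≠ 0 := ENNReal.div_ne_zero.2 ⟨hθ0, by simp [hK]⟩
  have hδt : δ ≠ ∞ := ENNReal.div_ne_top hθt (by simp)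
  have hKδ : K1 * δ ≤ θ := by
    calc K1 * δ ≤ (K1 + 1) * δ := by gcongr; exact le_self_add
      _ = θ := ENNReal.mul_div_cancel (by simp) (by simp [hK])
  have hη1 : B * (θ + K1 * δ) ≤ η * N := by
    calc B * (θ + K1 * δ) ≤ B * (θ + θ) := by gcongr
      _ = B * θ + B * θ := mul_add _ _ _
      _ = η * N := by rw [hθ, ENNReal.mul_div_cancel hB0 hBt, ENNReal.add_halves]
  set Cs : ℝ≥0∞ := ENNReal.ofReal p * (ENNReal.ofReal (p - 1))⁻¹ * (2 * 5 ^ d) * 2 ^ (p - 1) with hCs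
  have hCst : Cs ≠ ∞ := by
    refine ENNReal.mul_ne_top (ENNReal.mul_ne_top (ENNReal.mul_ne_top (by simp) ?_)
      (ENNReal.mul_ne_top (by simp) (by simp))) (ENNReal.rpow_ne_top_of_nonneg (by linarith) (by simp))
    exact ENNReal.inv_ne_top.2 (by simpa using hp)
  have hδi : δ⁻¹ ^ p ≠ ∞ := ENNReal.rpow_ne_top_of_nonneg hp0.le (ENNReal.inv_ne_top.2 hδ0)
  have h3t : (3 : ℝ≥0∞) ^ p ≠ ∞ := ENNReal.rpow_ne_top_of_nonneg hp0.le (by simp)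
  refine ⟨θ.toReal, ENNReal.toReal_pos hθ0 hθt, 2 * N ^ p * (3 ^ p * (δ⁻¹ ^ p * Cs + Cs + 1)), ?_, ?_⟩
  · refine ENNReal.mul_ne_top (ENNReal.mul_ne_top (by simp) hNpt) (ENNReal.mul_ne_top h3t ?_)
    simp only [ne_eq, ENNReal.add_eq_top, not_or]
    exact ⟨⟨ENNReal.mul_ne_top hδi hCst, hCst⟩, by simp⟩
  intro c R hR u F G hF hG hFf hGf hui hFi hGi hC K
  rw [ENNReal.ofReal_toReal hθt] at hC
  have hcu : cav c R u 0 (fun _ => 0) ≠ ∞ :=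
    ENNReal.mul_ne_top (ENNReal.inv_ne_top.2 (dyadic_vol_ne_zero c hR _ _ (by norm_num)))
      ((setLIntegral_le_lintegral _ _).trans_lt hui.lt_top).ne
  have hvQ : volume (cube c R) ≠ ∞ := by rw [cube_vol c hR]; simp
  have main := absorb (volume.restrict (cube c R)) (mx_meas c R K u) (mx_lt_top c hR K hui)
    (ctl_meas c R K u F G δ) (fun x => by
      unfold ctl
      simp only [ne_eq, ENNReal.add_eq_top, not_or]
      exact ⟨⟨ENNReal.mul_ne_top (ENNReal.inv_ne_top.2 hδ0) (mx_lt_top c hR K hFi x),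
        mx_lt_top c hR K hGi x⟩, hcu⟩) hp0 hN0 hNt hηN (by
      obtain ⟨b, hb, hb2⟩ := mx_bdd c hR K hui
      refine ne_top_of_le_ne_top (b := b ^ p * volume (cube c R)) ?_ ?_
      · exact ENNReal.mul_ne_top (ENNReal.rpow_ne_top_of_nonneg hp0.le hb) hvQ
      · rw [← setLIntegral_const]
        exact lintegral_mono fun x => ENNReal.rpow_le_rpow (hb2 x) hp0.le)
    (fun l hl hlt => good_lambda hR hq hC hN2 hNt hl hlt hδ0 hδt hη1 hη2 K)
  refine main.trans ?_
  rw [mul_assoc (2 * N ^ p)]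
  refine mul_le_mul_right ?_ _
  have hsF := strong_type hp c hR K hF hFf hFi
  have hsG := strong_type hp c hR K hG hGf hGi
  rw [← hCs] at hsF hsG
  have mF := mx_meas c R K F
  have mG := mx_meas c R K G
  calc ∫⁻ x in cube c R, ctl c R K u F G δ x ^ p
      ≤ ∫⁻ x in cube c R, 3 ^ p * (δ⁻¹ ^ p * mx c R K F x ^ p + mx c R K G x ^ p +
          cav c R u 0 (fun _ => 0) ^ p) := by
        refine lintegral_mono fun x => ?_
        refine (three_rpow _ _ _ hp0.le).trans ?_
        rw [ENNReal.mul_rpow_of_nonneg _ _ hp0.le]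
    _ = 3 ^ p * (δ⁻¹ ^ p * (∫⁻ x in cube c R, mx c R K F x ^ p) + (∫⁻ x in cube c R, mx c R K G x ^ p) +
          cav c R u 0 (fun _ => 0) ^ p * volume (cube c R)) := by
        rw [lintegral_const_mul' _ _ h3t, lintegral_add_right _ measurable_const,
          lintegral_add_right _ (mG.pow_const p), lintegral_const_mul' _ _ hδi, setLIntegral_const]
    _ ≤ 3 ^ p * (δ⁻¹ ^ p * (Cs * ∫⁻ x, F x ^ p) + Cs * (∫⁻ x, G x ^ p) +
          cav c R u 0 (fun _ => 0) ^ p * volume (cube c R)) := by gcongr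
    _ ≤ 3 ^ p * ((δ⁻¹ ^ p * Cs + Cs + 1) * (∫⁻ x, F x ^ p) + (δ⁻¹ ^ p * Cs + Cs + 1) * (∫⁻ x, G x ^ p) +
          (δ⁻¹ ^ p * Cs + Cs + 1) * (cav c R u 0 (fun _ => 0) ^ p * volume (cube c R))) := by
        refine mul_le_mul_right (add_le_add (add_le_add ?_ ?_) ?_) _
        · rw [← mul_assoc]
          refine mul_le_mul_left ?_ _
          rw [add_assoc]; exact le_self_add
        · exact mul_le_mul_left (le_add_self.trans le_self_add) _
        · exact le_mul_of_one_le_left' le_add_self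
    _ = _ := by ring

lemma leb {d : ℕ} (c : Ed d) {R : ℝ} (hR : 0 < R) {u : Ed d → ℝ≥0∞} (hu : Measurable u)
    (huf : ∀ x, u x ≠ ∞) (hui : ∫⁻ x, u x ≠ ∞) :
    ∀ᵐ x : Ed d, x ∈ cube c R →
      Tendsto (fun k => cav c R u k (idx c R k x)) atTop (𝓝 (u x)) := by
  have hmp := PiLp.volume_preserving_ofLp (Fin d)
  have hmp' := PiLp.volume_preserving_toLp (Fin d)
  have hemb : MeasurableEmbedding (@WithLp.ofLp 2 (Fin d → ℝ)) :=
    (MeasurableEquiv.toLp 2 (Fin d → ℝ)).symm.measurableEmbedding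
  let v : (Fin d → ℝ) → ℝ := fun y => (u (WithLp.toLp 2 y)).toReal
  have hv : Integrable v := by
    refine integrable_toReal_of_lintegral_ne_top ?_ ?_
    · exact (hu.comp hmp'.measurable).aemeasurable
    · rwa [hmp'.lintegral_comp hu]
  have key := IsUnifLocDoublingMeasure.ae_tendsto_average (μ := (volume : Measure (Fin d → ℝ)))
    hv.locallyIntegrable 1
  have key2 := hmp.quasiMeasurePreserving.ae key
  filter_upwards [key2] with x hx hxQ
  have h1 := hx (ι := ℕ) (l := atTop) (fun k => WithLp.ofLp (dyadicCenter c R k (idx c R k x)))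
    (fun k => 4 * (R / 2 ^ k) / 2) (by
      rw [tendsto_nhdsWithin_iff]
      constructor
      · have : Tendsto (fun k : ℕ => 2 * R * (1 / 2 : ℝ) ^ k) atTop (𝓝 (2 * R * 0)) :=
          (tendsto_pow_atTop_nhds_zero_of_lt_one (by norm_num) (by norm_num)).const_mul _
        rw [mul_zero] at this
        refine this.congr fun k => ?_
        rw [div_pow, one_pow]; ring
      · exact Eventually.of_forall fun k => by
          have : 0 < R / 2 ^ k := by positivity
          simp only [mem_Ioi]; positivity)
    (Eventually.of_forall fun k => by
      have := mem_dyadic hR k hxQ (s := 4) (by norm_num)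
      rw [dyadicCube, cube_eq_preimage _ (by positivity)] at this
      rw [one_mul]
      exact ball_subset_closedBall this)
  have h2 : ∀ k, ⨍ y in closedBall (WithLp.ofLp (dyadicCenter c R k (idx c R k x)))
      (4 * (R / 2 ^ k) / 2), v y = (cav c R u k (idx c R k x)).toReal := by
    intro k
    have hpos : 0 < 4 * (R / 2 ^ k) := by positivity
    set z := dyadicCenter c R k (idx c R k x)
    set ρ := 4 * (R / 2 ^ k) / 2 with hρ
    have hae : (closedBall (WithLp.ofLp z) ρ : Set (Fin d → ℝ)) =ᵐ[volume] ball (WithLp.ofLp z) ρ := by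
      have h0 : volume (sphere (WithLp.ofLp z) ρ) = 0 :=
        Measure.addHaar_sphere_of_ne_zero _ _ (by positivity)
      rw [← ball_union_sphere]
      exact union_ae_eq_left_of_ae_eq_empty (ae_eq_empty.2 h0)
    have hres : volume.restrict (closedBall (WithLp.ofLp z) ρ) =
      volume.restrict (ball (WithLp.ofLp z) ρ) := Measure.restrict_congr_set hae
    rw [hres, average_eq, Measure.real, Measure.restrict_apply_univ]
    have hcube : dyadicCube c R k (idx c R k x) 4 = WithLp.ofLp ⁻¹' (ball (WithLp.ofLp z) ρ) :=
      cube_eq_preimage _ hpos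
    have e1 : volume (ball (WithLp.ofLp z) ρ) = volume (dyadicCube c R k (idx c R k x) 4) := by
      rw [hcube, hmp.measure_preimage isOpen_ball.measurableSet.nullMeasurableSet]
    have e2 : ∫ y in ball (WithLp.ofLp z) ρ, v y = (∫⁻ y in dyadicCube c R k (idx c R k x) 4, u y).toReal := by
      rw [integral_toReal]
      · congr 1
        rw [hcube, ← hmp.setLIntegral_comp_preimage_emb hemb]
      · exact (hu.comp hmp'.measurable).aemeasurable
      · exact Eventually.of_forall fun y => (huf _).lt_top
    rw [e1, e2, cav, ENNReal.toReal_mul, ENNReal.toReal_inv, smul_eq_mul]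
  simp only [h2] at h1
  have h3 := ENNReal.tendsto_ofReal h1
  have h4 : ENNReal.ofReal (v (WithLp.ofLp x)) = u x := ENNReal.ofReal_toReal (huf _)
  rw [h4] at h3
  refine h3.congr fun k => ENNReal.ofReal_toReal ?_
  exact ne_top_of_le_ne_top (mx_lt_top c hR k hui x) (le_mx c R le_rfl u x)

lemma fatou {d : ℕ} (c : Ed d) {R : ℝ} (hR : 0 < R) {u : Ed d → ℝ≥0∞} (hu : Measurable u)
    (huf : ∀ x, u x ≠ ∞) (hui : ∫⁻ x, u x ≠ ∞) {p : ℝ} (hp : 0 ≤ p) {Z : ℝ≥0∞}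
    (hZ : ∀ K, ∫⁻ x in cube c R, mx c R K u x ^ p ≤ Z) :
    ∫⁻ x in cube c R, u x ^ p ≤ Z := by
  calc ∫⁻ x in cube c R, u x ^ p
      = ∫⁻ x in cube c R, liminf (fun k => cav c R u k (idx c R k x) ^ p) atTop := by
        refine setLIntegral_congr_fun_ae (rect_meas c R) ?_
        filter_upwards [leb c hR hu huf hui] with x hx hxQ
        exact (((ENNReal.continuous_rpow_const (y := p)).tendsto _).comp (hx hxQ)).liminf_eq.symm
    _ ≤ liminf (fun k => ∫⁻ x in cube c R, cav c R u k (idx c R k x) ^ p) atTop := by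
        refine lintegral_liminf_le fun k => ?_
        exact ((Measurable.of_discrete (f := cav c R u k)).comp (idx_meas c R k)).pow_const p
    _ ≤ liminf (fun _ : ℕ => Z) atTop := by
        refine liminf_le_liminf (Eventually.of_forall fun k => ?_)
        refine le_trans (lintegral_mono fun x => ?_) (hZ k)
        exact ENNReal.rpow_le_rpow (le_mx c R le_rfl u x) hp
    _ = Z := by simp


lemma ofReal_avg {d : ℕ} {E : Type*} [NormedAddCommGroup E] {S : Set (Ed d)} {h : Ed d → E} {r : ℝ}
    (hr : 0 < r) (hS0 : volume S ≠ 0) (hSt : volume S ≠ ∞)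
    (hh : MemLp h (ENNReal.ofReal r) (volume.restrict S)) :
    ENNReal.ofReal (⨍ x in S, ‖h x‖ ^ r) = (volume S)⁻¹ * ∫⁻ x in S, ‖h x‖ₑ ^ r := by
  have hi : Integrable (fun x => ‖h x‖ ^ r) (volume.restrict S) := by
    have := hh.integrable_norm_rpow (by simpa using hr) (by simp)
    rwa [ENNReal.toReal_ofReal hr.le] at this
  rw [setAverage_eq, smul_eq_mul, ENNReal.ofReal_mul (by positivity), Measure.real,
    ← ENNReal.toReal_inv, ENNReal.ofReal_toReal (ENNReal.inv_ne_top.2 hS0),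
    ofReal_integral_eq_lintegral_ofReal hi (Eventually.of_forall fun x => by positivity)]
  congr 1
  refine lintegral_congr fun x => ?_
  rw [← ENNReal.ofReal_rpow_of_nonneg (norm_nonneg _) hr.le, ofReal_norm]

lemma two_rpow (a b : ℝ≥0∞) {p : ℝ} (hp : 0 ≤ p) :
    (a + b) ^ p ≤ 2 ^ p * a ^ p + 2 ^ p * b ^ p := by
  rw [← mul_add]
  have h1 : a + b ≤ 2 * max a b := by
    calc a + b ≤ max a b + max a b := by gcongr <;> simp
      _ = _ := by ring
  calc (a + b) ^ p ≤ (2 * max a b) ^ p := by gcongr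
    _ = 2 ^ p * (max a b) ^ p := ENNReal.mul_rpow_of_nonneg _ _ hp
    _ ≤ _ := by
      gcongr
      rcases max_choice a b with h | h
      · rw [h]; exact le_self_add
      · rw [h]; exact le_add_self

lemma comp_step {d n : ℕ} {r t C ε : ℝ} (hr : 1 ≤ r) (hrt : r < t) (hC : 0 < C) (hε : 0 < ε)
    {S2 S4 : Set (Ed d)} (h24 : S2 ⊆ S4)
    (h20 : volume S2 ≠ 0) (h2t : volume S2 ≠ ∞) (h40 : volume S4 ≠ 0) (h4t : volume S4 ≠ ∞)
    {w w' wa : Ed d → En n} {f g : Ed d → ℝ} {u F G : Ed d → ℝ≥0∞}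
    (hw : MemLp w (ENNReal.ofReal r) (volume.restrict S4))
    (hf : MemLp f (ENNReal.ofReal r) (volume.restrict S4))
    (hg : MemLp g (ENNReal.ofReal r) (volume.restrict S4))
    (hwt : MemLp wa (ENNReal.ofReal t) (volume.restrict S2))
    (hwr : MemLp wa (ENNReal.ofReal r) (volume.restrict S4))
    (hw' : Measurable w') (hww : w =ᵐ[volume.restrict S4] w')
    (hu : ∀ x ∈ S2, u x ≤ ‖w' x‖ₑ ^ r)
    (hU : ∫⁻ x in S4, ‖w x‖ₑ ^ r = ∫⁻ x in S4, u x)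
    (hF : ∫⁻ x in S4, ‖f x‖ₑ ^ r = ∫⁻ x in S4, F x)
    (hG : ∫⁻ x in S4, ‖g x‖ₑ ^ r = ∫⁻ x in S4, G x)
    (h1 : (⨍ x in S2, ‖wa x‖ ^ t) ^ (1 / t) ≤ C / 2 * (⨍ x in S4, ‖wa x‖ ^ r) ^ (1 / r))
    (h2 : (⨍ x in S4, ‖wa x‖ ^ r) ≤ C * (⨍ x in S4, ‖w x‖ ^ r) + C * (⨍ x in S4, |g x| ^ r))
    (h3 : (⨍ x in S4, ‖w x - wa x‖ ^ r) ≤ ε * (⨍ x in S4, ‖w x‖ ^ r) +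
      C * (⨍ x in S4, |f x| ^ r)) {e K1 : ℝ≥0∞}
    (he : 2 ^ r * ENNReal.ofReal ε ≤ e) (hK : 2 ^ r * ENNReal.ofReal C ≤ K1)
    (hK2 : 2 ^ r * ENNReal.ofReal ((C / 2) ^ r * C) ≤ K1) :
    ∃ D V : Ed d → ℝ≥0∞, Measurable D ∧ Measurable V ∧ (∀ x ∈ S2, u x ≤ D x + V x) ∧
      (∫⁻ x in S2, D x ≤ volume S4 * (e * ((volume S4)⁻¹ * ∫⁻ x in S4, u x) +
        K1 * ((volume S4)⁻¹ * ∫⁻ x in S4, F x))) ∧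
      (∫⁻ x in S2, V x ^ (t / r) ≤ volume S2 * (K1 * (((volume S4)⁻¹ * ∫⁻ x in S4, u x) +
        ((volume S4)⁻¹ * ∫⁻ x in S4, G x))) ^ (t / r)) := by
  have hr0 : 0 < r := by linarith
  have ht0 : 0 < t := by linarith
  have hq0 : 0 < t / r := by positivity
  have h2rt : (2 : ℝ≥0∞) ^ r ≠ ∞ := ENNReal.rpow_ne_top_of_nonneg hr0.le (by simp)
  obtain ⟨wb, hwb, hwab⟩ := hwr.1
  have hwbm := hwb.measurable
  -- averages in extended form
  have aU := ofReal_avg hr0 h40 h4t hw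
  have aF := ofReal_avg hr0 h40 h4t hf
  have aG := ofReal_avg hr0 h40 h4t hg
  have aA := ofReal_avg hr0 h40 h4t hwr
  have aT := ofReal_avg ht0 h20 h2t hwt
  have aD := ofReal_avg hr0 h40 h4t (hw.sub hwr)
  simp only [Real.norm_eq_abs] at aF aG
  rw [hU] at aU
  rw [hF] at aF
  rw [hG] at aG
  have nn : ∀ (S : Set (Ed d)) (φ : Ed d → ℝ), (∀ x, 0 ≤ φ x) → 0 ≤ ⨍ x in S, φ x := by
    intro S φ hφ
    rw [setAverage_eq]
    exact smul_nonneg (by positivity) (integral_nonneg hφ)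
  have nU := nn S4 (fun x => ‖w x‖ ^ r) (fun x => by positivity)
  have nF := nn S4 (fun x => |f x| ^ r) (fun x => by positivity)
  have nG := nn S4 (fun x => |g x| ^ r) (fun x => by positivity)
  have nA := nn S4 (fun x => ‖wa x‖ ^ r) (fun x => by positivity)
  have nT := nn S2 (fun x => ‖wa x‖ ^ t) (fun x => by positivity)
  refine ⟨fun x => 2 ^ r * ‖w' x - wb x‖ₑ ^ r, fun x => 2 ^ r * ‖wb x‖ₑ ^ r,
    ((hw'.sub hwbm).enorm.pow_const r).const_mul _, (hwbm.enorm.pow_const r).const_mul _, ?_, ?_, ?_⟩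
  · intro x hx
    refine (hu x hx).trans ?_
    refine le_trans ?_ (two_rpow _ _ hr0.le)
    refine ENNReal.rpow_le_rpow ?_ hr0.le
    calc ‖w' x‖ₑ = ‖(w' x - wb x) + wb x‖ₑ := by rw [sub_add_cancel]
      _ ≤ _ := enorm_add_le _ _
  · calc ∫⁻ x in S2, 2 ^ r * ‖w' x - wb x‖ₑ ^ r ≤ ∫⁻ x in S4, 2 ^ r * ‖w' x - wb x‖ₑ ^ r :=
          lintegral_mono_set h24
      _ = 2 ^ r * ∫⁻ x in S4, ‖(w - wa) x‖ₑ ^ r := by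
          rw [lintegral_const_mul' _ _ h2rt]
          congr 1
          refine lintegral_congr_ae ?_
          filter_upwards [hww, hwab] with x hx1 hx2
          rw [Pi.sub_apply, hx1, hx2]
      _ = 2 ^ r * (volume S4 * ENNReal.ofReal (⨍ x in S4, ‖(w - wa) x‖ ^ r)) := by
          rw [aD, ← mul_assoc (volume S4), ENNReal.mul_inv_cancel h40 h4t, one_mul]
      _ ≤ 2 ^ r * (volume S4 * (ENNReal.ofReal ε * ((volume S4)⁻¹ * ∫⁻ x in S4, u x) +
            ENNReal.ofReal C * ((volume S4)⁻¹ * ∫⁻ x in S4, F x))) := by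
          rw [← aU, ← aF, ← ENNReal.ofReal_mul hε.le, ← ENNReal.ofReal_mul hC.le,
            ← ENNReal.ofReal_add (by positivity) (by positivity)]
          exact mul_le_mul_right (mul_le_mul_right (ENNReal.ofReal_le_ofReal h3) _) _
      _ = volume S4 * ((2 ^ r * ENNReal.ofReal ε) * ((volume S4)⁻¹ * ∫⁻ x in S4, u x) +
            (2 ^ r * ENNReal.ofReal C) * ((volume S4)⁻¹ * ∫⁻ x in S4, F x)) := by ring
      _ ≤ _ := mul_le_mul_right (add_le_add (mul_le_mul_left he _) (mul_le_mul_left hK _)) _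
  · have hreal : (⨍ x in S2, ‖wa x‖ ^ t) ≤ ((C / 2) ^ r * (⨍ x in S4, ‖wa x‖ ^ r)) ^ (t / r) := by
      calc (⨍ x in S2, ‖wa x‖ ^ t) = ((⨍ x in S2, ‖wa x‖ ^ t) ^ (1 / t)) ^ t := by
            rw [← Real.rpow_mul nT, one_div_mul_cancel ht0.ne', Real.rpow_one]
        _ ≤ (C / 2 * (⨍ x in S4, ‖wa x‖ ^ r) ^ (1 / r)) ^ t :=
            Real.rpow_le_rpow (by positivity) h1 ht0.le
        _ = _ := by
            rw [Real.mul_rpow (by positivity) (by positivity),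
              Real.mul_rpow (by positivity) (by positivity), ← Real.rpow_mul (by positivity),
              ← Real.rpow_mul (by positivity)]
            congr 2 <;> field_simp
    calc ∫⁻ x in S2, (2 ^ r * ‖wb x‖ₑ ^ r) ^ (t / r)
        = ∫⁻ x in S2, (2 ^ r) ^ (t / r) * ‖wa x‖ₑ ^ t := by
          refine lintegral_congr_ae ?_
          filter_upwards [ae_restrict_of_ae_restrict_of_subset h24 hwab] with x hx
          rw [ENNReal.mul_rpow_of_nonneg _ _ hq0.le, ← hx, ← ENNReal.rpow_mul ‖wa x‖ₑ,
            mul_div_cancel₀ _ hr0.ne']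
      _ = (2 ^ r) ^ (t / r) * (volume S2 * ENNReal.ofReal (⨍ x in S2, ‖wa x‖ ^ t)) := by
          rw [aT, ← mul_assoc (volume S2), ENNReal.mul_inv_cancel h20 h2t, one_mul,
            lintegral_const_mul' _ _ (ENNReal.rpow_ne_top_of_nonneg hq0.le h2rt)]
      _ ≤ (2 ^ r) ^ (t / r) * (volume S2 *
            ENNReal.ofReal ((C / 2) ^ r * (C * ((⨍ x in S4, ‖w x‖ ^ r) + ⨍ x in S4, |g x| ^ r))) ^ (t / r)) := by
          refine mul_le_mul_right (mul_le_mul_right ?_ _) _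
          rw [ENNReal.ofReal_rpow_of_nonneg (by positivity) hq0.le]
          refine ENNReal.ofReal_le_ofReal (hreal.trans ?_)
          refine Real.rpow_le_rpow (by positivity) ?_ hq0.le
          rw [mul_add C]
          exact mul_le_mul_of_nonneg_left h2 (by positivity)
      _ = volume S2 * ((2 ^ r * ENNReal.ofReal ((C / 2) ^ r * C)) *
            (((volume S4)⁻¹ * ∫⁻ x in S4, u x) + ((volume S4)⁻¹ * ∫⁻ x in S4, G x))) ^ (t / r) := by
          rw [← aU, ← aG, ← ENNReal.ofReal_add nU nG, mul_assoc (2 ^ r), ← ENNReal.ofReal_mul (by positivity),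
            ENNReal.mul_rpow_of_nonneg _ _ hq0.le, mul_assoc ((C / 2) ^ r)]
          ring
      _ ≤ _ := by
          refine mul_le_mul_right (ENNReal.rpow_le_rpow (mul_le_mul_left hK2 _) hq0.le) _

lemma ind_facts {d : ℕ} {E : Type*} [NormedAddCommGroup E] [MeasurableSpace E] [BorelSpace E]
    {Q4 : Set (Ed d)}
    (hQ : MeasurableSet Q4) {h : Ed d → E} {r : ℝ} (hr : 0 < r)
    (hh : MemLp h (ENNReal.ofReal r) (volume.restrict Q4)) :
    ∃ (h' : Ed d → E) (H : Ed d → ℝ≥0∞), Measurable h' ∧ h =ᵐ[volume.restrict Q4] h' ∧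
      Measurable H ∧ (∀ x, H x ≠ ∞) ∧ ∫⁻ x, H x ≠ ∞ ∧ (∀ x, H x ≤ ‖h' x‖ₑ ^ r) ∧
      (∀ S ⊆ Q4, MeasurableSet S → ∫⁻ x in S, ‖h x‖ₑ ^ r = ∫⁻ x in S, H x) ∧
      (∀ S ⊆ Q4, MeasurableSet S → ∀ p, ∫⁻ x in S, ‖h x‖ₑ ^ (r * p) = ∫⁻ x in S, H x ^ p) ∧
      (∀ p, 0 < p → ∫⁻ x, H x ^ p = ∫⁻ x in Q4, ‖h x‖ₑ ^ (r * p)) := by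
  obtain ⟨h', hm, hae⟩ := hh.1
  have hm' : Measurable fun x => ‖h' x‖ₑ ^ r := (hm.enorm).pow_const r
  have hpow : ∀ S ⊆ Q4, MeasurableSet S → ∀ p, ∫⁻ x in S, ‖h x‖ₑ ^ (r * p) =
      ∫⁻ x in S, (Q4.indicator (fun x => ‖h' x‖ₑ ^ r) x) ^ p := by
    intro S hS hSm p
    refine lintegral_congr_ae ?_
    filter_upwards [ae_restrict_of_ae_restrict_of_subset hS hae, ae_restrict_mem hSm] with x hx hxS
    rw [indicator_of_mem (hS hxS), hx, ENNReal.rpow_mul]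
  have hone : ∀ S ⊆ Q4, MeasurableSet S → ∫⁻ x in S, ‖h x‖ₑ ^ r =
      ∫⁻ x in S, (Q4.indicator (fun x => ‖h' x‖ₑ ^ r) x) := by
    intro S hS hSm
    have := hpow S hS hSm 1
    simpa using this
  refine ⟨h', Q4.indicator fun x => ‖h' x‖ₑ ^ r, hm.measurable, hae, hm'.indicator hQ, ?_, ?_, ?_,
    hone, hpow, ?_⟩
  · intro x
    by_cases hx : x ∈ Q4
    · rw [indicator_of_mem hx]; exact ENNReal.rpow_ne_top_of_nonneg hr.le (by simp)
    · rw [indicator_of_notMem hx]; simp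
  · rw [lintegral_indicator hQ]
    have h1 := hone Q4 subset_rfl hQ
    have h2 := lintegral_rpow_enorm_lt_top_of_eLpNorm_lt_top (by simpa using hr) (by simp) hh.2
    rw [ENNReal.toReal_ofReal hr.le] at h2
    have h3 : ∫⁻ x in Q4, ‖h' x‖ₑ ^ r = ∫⁻ x in Q4, ‖h x‖ₑ ^ r := by
      refine lintegral_congr_ae ?_
      filter_upwards [hae] with x hx
      rw [hx]
    rw [h3]; exact h2.ne
  · intro x; exact indicator_le_self' (fun _ _ => zero_le) x
  · intro p hp
    rw [hpow Q4 subset_rfl hQ p, ← lintegral_indicator hQ]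
    refine lintegral_congr fun x => ?_
    by_cases hx : x ∈ Q4
    · simp [hx]
    · simp [hx, hp]

lemma rpow_add3 {X Y Z p : ℝ} (hX : 0 ≤ X) (hY : 0 ≤ Y) (hZ : 0 ≤ Z) (hp : 0 ≤ p) (hp1 : p ≤ 1) :
    (X + Y + Z) ^ p ≤ X ^ p + Y ^ p + Z ^ p :=
  (Real.rpow_add_le_add_rpow (by positivity) hZ hp hp1).trans
    (add_le_add_left (Real.rpow_add_le_add_rpow hX hY hp hp1) _)

/-- The Calderón–Zygmund type comparison lemma: if on (the predecessor `Q̃_k`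
of) every proper dyadic subcube `Q_k` of `Q` there is a comparison function `w_a` satisfying a
reverse Hölder estimate, an `L^r` bound, and an `L^r` closeness estimate to `w` with a small
parameter `ε < ε₀`, then `w ∈ L^s(Q)` together with the corresponding estimate.  Here a dyadic
subcube of generation `k+1` has index `m` with `m i < 2^{k+1}` and its predecessor is the
generation-`k` cube with index `⌊m/2⌋`.  The constants `ε₀` and `c` depend only on
`d, n, r, s, t, C`. -/
theorem stmt1 (d n : ℕ) (r s t C : ℝ) (hr : 1 ≤ r) (hrs : r < s) (hst : s < t)
    (hC : 0 < C) :
    ∃ ε₀ : ℝ, 0 < ε₀ ∧ ∃ c : ℝ, 0 < c ∧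
      ∀ (cQ : Ed d) (R : ℝ), 0 < R →
      ∀ (f g : Ed d → ℝ) (w : Ed d → En n),
        MemLp f (ENNReal.ofReal s) (volume.restrict (cube cQ (4 * R))) →
        MemLp g (ENNReal.ofReal s) (volume.restrict (cube cQ (4 * R))) →
        MemLp w (ENNReal.ofReal r) (volume.restrict (cube cQ (4 * R))) →
        ∀ ε : ℝ, 0 < ε → ε < ε₀ →
        (∀ (k : ℕ) (m : Fin d → ℕ), (∀ i, m i < 2 ^ (k + 1)) →
          ∃ wa : Ed d → En n,
            MemLp wa (ENNReal.ofReal t)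
              (volume.restrict (dyadicCube cQ R k (fun i => m i / 2) 2)) ∧
            MemLp wa (ENNReal.ofReal r)
              (volume.restrict (dyadicCube cQ R k (fun i => m i / 2) 4)) ∧
            (⨍ x in dyadicCube cQ R k (fun i => m i / 2) 2, ‖wa x‖ ^ t) ^ (1 / t) ≤
              C / 2 * (⨍ x in dyadicCube cQ R k (fun i => m i / 2) 4, ‖wa x‖ ^ r) ^ (1 / r) ∧
            (⨍ x in dyadicCube cQ R k (fun i => m i / 2) 4, ‖wa x‖ ^ r) ≤
              C * (⨍ x in dyadicCube cQ R k (fun i => m i / 2) 4, ‖w x‖ ^ r) +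
              C * (⨍ x in dyadicCube cQ R k (fun i => m i / 2) 4, |g x| ^ r) ∧
            (⨍ x in dyadicCube cQ R k (fun i => m i / 2) 4, ‖w x - wa x‖ ^ r) ≤
              ε * (⨍ x in dyadicCube cQ R k (fun i => m i / 2) 4, ‖w x‖ ^ r) +
              C * (⨍ x in dyadicCube cQ R k (fun i => m i / 2) 4, |f x| ^ r)) →
        MemLp w (ENNReal.ofReal s) (volume.restrict (cube cQ R)) ∧
        (⨍ x in cube cQ R, ‖w x‖ ^ s) ^ (1 / s) ≤
          c * ((⨍ x in cube cQ (4 * R), |f x| ^ s) ^ (1 / s) +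
            (⨍ x in cube cQ (4 * R), |g x| ^ s) ^ (1 / s) +
            (⨍ x in cube cQ (4 * R), ‖w x‖ ^ r) ^ (1 / r)) := by
  have hr0 : 0 < r := by linarith
  have hs0 : 0 < s := by linarith
  have h2rt : (2 : ℝ≥0∞) ^ r ≠ ∞ := ENNReal.rpow_ne_top_of_nonneg hr0.le (by simp)
  set K1 : ℝ≥0∞ := 2 ^ r * ENNReal.ofReal C + 2 ^ r * ENNReal.ofReal ((C / 2) ^ r * C) with hK1
  have hK1t : K1 ≠ ∞ := ENNReal.add_ne_top.2
    ⟨ENNReal.mul_ne_top h2rt (by simp), ENNReal.mul_ne_top h2rt (by simp)⟩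
  have hp : 1 < s / r := by rwa [one_lt_div hr0]
  have hpq : s / r < t / r := by gcongr
  obtain ⟨e0, he0, c1, hc1, hcore⟩ := core (d := d) hp hpq hK1t
  have hca : c1 * 4 ^ d ≠ ∞ := ENNReal.mul_ne_top hc1 (by simp)
  refine ⟨e0 / 2 ^ r, by positivity, (c1 * 4 ^ d).toReal ^ (1 / s) + 1, by positivity, ?_⟩
  intro cQ R hR f g w hf hg hw ε hε hεe hyp
  have hQm : MeasurableSet (cube cQ (4 * R)) := rect_meas _ _
  have hsub : cube cQ R ⊆ cube cQ (4 * R) := cube_sub fun i => by simp; linarith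
  have hv1 : volume (cube cQ R) = ENNReal.ofReal R ^ d := cube_vol cQ hR
  have hv4 : volume (cube cQ (4 * R)) = 4 ^ d * volume (cube cQ R) := by
    rw [cube_vol cQ (by positivity), hv1, ENNReal.ofReal_mul (by norm_num), mul_pow,
      ENNReal.ofReal_ofNat]
  have hv10 : volume (cube cQ R) ≠ 0 := by
    rw [hv1]; exact pow_ne_zero _ (by simpa using hR)
  have hv1t : volume (cube cQ R) ≠ ∞ := by rw [hv1]; simp
  have hv40 : volume (cube cQ (4 * R)) ≠ 0 := by
    rw [hv4]; exact mul_ne_zero (by simp) hv10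
  have hv4t : volume (cube cQ (4 * R)) ≠ ∞ := by
    rw [hv4]; exact ENNReal.mul_ne_top (by simp) hv1t
  haveI : IsFiniteMeasure (volume.restrict (cube cQ (4 * R))) :=
    ⟨by rw [Measure.restrict_apply_univ]; exact hv4t.lt_top⟩
  have hfr := hf.mono_exponent (ENNReal.ofReal_le_ofReal hrs.le)
  have hgr := hg.mono_exponent (ENNReal.ofReal_le_ofReal hrs.le)
  obtain ⟨w', u, hw'm, hww, hum, huf, hui, huw, hu1, hup, -⟩ := ind_facts hQm hr0 hw
  obtain ⟨f', F, -, -, hFm, hFf, hFi, -, hF1, -, hFp⟩ := ind_facts hQm hr0 hfr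
  obtain ⟨g', G, -, -, hGm, hGf, hGi, -, hG1, -, hGp⟩ := ind_facts hQm hr0 hgr
  have hcomp : Comp cQ R u F G (ENNReal.ofReal e0) K1 (t / r) := by
    intro k m hm
    obtain ⟨wa, hwt, hwr, h1, h2, h3⟩ := hyp k (fun i => 2 * m i) (fun i => by
      have := hm i
      rw [pow_succ]; omega)
    have hmm : (fun i => 2 * m i / 2) = m := by funext i; omega
    simp only [hmm] at hwt hwr h1 h2 h3
    have hS := dyadic_four_sub_Q hR k hm (c := cQ)
    have hSm : MeasurableSet (dyadicCube cQ R k m 4) := rect_meas _ _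
    have hle := Measure.restrict_mono hS (le_refl (volume : Measure (Ed d)))
    exact comp_step hr (hrs.trans hst) hC hε
      (dyadic_scale_sub cQ hR k m (by norm_num))
      (dyadic_vol_ne_zero cQ hR k m (by norm_num)) (dyadic_vol_ne_top cQ hR k m (by norm_num))
      (dyadic_vol_ne_zero cQ hR k m (by norm_num)) (dyadic_vol_ne_top cQ hR k m (by norm_num))
      (hw.mono_measure hle) (hfr.mono_measure hle) (hgr.mono_measure hle) hwt hwr hw'm
      (ae_restrict_of_ae_restrict_of_subset hS hww) (fun x _ => huw x)
      (hu1 _ hS hSm) (hF1 _ hS hSm) (hG1 _ hS hSm) h1 h2 h3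
      (by
        have h2r : (2 : ℝ≥0∞) ^ r = ENNReal.ofReal (2 ^ r) := by
          rw [← ENNReal.ofReal_rpow_of_pos (by norm_num), ENNReal.ofReal_ofNat]
        rw [h2r, ← ENNReal.ofReal_mul (by positivity)]
        refine ENNReal.ofReal_le_ofReal ?_
        rw [lt_div_iff₀ (by positivity)] at hεe
        linarith)
      le_self_add le_add_self
  have hfin := fatou cQ hR hum huf hui (p := s / r) (by positivity)
    (hcore cQ R hR u F G hFm hGm hFf hGf hui hFi hGi hcomp)
  have hrs' : r * (s / r) = s := mul_div_cancel₀ _ hr0.ne'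
  rw [← hup _ hsub (rect_meas _ _), hFp _ (by positivity), hGp _ (by positivity), hrs'] at hfin
  have hcav : cav cQ R u 0 (fun _ => 0) = ENNReal.ofReal (⨍ x in cube cQ (4 * R), ‖w x‖ ^ r) := by
    rw [cav, dyadic_zero, ofReal_avg hr0 hv40 hv4t hw, hu1 _ subset_rfl hQm]
  have aF := ofReal_avg hs0 hv40 hv4t hf
  have aG := ofReal_avg hs0 hv40 hv4t hg
  simp only [Real.norm_eq_abs] at aF aG
  have inv4 : ∀ X : ℝ≥0∞, X = volume (cube cQ R) * (4 ^ d * ((volume (cube cQ (4 * R)))⁻¹ * X)) := by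
    intro X
    rw [← mul_assoc, ← mul_assoc, mul_comm (volume _) (4 ^ d), ← hv4,
      ENNReal.mul_inv_cancel hv40 hv4t, one_mul]
  have nn : ∀ (S : Set (Ed d)) (φ : Ed d → ℝ), (∀ x, 0 ≤ φ x) → 0 ≤ ⨍ x in S, φ x := by
    intro S φ hφ
    rw [setAverage_eq]
    exact smul_nonneg (by positivity) (integral_nonneg hφ)
  have nZ := nn (cube cQ (4 * R)) (fun x => ‖w x‖ ^ r) (fun x => by positivity)
  have nX := nn (cube cQ (4 * R)) (fun x => |f x| ^ s) (fun x => by positivity)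
  have nY := nn (cube cQ (4 * R)) (fun x => |g x| ^ s) (fun x => by positivity)
  have nW := nn (cube cQ R) (fun x => ‖w x‖ ^ s) (fun x => by positivity)
  rw [inv4 (∫⁻ x in cube cQ (4 * R), ‖f x‖ₑ ^ s), inv4 (∫⁻ x in cube cQ (4 * R), ‖g x‖ₑ ^ s),
    ← aF, ← aG, hcav, ENNReal.ofReal_rpow_of_nonneg nZ (by positivity)] at hfin
  set X := ⨍ x in cube cQ (4 * R), |f x| ^ s
  set Y := ⨍ x in cube cQ (4 * R), |g x| ^ s
  set Z := ⨍ x in cube cQ (4 * R), ‖w x‖ ^ r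
  have nZ' : 0 ≤ Z ^ (s / r) := by positivity
  have hfin2 : ∫⁻ x in cube cQ R, ‖w x‖ₑ ^ s ≤ volume (cube cQ R) *
      ENNReal.ofReal ((c1 * 4 ^ d).toReal * (X + Y + Z ^ (s / r))) := by
    refine hfin.trans ?_
    rw [ENNReal.ofReal_mul (by positivity), ENNReal.ofReal_toReal hca,
      ENNReal.ofReal_add (by positivity) nZ', ENNReal.ofReal_add nX nY]
    have h4 : (1 : ℝ≥0∞) ≤ 4 ^ d := one_le_pow₀ (by norm_num)
    calc c1 * (volume (cube cQ R) * (4 ^ d * ENNReal.ofReal X) +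
          volume (cube cQ R) * (4 ^ d * ENNReal.ofReal Y) +
          ENNReal.ofReal (Z ^ (s / r)) * volume (cube cQ R))
        ≤ c1 * (volume (cube cQ R) * (4 ^ d * ENNReal.ofReal X) +
          volume (cube cQ R) * (4 ^ d * ENNReal.ofReal Y) +
          (4 ^ d * ENNReal.ofReal (Z ^ (s / r))) * volume (cube cQ R)) :=
          mul_le_mul_right (add_le_add_right (mul_le_mul_left (le_mul_of_one_le_left' h4) _) _) _
      _ = _ := by ring
  have hmem : MemLp w (ENNReal.ofReal s) (volume.restrict (cube cQ R)) := by
    refine ⟨hw.1.mono_measure (Measure.restrict_mono hsub le_rfl), ?_⟩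
    rw [eLpNorm_lt_top_iff_lintegral_rpow_enorm_lt_top (by simpa using hs0) (by simp),
      ENNReal.toReal_ofReal hs0.le]
    exact hfin2.trans_lt (ENNReal.mul_lt_top hv1t.lt_top (by simp))
  refine ⟨hmem, ?_⟩
  have hW : (⨍ x in cube cQ R, ‖w x‖ ^ s) ≤ (c1 * 4 ^ d).toReal * (X + Y + Z ^ (s / r)) := by
    rw [← ENNReal.ofReal_le_ofReal_iff (by positivity), ofReal_avg hs0 hv10 hv1t hmem]
    calc _ ≤ (volume (cube cQ R))⁻¹ * (volume (cube cQ R) *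
      ENNReal.ofReal ((c1 * 4 ^ d).toReal * (X + Y + Z ^ (s / r)))) := mul_le_mul_right hfin2 _
      _ = _ := by rw [← mul_assoc, ENNReal.inv_mul_cancel hv10 hv1t, one_mul]
  have hs1 : 1 / s ≤ 1 := by rw [div_le_one hs0]; linarith
  calc (⨍ x in cube cQ R, ‖w x‖ ^ s) ^ (1 / s)
      ≤ ((c1 * 4 ^ d).toReal * (X + Y + Z ^ (s / r))) ^ (1 / s) :=
        Real.rpow_le_rpow nW hW (by positivity)
    _ = (c1 * 4 ^ d).toReal ^ (1 / s) * (X + Y + Z ^ (s / r)) ^ (1 / s) :=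
        Real.mul_rpow (by positivity) (by positivity)
    _ ≤ ((c1 * 4 ^ d).toReal ^ (1 / s) + 1) * (X + Y + Z ^ (s / r)) ^ (1 / s) := by
        gcongr; linarith
    _ ≤ ((c1 * 4 ^ d).toReal ^ (1 / s) + 1) * (X ^ (1 / s) + Y ^ (1 / s) + (Z ^ (s / r)) ^ (1 / s)) := by
        gcongr
        exact rpow_add3 nX nY nZ' (by positivity) hs1
    _ = _ := by
        rw [← Real.rpow_mul nZ]
        congr 3
        field_simp
end
end

section
/- Let d, N ∈ ℕ, p ∈ (1,∞), α ∈ (0,1), c₁, c₂ > 0, Q₀ ⊂ ℝ^d a cube, and let u ∈ W^{1,p}(Q₀;ℝ^N) be such that: (i) V(∇u) ∈ W^{1,2}_loc(Q₀) and ∫_Q|∇(V(∇u))|² ≤ (c₁/R²)∫_{4Q}|V(∇u)|² for every cube Q of sidelength R with 4Q ⊂ Q₀; (ii) u has a continuous representative with [u]_{C^α(Q)} ≤ c₂R^{1−α}((⨍_{2Q}|∇u|^p)^{1/p} + 1) for every cube Q of sidelength R with 3Q ⊂ Q₀. Then there is c > 0, depending only on d, N, p, α, c₁, c₂, such that (⨍_Q|∇u|^{p+2})^{1/(p+2)}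 ≤ c((⨍_{2Q}|∇u|^p)^{1/p} + 1) for every cube Q with 2Q ⊂ Q₀. -/
open MeasureTheory Filter Metric Set
open scoped ENNReal Topology RealInnerProductSpace

noncomputable section

/-- The classical gradient matrix of a (smooth) vector-valued function. -/
def clGrad {d N : ℕ} (φ : Ed d → En N) (x : Ed d) : Mat N d :=
  (WithLp.equiv 2 _).symm fun q => fderiv ℝ φ x (EuclideanSpace.single q.2 1) q.1

/-- `V(η) = |η|^{(p-2)/2} η` (so that `V(0) = 0`). -/
def Vm (p : ℝ) {ι : Type} [Fintype ι] (η : EuclideanSpace ℝ ι) : EuclideanSpace ℝ ι :=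
  ‖η‖ ^ ((p - 2) / 2) • η

/-- `u` (with weak gradient `g`) is a weak solution of `div 𝒜(∇u) = 0` on `U`:
`∫_U 𝒜(∇u)·∇φ = 0` for all smooth compactly supported `φ` with support in `U`. -/
def IsWeakSol {d N : ℕ} (U : Set (Ed d)) (𝒜 : Mat N d → Mat N d)
    (g : Ed d → Mat N d) : Prop :=
  ∀ φ : Ed d → En N, ContDiff ℝ (⊤ : ℕ∞) φ → HasCompactSupport φ → tsupport φ ⊆ U →
    ∫ x in U, ⟪𝒜 (g x), clGrad φ x⟫ = 0


lemma moll_sq {d : ℕ} (φ : Ed d → ℝ) (hφ : Continuous φ) (h0 : ∀ x, 0 ≤ φ x)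
    (hi : Integrable φ) (h1 : ∫ x, φ x = 1) (f : Ed d → ℝ≥0∞) (hf : AEMeasurable f) :
    ∫⁻ x, (∫⁻ y, ENNReal.ofReal (φ (x - y)) * f y) ^ 2 ≤ ∫⁻ y, f y ^ 2 := by
  have hm : Measurable fun z : Ed d × Ed d => ENNReal.ofReal (φ (z.1 - z.2)) :=
    ENNReal.measurable_ofReal.comp (hφ.comp (continuous_fst.sub continuous_snd)).measurable
  have hone : ∫⁻ x, ENNReal.ofReal (φ x) = 1 := by
    rw [← ofReal_integral_eq_lintegral_ofReal hi (Eventually.of_forall h0), h1]; simp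
  have hmx : ∀ x : Ed d, Measurable fun y : Ed d => ENNReal.ofReal (φ (x - y)) := fun x =>
    ENNReal.measurable_ofReal.comp (hφ.comp (continuous_const.sub continuous_id)).measurable
  have key : ∀ x, (∫⁻ y, ENNReal.ofReal (φ (x - y)) * f y) ^ 2 ≤
      ∫⁻ y, ENNReal.ofReal (φ (x - y)) * f y ^ 2 := by
    intro x
    have hone' : ∫⁻ y, ENNReal.ofReal (φ (x - y)) = 1 := by
      rw [← hone]
      exact lintegral_sub_left_eq_self (fun y => ENNReal.ofReal (φ y)) x
    set r : Ed d → ℝ≥0∞ := fun y => ENNReal.ofReal (φ (x - y)) ^ (1 / 2 : ℝ)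
    have hr : ∀ y, r y * r y = ENNReal.ofReal (φ (x - y)) := by
      intro y
      simp only [r]
      rw [← ENNReal.rpow_add_of_nonneg _ _ (by norm_num) (by norm_num)]
      norm_num
    have hrm : Measurable r := (hmx x).pow_const _
    have hconj : Real.HolderConjugate 2 2 := by
      constructor <;> norm_num
    have := ENNReal.lintegral_mul_le_Lp_mul_Lq (volume : Measure (Ed d)) hconj
      (f := r) (g := fun y => r y * f y) hrm.aemeasurable (hrm.aemeasurable.mul hf)
    have e1 : ∫⁻ y, ENNReal.ofReal (φ (x - y)) * f y = ∫⁻ y, (r * fun y => r y * f y) y := by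
      congr 1; ext y; simp only [Pi.mul_apply]; rw [← mul_assoc, hr]
    have e2 : ∫⁻ y, r y ^ (2 : ℝ) = 1 := by
      rw [← hone']; congr 1; ext y
      rw [← hr y]; norm_cast; ring
    have e3 : ∫⁻ y, (r y * f y) ^ (2 : ℝ) = ∫⁻ y, ENNReal.ofReal (φ (x - y)) * f y ^ 2 := by
      congr 1; ext y
      rw [← hr y]; norm_cast; ring
    rw [← e1, e2, e3] at this
    calc (∫⁻ y, ENNReal.ofReal (φ (x - y)) * f y) ^ 2
        ≤ (1 ^ (1 / 2 : ℝ) * (∫⁻ y, ENNReal.ofReal (φ (x - y)) * f y ^ 2) ^ (1 / 2 : ℝ)) ^ 2 := by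
          gcongr
      _ = _ := by
          rw [ENNReal.one_rpow, one_mul, ← ENNReal.rpow_natCast, ← ENNReal.rpow_mul]; norm_num
  calc _ ≤ ∫⁻ x, ∫⁻ y, ENNReal.ofReal (φ (x - y)) * f y ^ 2 := lintegral_mono key
    _ = ∫⁻ y, ∫⁻ x, ENNReal.ofReal (φ (x - y)) * f y ^ 2 := by
        apply lintegral_lintegral_swap
        exact hm.aemeasurable.mul ((hf.comp_snd).pow_const 2)
    _ = ∫⁻ y, f y ^ 2 := by
        congr 1; ext y
        have : Measurable fun x : Ed d => ENNReal.ofReal (φ (x - y)) :=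
          ENNReal.measurable_ofReal.comp (hφ.comp (continuous_id.sub continuous_const)).measurable
        rw [lintegral_mul_const _ this, lintegral_sub_right_eq_self (fun x => ENNReal.ofReal (φ x)) y, hone, one_mul]

lemma weakGrad_mono {d : ℕ} {ι : Type} [Fintype ι] {U Q : Set (Ed d)} (hU : MeasurableSet U)
    (hQU : Q ⊆ U) {f : Ed d → EuclideanSpace ℝ ι} {g : Ed d → EuclideanSpace ℝ (ι × Fin d)}
    (h : IsWeakGrad U f g) : IsWeakGrad Q f g := by
  intro φ h1 h2 h3 a i
  have := h φ h1 h2 (h3.trans hQU) a i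
  have z1 : ∀ x ∈ U \ Q, φ x = 0 := fun x hx => image_eq_zero_of_notMem_tsupport (fun h => hx.2 (h3 h))
  have z2 : ∀ x ∈ U \ Q, pder φ i x = 0 := fun x hx => by
    have : fderiv ℝ φ x = 0 := by
      apply image_eq_zero_of_notMem_tsupport (f := fderiv ℝ φ)
      exact fun h => hx.2 (h3 (tsupport_fderiv_subset ℝ h))
    simp [pder, this]
  rw [setIntegral_eq_of_subset_of_forall_sdiff_eq_zero hU hQU (fun x hx => by simp [z2 x hx]),
    setIntegral_eq_of_subset_of_forall_sdiff_eq_zero hU hQU (fun x hx => by simp [z1 x hx])] at this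
  exact this

lemma cube_open {d : ℕ} (c : Ed d) (R : ℝ) : IsOpen (cube c R) := by
  have : cube c R = ⋂ i, {x : Ed d | |x i - c i| < R / 2} := by
    ext x; simp [cube]
  rw [this]
  apply isOpen_iInter_of_finite
  intro i
  apply isOpen_lt _ continuous_const
  fun_prop

lemma cube_volume {d : ℕ} (c : Ed d) (R : ℝ) (hR : 0 < R) :
    volume (cube c R) = ENNReal.ofReal (R ^ d) := by
  have h := (PiLp.volume_preserving_ofLp (Fin d))
  have e : cube c R = (@WithLp.ofLp 2 (Fin d → ℝ)) ⁻¹' (Set.univ.pi fun i => ball (c i) (R / 2)) := by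
    ext x; simp [cube, Real.dist_eq]
  rw [e, h.measure_preimage (MeasurableSet.univ_pi (fun i => measurableSet_ball)).nullMeasurableSet,
    volume_pi, Measure.pi_pi]
  simp only [Real.volume_ball, Finset.prod_const, Finset.card_univ, Fintype.card_fin]
  rw [← ENNReal.ofReal_pow (by positivity)]
  congr 2; ring

lemma pi_norm_le {ι : Type} [Fintype ι] (x : EuclideanSpace ℝ ι) : ‖x‖ ≤ ∑ i, |x i| := by
  classical
  have h : x = ∑ i, EuclideanSpace.single i (x i) := by
    ext j
    simp [Finset.sum_apply, Pi.single_apply]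
  conv_lhs => rw [h]
  refine (norm_sum_le _ _).trans (le_of_eq ?_)
  simp

lemma coord_le {ι : Type} [Fintype ι] (x : EuclideanSpace ℝ ι) (i : ι) : |x i| ≤ ‖x‖ := by
  simpa using PiLp.norm_apply_le x i


lemma pder_comp_sub {d : ℕ} (φ : Ed d → ℝ) (hφ : Differentiable ℝ φ) (x y : Ed d) (i : Fin d) :
    pder (fun y => φ (x - y)) i y = - pder φ i (x - y) := by
  unfold pder
  have h : HasFDerivAt (fun y => φ (x - y)) ((fderiv ℝ φ (x - y)).comp (-ContinuousLinearMap.id ℝ (Ed d))) y := by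
    apply (hφ (x - y)).hasFDerivAt.comp
    simpa using (hasFDerivAt_id y).const_sub x
  rw [h.fderiv]; simp

lemma moll_facts {d : ℕ} {ι : Type} [Fintype ι] {Q : Set (Ed d)} (hQ : IsOpen Q)
    {V : Ed d → EuclideanSpace ℝ ι} {W : Ed d → EuclideanSpace ℝ (ι × Fin d)}
    (hV : IntegrableOn V Q) (h : IsWeakGrad Q V W)
    (b : ContDiffBump (0 : Ed d)) :
    ContDiff ℝ (⊤ : ℕ∞) (convolution (b.normed volume) (Q.indicator V) (ContinuousLinearMap.lsmul ℝ ℝ) volume) ∧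
    (∀ x, ‖convolution (b.normed volume) (Q.indicator V) (ContinuousLinearMap.lsmul ℝ ℝ) volume x‖ₑ
      ≤ ∫⁻ y, ENNReal.ofReal (b.normed volume (x - y)) * ‖Q.indicator V y‖ₑ) ∧
    (∀ x, closedBall x b.rOut ⊆ Q → ∀ i,
      ‖fderiv ℝ (convolution (b.normed volume) (Q.indicator V) (ContinuousLinearMap.lsmul ℝ ℝ) volume) x
        (EuclideanSpace.single i 1)‖ₑ ≤ (Fintype.card ι : ℝ≥0∞) *
        ∫⁻ y, ENNReal.ofReal (b.normed volume (x - y)) * ‖Q.indicator W y‖ₑ) := by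
  set f := Q.indicator V with hf
  have hfi : Integrable f := hV.integrable_indicator hQ.measurableSet
  have hfl := hfi.locallyIntegrable
  set r := b.normed (volume : Measure (Ed d)) with hr
  have hrc : HasCompactSupport r := b.hasCompactSupport_normed
  have hrs : ContDiff ℝ (⊤ : ℕ∞) r := b.contDiff_normed
  have hr0 : ∀ x, 0 ≤ r x := fun x => b.nonneg_normed x
  refine ⟨hrc.contDiff_convolution_left _ hrs hfl, ?_, ?_⟩
  · intro x
    rw [convolution_eq_swap]
    refine (enorm_integral_le_lintegral_enorm _).trans (le_of_eq ?_)
    congr 1; ext y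
    simp only [ContinuousLinearMap.lsmul_apply, enorm_smul]
    rw [Real.enorm_of_nonneg (hr0 _)]
  · intro x hx i
    have hd := hrc.hasFDerivAt_convolution_left (ContinuousLinearMap.lsmul ℝ ℝ (E := EuclideanSpace ℝ ι)) (μ := volume)
      (hrs.of_le (by exact_mod_cast le_top)) hfl x
    rw [hd.fderiv]
    rw [convolution_eq_swap]
    have hrd : Continuous (fderiv ℝ r) := hrs.continuous_fderiv (by simp)
    have hrdc : HasCompactSupport (fderiv ℝ r) := hrc.fderiv ℝ
    have h_incl : Integrable fun t => ((ContinuousLinearMap.lsmul ℝ ℝ (E := EuclideanSpace ℝ ι)).precompL (Ed d)) (fderiv ℝ r (x - t)) (f t) :=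
      (hrdc.convolutionExists_left _ hrd hfl x).integrable_swap
    rw [ContinuousLinearMap.integral_apply h_incl]
    simp only [ContinuousLinearMap.precompL_apply, ContinuousLinearMap.lsmul_apply]
    have hint2 : Integrable fun t => (fderiv ℝ r (x - t)) (EuclideanSpace.single i 1) • f t := by
      have := (ContinuousLinearMap.apply ℝ (EuclideanSpace ℝ ι) (EuclideanSpace.single i (1:ℝ) : Ed d)).integrable_comp h_incl
      simpa using this
    set D := ∫ t, (fderiv ℝ r (x - t)) (EuclideanSpace.single i 1) • f t with hD
    have hcomp : ∀ q, D q = ∫ y in Q, W y (q, i) * r (x - y) := by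
      intro q
      have e1 : D q = ∫ t, (fderiv ℝ r (x - t)) (EuclideanSpace.single i 1) * f t q := by
        have := ContinuousLinearMap.integral_comp_comm (EuclideanSpace.proj q : EuclideanSpace ℝ ι →L[ℝ] ℝ) hint2
        rw [hD]
        simpa using this.symm
      have hw := h (fun y => r (x - y)) (hrs.comp (contDiff_const.sub contDiff_id))
        (hrc.comp_homeomorph (Homeomorph.subLeft x)) ?_ q i
      · rw [e1]
        have e2 : ∫ t, (fderiv ℝ r (x - t)) (EuclideanSpace.single i 1) * f t q =
            ∫ t in Q, (fderiv ℝ r (x - t)) (EuclideanSpace.single i 1) * V t q := by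
          rw [← integral_indicator hQ.measurableSet]
          congr 1; ext t
          by_cases ht : t ∈ Q <;> simp [hf, ht]
        rw [e2]
        have e3 : ∀ y, V y q * pder (fun y => r (x - y)) i y =
            - ((fderiv ℝ r (x - y)) (EuclideanSpace.single i 1) * V y q) := by
          intro y
          rw [pder_comp_sub r (hrs.differentiable (by simp))]
          unfold pder; ring
        simp_rw [e3] at hw
        rw [integral_neg] at hw
        linarith
      · refine subset_trans ?_ hx
        apply closure_minimal _ isClosed_closedBall
        intro y hy
        have : x - y ∈ Function.support r := hy
        rw [hr, b.support_normed_eq] at this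
        simp only [mem_ball, dist_zero_right] at this
        rw [mem_closedBall, dist_comm, dist_eq_norm]; exact this.le
    have hq : ∀ q, ‖D q‖ₑ ≤ ∫⁻ y, ENNReal.ofReal (r (x - y)) * ‖Q.indicator W y‖ₑ := by
      intro q
      rw [hcomp q, ← integral_indicator hQ.measurableSet]
      refine (enorm_integral_le_lintegral_enorm _).trans (lintegral_mono fun y => ?_)
      by_cases hy : y ∈ Q
      · simp only [hy, indicator_of_mem, enorm_mul]
        rw [Real.enorm_of_nonneg (hr0 _), mul_comm]
        gcongr
        rw [← ofReal_norm, ← ofReal_norm]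
        exact ENNReal.ofReal_le_ofReal (PiLp.norm_apply_le _ _)
      · simp [hy]
    calc ‖D‖ₑ ≤ ∑ q, ‖D q‖ₑ := by
          simp_rw [← ofReal_norm]
          rw [← ENNReal.ofReal_sum_of_nonneg (fun _ _ => norm_nonneg _)]
          exact ENNReal.ofReal_le_ofReal (pi_norm_le D)
      _ ≤ ∑ q : ι, ∫⁻ y, ENNReal.ofReal (r (x - y)) * ‖Q.indicator W y‖ₑ := Finset.sum_le_sum fun q _ => hq q
      _ = _ := by simp [Finset.sum_const]

/-- truncated power -/
def PsiT (s δ : ℝ) (t : ℝ) : ℝ := t ^ 2 * (t + δ) ^ (s / 2 - 2) * ((1 + δ * t) ^ 3)⁻¹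

lemma psiT_contDiffAt (s δ t : ℝ) (hδ : 0 < δ) (ht : 0 ≤ t) : ContDiffAt ℝ (⊤ : ℕ∞) (PsiT s δ) t := by
  unfold PsiT
  refine ContDiffAt.mul (ContDiffAt.mul (by fun_prop) ?_) (ContDiffAt.inv (by fun_prop) (by positivity))
  exact ContDiffAt.rpow_const_of_ne (by fun_prop) (by positivity)

lemma psiT_nonneg (s δ t : ℝ) (hδ : 0 < δ) (ht : 0 ≤ t) : 0 ≤ PsiT s δ t := by
  unfold PsiT; positivity

lemma psiT_deriv (s δ t : ℝ) (hs : 1 < s) (hs3 : s < 3) (hδ : 0 < δ) (ht : 0 ≤ t) :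
    |t * deriv (PsiT s δ) t| ≤ 8 * PsiT s δ t := by
  have h1 : t + δ ≠ 0 := by positivity
  have h2 : 1 + δ * t ≠ 0 := by positivity
  have hd : HasDerivAt (PsiT s δ) ((2 * t * (t + δ) ^ (s / 2 - 2) +
      t ^ 2 * ((s / 2 - 2) * (t + δ) ^ (s / 2 - 2 - 1))) * ((1 + δ * t) ^ 3)⁻¹ +
      t ^ 2 * (t + δ) ^ (s / 2 - 2) * (-(3 * (1 + δ * t) ^ 2 * δ) / ((1 + δ * t) ^ 3) ^ 2)) t := by
    unfold PsiT
    refine HasDerivAt.mul (HasDerivAt.mul ?_ ?_) ?_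
    · simpa using hasDerivAt_pow 2 t
    · simpa using ((hasDerivAt_id t).add_const δ).rpow_const (p := s / 2 - 2) (Or.inl h1)
    · refine HasDerivAt.fun_inv ?_ (by positivity)
      have := (((hasDerivAt_id t).const_mul δ).const_add 1).fun_pow 3
      simpa using this
  have e : t * deriv (PsiT s δ) t = PsiT s δ t * (2 + (s / 2 - 2) * (t / (t + δ)) - 3 * (δ * t / (1 + δ * t))) := by
    rw [hd.deriv, Real.rpow_sub_one h1]
    unfold PsiT
    field_simp
    ring
  rw [e, abs_mul, abs_of_nonneg (psiT_nonneg s δ t hδ ht), mul_comm]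
  apply mul_le_mul_of_nonneg_right _ (psiT_nonneg s δ t hδ ht)
  have a0 : 0 ≤ t / (t + δ) := by positivity
  have a1 : t / (t + δ) ≤ 1 := by rw [div_le_one (by positivity)]; linarith
  have b0 : 0 ≤ δ * t / (1 + δ * t) := by positivity
  have b1 : δ * t / (1 + δ * t) ≤ 1 := by rw [div_le_one (by positivity)]; linarith
  rw [abs_le]; constructor <;> nlinarith

lemma psiT_le (s δ t : ℝ) (hs : 1 < s) (hs3 : s < 3) (hδ : 0 < δ) (ht : 0 ≤ t) :
    PsiT s δ t ≤ t ^ (s / 2) * ((1 + δ * t) ^ 3)⁻¹ := by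
  unfold PsiT
  gcongr
  rcases ht.eq_or_lt with rfl | ht'
  · simp; positivity
  calc t ^ 2 * (t + δ) ^ (s / 2 - 2) ≤ t ^ 2 * t ^ (s / 2 - 2) := by
        exact mul_le_mul_of_nonneg_left (Real.rpow_le_rpow_of_nonpos ht' (by linarith) (by linarith)) (by positivity)
    _ = t ^ (s / 2) := by
        rw [← Real.rpow_natCast, ← Real.rpow_add ht']; congr 1; push_cast; ring

lemma psiT_bdd (s δ t a : ℝ) (hs : 1 < s) (hs3 : s < 3) (hδ : 0 < δ) (ht : 0 ≤ t) (ha : 0 ≤ a) (has : a ≤ s) :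
    PsiT s δ t * t ^ (a / 2) ≤ 1 + (δ ^ 3)⁻¹ := by
  have h1 : t ^ (s / 2) * t ^ (a / 2) ≤ 1 + t ^ 3 := by
    rcases ht.eq_or_lt with rfl | ht'
    · rw [Real.zero_rpow (by linarith)]; simp
    rw [← Real.rpow_add ht']
    rcases le_total t 1 with h | h
    · have := Real.rpow_le_one ht h (z := s / 2 + a / 2) (by linarith)
      have : 0 ≤ t ^ 3 := by positivity
      linarith
    · have := Real.rpow_le_rpow_of_exponent_le h (show s / 2 + a / 2 ≤ (3 : ℕ) by push_cast; linarith)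
      rw [Real.rpow_natCast] at this
      linarith
  calc PsiT s δ t * t ^ (a / 2) ≤ t ^ (s / 2) * ((1 + δ * t) ^ 3)⁻¹ * t ^ (a / 2) := by
        gcongr; exact psiT_le s δ t hs hs3 hδ ht
    _ = (t ^ (s / 2) * t ^ (a / 2)) * ((1 + δ * t) ^ 3)⁻¹ := by ring
    _ ≤ (1 + t ^ 3) * ((1 + δ * t) ^ 3)⁻¹ := by gcongr
    _ ≤ 1 + (δ ^ 3)⁻¹ := by
        rw [← div_eq_mul_inv, div_le_iff₀ (by positivity)]
        have : (δ ^ 3)⁻¹ * δ ^ 3 = 1 := by field_simp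
        have hx : 0 ≤ (δ ^ 3)⁻¹ := by positivity
        have hy : 0 ≤ δ * t := by positivity
        have e1 : 1 + (δ * t) ^ 3 ≤ (1 + δ * t) ^ 3 := by nlinarith [mul_nonneg hy hy]
        have e2 : (δ ^ 3)⁻¹ * (1 + (δ * t) ^ 3) = (δ ^ 3)⁻¹ + t ^ 3 := by
          rw [mul_pow, mul_add, ← mul_assoc, this]; ring
        have e3 : 0 ≤ (δ * t) ^ 3 := by positivity
        nlinarith [mul_le_mul_of_nonneg_left e1 hx]

lemma psiT_tendsto (s t : ℝ) (hs : 1 < s) (ht : 0 ≤ t) :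
    Tendsto (fun n : ℕ => PsiT s (1 / ((n : ℝ) + 1)) t) atTop (𝓝 (t ^ (s / 2))) := by
  have h0 : Tendsto (fun n : ℕ => 1 / ((n : ℝ) + 1)) atTop (𝓝 0) := tendsto_one_div_add_atTop_nhds_zero_nat
  unfold PsiT
  rcases ht.eq_or_lt with rfl | ht'
  · rw [Real.zero_rpow (by linarith)]; simp
  have e : t ^ (s / 2) = t ^ 2 * (t + 0) ^ (s / 2 - 2) * ((1 + 0 * t) ^ 3)⁻¹ := by
    simp only [add_zero, zero_mul, one_pow, inv_one, mul_one]
    rw [← Real.rpow_natCast, ← Real.rpow_add ht']; congr 1; push_cast; ring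
  rw [e]
  refine Tendsto.mul (Tendsto.mul tendsto_const_nhds ?_) ?_
  · exact (tendsto_const_nhds.add h0).rpow_const (Or.inl (by simpa using ht'.ne'))
  · exact (((tendsto_const_nhds.add (h0.mul_const t)).pow 3).inv₀ (by simp))

/-- properties of the test nonlinearity -/
structure GoodPsi {E : Type} [NormedAddCommGroup E] [InnerProductSpace ℝ E] (s M : ℝ) (Ψ : E → ℝ) : Prop where
  smooth : ContDiff ℝ (⊤ : ℕ∞) Ψ
  nonneg : ∀ y, 0 ≤ Ψ y
  le : ∀ y, Ψ y ≤ ‖y‖ ^ s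
  der : ∀ y w, ‖fderiv ℝ (fun y => Ψ y • y) y w‖ ≤ 17 * Ψ y * ‖w‖
  bdd : ∀ y, Ψ y * ‖y‖ ^ s ≤ M
  bdd1 : ∀ y, Ψ y * ‖y‖ ≤ M

lemma goodPsi {E : Type} [NormedAddCommGroup E] [InnerProductSpace ℝ E] (s δ : ℝ) (hs : 1 < s) (hs3 : s < 3) (hδ : 0 < δ) :
    GoodPsi s (1 + (δ ^ 3)⁻¹) (fun y : E => PsiT s δ (‖y‖ ^ 2)) := by
  have hsm : ContDiff ℝ (⊤ : ℕ∞) (fun y : E => PsiT s δ (‖y‖ ^ 2)) := by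
    rw [contDiff_iff_contDiffAt]
    intro y
    exact (psiT_contDiffAt s δ _ hδ (by positivity)).comp y (contDiff_norm_sq ℝ).contDiffAt
  have hpow : ∀ (y : E) (a : ℝ), (‖y‖ ^ 2) ^ (a / 2) = ‖y‖ ^ a := by
    intro y a
    rw [← Real.rpow_natCast, ← Real.rpow_mul (norm_nonneg _)]; congr 1; push_cast; ring
  refine ⟨hsm, fun y => psiT_nonneg s δ _ hδ (by positivity), ?_, ?_, ?_, ?_⟩
  · intro y
    refine (psiT_le s δ _ hs hs3 hδ (by positivity)).trans ?_
    rw [hpow]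
    apply mul_le_of_le_one_right (by positivity)
    apply inv_le_one_of_one_le₀
    apply one_le_pow₀
    have : 0 ≤ δ * ‖y‖ ^ 2 := by positivity
    linarith
  · intro y w
    have hd := ((psiT_contDiffAt s δ (‖y‖ ^ 2) hδ (by positivity)).differentiableAt (by simp)).hasDerivAt.comp_hasFDerivAt y
      (hasStrictFDerivAt_norm_sq y).hasFDerivAt
    have hd2 := hd.smul (hasFDerivAt_id y)
    have e : fderiv ℝ (fun y : E => PsiT s δ (‖y‖ ^ 2) • y) y = _ := HasFDerivAt.fderiv hd2
    rw [e]
    have h8 := psiT_deriv s δ (‖y‖ ^ 2) hs hs3 hδ (by positivity)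
    have h0 := psiT_nonneg s δ (‖y‖ ^ 2) hδ (by positivity)
    simp only [add_apply, smul_apply, ContinuousLinearMap.smulRight_apply,
      ContinuousLinearMap.id_apply, Function.comp, innerSL_apply_apply, id]
    refine (norm_add_le _ _).trans ?_
    rw [norm_smul, norm_smul, Real.norm_of_nonneg h0]
    have hin : |⟪y, w⟫| ≤ ‖y‖ * ‖w‖ := abs_real_inner_le_norm y w
    rw [abs_mul, abs_of_nonneg (by positivity : 0 ≤ ‖y‖ ^ 2)] at h8
    set P := deriv (PsiT s δ) (‖y‖ ^ 2)
    have : ‖P • (2 : ℕ) • ⟪y, w⟫‖ * ‖y‖ ≤ 16 * PsiT s δ (‖y‖ ^ 2) * ‖w‖ := by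
      have : ‖P • (2 : ℕ) • ⟪y, w⟫‖ = |P| * (2 * |⟪y, w⟫|) := by
        simp
      rw [this]
      calc |P| * (2 * |⟪y, w⟫|) * ‖y‖ ≤ |P| * (2 * (‖y‖ * ‖w‖)) * ‖y‖ := by gcongr
        _ = 2 * (‖y‖ ^ 2 * |P|) * ‖w‖ := by ring
        _ ≤ 2 * (8 * PsiT s δ (‖y‖ ^ 2)) * ‖w‖ := by gcongr
        _ = _ := by ring
    linarith
  · intro y
    have := psiT_bdd s δ (‖y‖ ^ 2) s hs hs3 hδ (by positivity) (by linarith) le_rfl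
    rwa [hpow] at this
  · intro y
    have := psiT_bdd s δ (‖y‖ ^ 2) 1 hs hs3 hδ (by positivity) (by linarith) hs.le
    rwa [hpow, Real.rpow_one] at this


lemma integral_pder_zero {d : ℕ} (φ : Ed d → ℝ) (h1 : ContDiff ℝ (⊤ : ℕ∞) φ) (h2 : HasCompactSupport φ)
    (i : Fin d) : ∫ x, pder φ i x = 0 := by
  have hc : Continuous fun x => fderiv ℝ φ x (EuclideanSpace.single i 1) :=
    (h1.continuous_fderiv (by simp)).clm_apply continuous_const
  have hcs : HasCompactSupport fun x => fderiv ℝ φ x (EuclideanSpace.single i 1) :=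
    h2.fderiv_apply ℝ _
  have := integral_mul_fderiv_eq_neg_fderiv_mul_of_integrable (μ := (volume : Measure (Ed d)))
    (f := fun _ : Ed d => (1 : ℝ)) (g := φ) (v := EuclideanSpace.single i 1) (by simp)
    (by simpa using hc.integrable_of_hasCompactSupport hcs)
    (by simpa using h1.continuous.integrable_of_hasCompactSupport h2)
    (fun x _ => differentiableAt_const _) (fun x _ => h1.differentiable (by simp) x)
  simpa [pder] using this

lemma pder_prod {d : ℕ} {ι : Type} [Fintype ι] {s M : ℝ} {Ψ : EuclideanSpace ℝ ι → ℝ} (hΨ : GoodPsi s M Ψ)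
    {T : Ed d → EuclideanSpace ℝ ι} (hT : ContDiff ℝ (⊤ : ℕ∞) T)
    {η : Ed d → ℝ} (hη : ContDiff ℝ (⊤ : ℕ∞) η) (h0 : ∀ x, 0 ≤ η x)
    (h1 : ∀ x, η x ≤ 1) {L : ℝ} (hL : ∀ x, ‖fderiv ℝ η x‖ ≤ L) (q : ι) (i : Fin d) (x : Ed d) :
    |pder (fun x => (Ψ (T x) • T x) q * η x ^ 2) i x| ≤ Ψ (T x) * η x *
      (17 * ‖fderiv ℝ T x (EuclideanSpace.single i 1)‖ + 2 * L * ‖T x‖) := by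
  have hF : ContDiff ℝ (⊤ : ℕ∞) (fun y : EuclideanSpace ℝ ι => Ψ y • y) := hΨ.smooth.smul contDiff_id
  have hG : HasFDerivAt (fun x => Ψ (T x) • T x)
      ((fderiv ℝ (fun y : EuclideanSpace ℝ ι => Ψ y • y) (T x)).comp (fderiv ℝ T x)) x :=
    HasFDerivAt.comp x (hF.differentiable (by simp) (T x)).hasFDerivAt
      (hT.differentiable (by simp) x).hasFDerivAt
  have hGq : HasFDerivAt (fun x => (Ψ (T x) • T x) q) ((EuclideanSpace.proj q : EuclideanSpace ℝ ι →L[ℝ] ℝ).comp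
      ((fderiv ℝ (fun y : EuclideanSpace ℝ ι => Ψ y • y) (T x)).comp (fderiv ℝ T x))) x :=
    (EuclideanSpace.proj q : EuclideanSpace ℝ ι →L[ℝ] ℝ).hasFDerivAt.comp x hG
  have hη2 : HasFDerivAt (fun x => η x ^ 2) ((2 * η x) • fderiv ℝ η x) x := by
    have := (hasDerivAt_pow 2 (η x)).comp_hasFDerivAt x (hη.differentiable (by simp) x).hasFDerivAt
    simp only [Nat.cast_ofNat, Nat.add_one_sub_one, pow_one] at this
    exact this
  have hall : HasFDerivAt (fun x => (Ψ (T x) • T x) q * η x ^ 2) _ x := hGq.mul hη2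
  unfold pder
  rw [hall.fderiv]
  simp only [add_apply, smul_apply, ContinuousLinearMap.comp_apply, smul_eq_mul, PiLp.proj_apply]
  set e : Ed d := EuclideanSpace.single i 1
  have he : ‖e‖ = 1 := by simp [e]
  have a1 : |fderiv ℝ η x e| ≤ L := by
    have := (fderiv ℝ η x).le_of_opNorm_le (hL x) e
    simpa [he] using this
  have a2 : |(fderiv ℝ (fun y : EuclideanSpace ℝ ι => Ψ y • y) (T x) (fderiv ℝ T x e)) q| ≤ 17 * Ψ (T x) * ‖fderiv ℝ T x e‖ :=
    (coord_le _ q).trans (hΨ.der _ _)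
  have a3 : |(Ψ (T x) • T x) q| ≤ Ψ (T x) * ‖T x‖ := by
    refine (coord_le _ q).trans ?_
    rw [norm_smul, Real.norm_of_nonneg (hΨ.nonneg _)]
  have p0 := hΨ.nonneg (T x)
  have hL0 : 0 ≤ L := (norm_nonneg _).trans (hL x)
  refine (abs_add_le _ _).trans ?_
  have b1 : |(Ψ (T x) • T x) q * (2 * η x * fderiv ℝ η x e)| ≤ Ψ (T x) * ‖T x‖ * (2 * η x * L) := by
    rw [abs_mul]
    apply mul_le_mul a3 _ (abs_nonneg _) (by positivity)
    rw [abs_mul]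
    apply mul_le_mul _ a1 (abs_nonneg _) (by have := h0 x; positivity)
    simp [abs_of_nonneg (h0 x)]
  have b2 : |η x ^ 2 * (fderiv ℝ (fun y : EuclideanSpace ℝ ι => Ψ y • y) (T x) (fderiv ℝ T x e)) q| ≤
      η x * (17 * Ψ (T x) * ‖fderiv ℝ T x e‖) := by
    rw [abs_mul, abs_of_nonneg (by positivity)]
    apply mul_le_mul _ a2 (abs_nonneg _) (h0 x)
    have := h0 x; have := h1 x; nlinarith
  refine (add_le_add b1 b2).trans (le_of_eq (by ring))

lemma step1 {d N : ℕ} {Q : Set (Ed d)} (hQ : IsOpen Q)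
    {v : Ed d → En N} {g : Ed d → Mat N d} (hv : IntegrableOn v Q) (hvg : IsWeakGrad Q v g)
    (hg : IntegrableOn g Q) {s M : ℝ} (hs : 0 < s) {Ψ : Mat N d → ℝ} (hΨ : GoodPsi s M Ψ)
    {T : Ed d → Mat N d} (hT : ContDiff ℝ (⊤ : ℕ∞) T)
    {ω : ℝ} (hω0 : 0 ≤ ω) (v0 : En N) (hω : ∀ x ∈ Q, ‖v x - v0‖ ≤ ω)
    {η : Ed d → ℝ} (hη : ContDiff ℝ (⊤ : ℕ∞) η) (hηc : HasCompactSupport η) (hηQ : tsupport η ⊆ Q)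
    (h0 : ∀ x, 0 ≤ η x) (h1 : ∀ x, η x ≤ 1) {L : ℝ} (hL : ∀ x, ‖fderiv ℝ η x‖ ≤ L) :
    ∫ x in Q, Ψ (T x) * η x ^ 2 * ⟪g x, T x⟫ ≤
      (1 / 2) * (∫ x in Q, Ψ (T x) * ‖T x‖ ^ s * η x ^ 2) +
      ((N * d : ℝ) * ω) ^ 2 * (289 * (∫ x in tsupport η, (∑ i, ‖fderiv ℝ T x (EuclideanSpace.single i 1)‖) ^ 2)
        + 4 * L ^ 2 * ∫ x in tsupport η, ‖T x‖ ^ 2) := by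
  have hL0 : 0 ≤ L := (norm_nonneg _).trans (hL 0)
  set Φ : Fin N × Fin d → Ed d → ℝ := fun q x => (Ψ (T x) • T x) q * η x ^ 2 with hΦ
  have hGs : ContDiff ℝ (⊤ : ℕ∞) (fun x => Ψ (T x) • T x) := (hΨ.smooth.comp hT).smul hT
  have hGq : ∀ q, ContDiff ℝ (⊤ : ℕ∞) (fun x => (Ψ (T x) • T x) q) := fun q =>
    (EuclideanSpace.proj q : Mat N d →L[ℝ] ℝ).contDiff.comp hGs
  have hΦs : ∀ q, ContDiff ℝ (⊤ : ℕ∞) (Φ q) := fun q => (hGq q).mul (hη.pow 2)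
  have hsub : ∀ q, tsupport (Φ q) ⊆ tsupport η := fun q => by
    apply closure_mono
    intro x hx
    simp only [Function.mem_support, hΦ] at hx ⊢
    intro h; exact hx (by simp [h])
  have hΦc : ∀ q, HasCompactSupport (Φ q) := fun q => hηc.of_isClosed_subset (isClosed_tsupport _) (hsub q)
  have hpc : ∀ q i, Continuous (pder (Φ q) i) := fun q i =>
    ((hΦs q).continuous_fderiv (by simp)).clm_apply continuous_const
  have hpcs : ∀ q i, HasCompactSupport (pder (Φ q) i) := fun q i => (hΦc q).fderiv_apply ℝ _
  have hpz : ∀ q i x, x ∉ tsupport η → pder (Φ q) i x = 0 := fun q i x hx => by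
    have : fderiv ℝ (Φ q) x = 0 := by
      apply image_eq_zero_of_notMem_tsupport (f := fderiv ℝ (Φ q))
      exact fun h => hx (hsub q (tsupport_fderiv_subset ℝ h))
    simp [pder, this]
  have hvq : ∀ a, IntegrableOn (fun x => v x a) Q := fun a =>
    (EuclideanSpace.proj a : En N →L[ℝ] ℝ).integrable_comp hv
  have hgq : ∀ q, IntegrableOn (fun x => g x q) Q := fun q =>
    (EuclideanSpace.proj q : Mat N d →L[ℝ] ℝ).integrable_comp hg
  have hi1 : ∀ q : Fin N × Fin d, IntegrableOn (fun x => v x q.1 * pder (Φ q) q.2 x) Q := fun q => by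
    obtain ⟨C, hC⟩ := (hpc q q.2).bounded_above_of_compact_support (hpcs q q.2)
    exact (hvq q.1).mul_bdd (hpc q q.2).aestronglyMeasurable (Eventually.of_forall hC)
  have hi2 : ∀ q : Fin N × Fin d, IntegrableOn (fun x => g x q * Φ q x) Q := fun q => by
    obtain ⟨C, hC⟩ := (hΦs q).continuous.bounded_above_of_compact_support (hΦc q)
    exact (hgq q).mul_bdd (hΦs q).continuous.aestronglyMeasurable (Eventually.of_forall hC)
  have hi3 : ∀ q : Fin N × Fin d, IntegrableOn (fun x => v0 q.1 * pder (Φ q) q.2 x) Q := fun q =>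
    (((hpc q q.2).integrable_of_hasCompactSupport (hpcs q q.2)).const_mul _).integrableOn
  have hi4 : ∀ q : Fin N × Fin d, IntegrableOn (fun x => -((v x q.1 - v0 q.1) * pder (Φ q) q.2 x)) Q := fun q => by
    have := ((hi1 q).sub (hi3 q)).neg
    refine this.congr (Eventually.of_forall fun x => ?_)
    simp only [Pi.neg_apply, Pi.sub_apply]; ring
  have hq : ∀ q : Fin N × Fin d, ∫ x in Q, g x q * Φ q x = ∫ x in Q, -((v x q.1 - v0 q.1) * pder (Φ q) q.2 x) := by
    intro q
    have e1 := hvg (Φ q) (hΦs q) (hΦc q) ((hsub q).trans hηQ) q.1 q.2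
    have e2 : ∫ x in Q, v0 q.1 * pder (Φ q) q.2 x = 0 := by
      rw [setIntegral_eq_integral_of_forall_compl_eq_zero (fun x hx => by
        rw [hpz q q.2 x (fun h => hx (hηQ h)), mul_zero]), integral_const_mul, integral_pder_zero _ (hΦs q) (hΦc q), mul_zero]
    have e3 : ∫ x in Q, -((v x q.1 - v0 q.1) * pder (Φ q) q.2 x) =
        (∫ x in Q, v0 q.1 * pder (Φ q) q.2 x) - ∫ x in Q, v x q.1 * pder (Φ q) q.2 x := by
      rw [← integral_sub (hi3 q) (hi1 q)]; congr 1; ext x; ring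
    rw [e3, e2, e1]; simp
  have hlhs : ∫ x in Q, Ψ (T x) * η x ^ 2 * ⟪g x, T x⟫ = ∫ x in Q, ∑ q : Fin N × Fin d, -((v x q.1 - v0 q.1) * pder (Φ q) q.2 x) := by
    rw [integral_finsetSum _ (fun q _ => hi4 q), ← Finset.sum_congr rfl (fun q _ => hq q),
      ← integral_finsetSum _ (fun q _ => hi2 q)]
    congr 1; ext x
    simp only [PiLp.inner_apply, hΦ, Finset.mul_sum, PiLp.smul_apply, smul_eq_mul]
    apply Finset.sum_congr rfl
    intro q _
    simp [RCLike.inner_apply]; ring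
  rw [hlhs]
  set K := tsupport η with hK
  have hKc : IsCompact K := hηc
  set w : Ed d → ℝ := fun x => ∑ i, ‖fderiv ℝ T x (EuclideanSpace.single i 1)‖ with hw
  have hwc : Continuous w := by
    apply continuous_finsetSum; intro i _
    exact ((hT.continuous_fderiv (by simp)).clm_apply continuous_const).norm
  have hTc := hT.continuous
  have hj1 : Integrable (fun x => Ψ (T x) * ‖T x‖ ^ s * η x ^ 2) := by
    apply Continuous.integrable_of_hasCompactSupport
    · exact ((hΨ.smooth.continuous.comp hTc).mul (hTc.norm.rpow_const (fun _ => Or.inr hs.le))).mul (hη.continuous.pow 2)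
    · apply HasCompactSupport.mul_left
      have h2 : (fun x => η x ^ 2) = η * η := by ext x; simp [pow_two]
      rw [h2]; exact hηc.mul_left
  have hj2 : IntegrableOn (fun x => w x ^ 2) K := (hwc.pow 2).continuousOn.integrableOn_compact hKc
  have hj3 : IntegrableOn (fun x => ‖T x‖ ^ 2) K := (hTc.norm.pow 2).continuousOn.integrableOn_compact hKc
  have hKm : MeasurableSet K := (isClosed_tsupport η).measurableSet
  set X : Ed d → ℝ := K.indicator (fun x => ((N * d : ℝ) * ω) ^ 2 * (289 * w x ^ 2 + 4 * L ^ 2 * ‖T x‖ ^ 2)) with hX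
  have hj4 : IntegrableOn (fun x => ((N * d : ℝ) * ω) ^ 2 * (289 * w x ^ 2 + 4 * L ^ 2 * ‖T x‖ ^ 2)) K :=
    ((hj2.const_mul _).add (hj3.const_mul _)).const_mul _
  have hXi : Integrable X := hj4.integrable_indicator hKm
  have hXint : ∫ x in Q, X x = ((N * d : ℝ) * ω) ^ 2 * (289 * (∫ x in K, w x ^ 2) + 4 * L ^ 2 * ∫ x in K, ‖T x‖ ^ 2) := by
    rw [hX, setIntegral_indicator hKm, Set.inter_eq_right.2 hηQ, integral_const_mul, integral_add (hj2.const_mul _) (hj3.const_mul _),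
      integral_const_mul, integral_const_mul]
  rw [← hXint, ← integral_const_mul, ← integral_add (hj1.integrableOn.const_mul _) hXi.integrableOn]
  apply setIntegral_mono_on (integrable_finsetSum _ fun q _ => hi4 q)
    ((hj1.integrableOn.const_mul _).add hXi.integrableOn) hQ.measurableSet
  intro x hxQ
  have p0 := hΨ.nonneg (T x)
  by_cases hx : x ∈ K
  · have t1 : ∀ q : Fin N × Fin d, -((v x q.1 - v0 q.1) * pder (Φ q) q.2 x) ≤ ω * (Ψ (T x) * η x * (17 * w x + 2 * L * ‖T x‖)) := by
      intro q
      refine (neg_le_abs _).trans ?_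
      rw [abs_mul]
      have u1 : |v x q.1 - v0 q.1| ≤ ω := by
        have := (coord_le (v x - v0) q.1).trans (hω x hxQ)
        simpa using this
      apply mul_le_mul u1 _ (abs_nonneg _) hω0
      refine (pder_prod hΨ hT hη h0 h1 hL q q.2 x).trans ?_
      have := h0 x
      gcongr
      exact Finset.single_le_sum (f := fun i => ‖fderiv ℝ T x (EuclideanSpace.single i 1)‖) (fun _ _ => norm_nonneg _) (Finset.mem_univ q.2)
    refine (Finset.sum_le_sum fun q _ => t1 q).trans ?_
    rw [Finset.sum_const, Pi.add_apply, hX, indicator_of_mem hx]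
    simp only [Finset.card_univ, Fintype.card_prod, Fintype.card_fin, nsmul_eq_mul, Nat.cast_mul]
    have k1 : (Ψ (T x) * η x) ^ 2 ≤ Ψ (T x) * ‖T x‖ ^ s * η x ^ 2 := by
      have := mul_le_mul_of_nonneg_left (hΨ.le (T x)) p0
      nlinarith [sq_nonneg (η x), mul_le_mul_of_nonneg_right this (sq_nonneg (η x))]
    set c := (N * d : ℝ) * ω
    have k2 : c * (Ψ (T x) * η x * (17 * w x + 2 * L * ‖T x‖)) ≤ 1 / 2 * (Ψ (T x) * η x) ^ 2 + 1 / 2 * (c * (17 * w x + 2 * L * ‖T x‖)) ^ 2 := by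
      nlinarith [sq_nonneg (Ψ (T x) * η x - c * (17 * w x + 2 * L * ‖T x‖))]
    have k3 : (c * (17 * w x + 2 * L * ‖T x‖)) ^ 2 ≤ 2 * (c ^ 2 * (289 * w x ^ 2 + 4 * L ^ 2 * ‖T x‖ ^ 2)) := by
      nlinarith [sq_nonneg (c * (17 * w x - 2 * L * ‖T x‖))]
    have : (N * d : ℝ) * (ω * (Ψ (T x) * η x * (17 * w x + 2 * L * ‖T x‖))) = c * (Ψ (T x) * η x * (17 * w x + 2 * L * ‖T x‖)) := by
      simp only [c]; ring
    rw [this]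
    linarith
  · have z : ∀ q : Fin N × Fin d, -((v x q.1 - v0 q.1) * pder (Φ q) q.2 x) = 0 := fun q => by
      rw [hpz q q.2 x hx]; simp
    rw [Finset.sum_congr rfl (fun q _ => z q), Pi.add_apply, hX, indicator_of_notMem hx]
    have : 0 ≤ Ψ (T x) * ‖T x‖ ^ s * η x ^ 2 := by positivity
    simp; linarith


lemma sq_contr {d : ℕ} {E F : Type} [NormedAddCommGroup E] [NormedAddCommGroup F]
    {Q K : Set (Ed d)} (hQ : IsOpen Q) {V : Ed d → E}
    (hV : MemLp V 2 (volume.restrict Q)) (b : ContDiffBump (0 : Ed d)) (T : Ed d → F) (hT : Continuous T)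
    (hK : IsCompact K) (c : ℝ) (hc : 0 ≤ c)
    (h : ∀ x ∈ K, ‖T x‖ₑ ≤ ENNReal.ofReal c * ∫⁻ y, ENNReal.ofReal (b.normed volume (x - y)) * ‖Q.indicator V y‖ₑ) :
    ∫ x in K, ‖T x‖ ^ 2 ≤ c ^ 2 * ∫ x in Q, ‖V x‖ ^ 2 := by
  have hVi : Integrable (fun x => ‖V x‖ ^ 2) (volume.restrict Q) := by
    have := hV.integrable_norm_pow (by simp)
    simpa using this
  have e1 : ∫ x in K, ‖T x‖ ^ 2 = (∫⁻ x in K, ‖T x‖ₑ ^ 2).toReal := by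
    rw [integral_eq_lintegral_of_nonneg_ae (Eventually.of_forall fun x => by positivity)
      (by fun_prop)]
    congr 2; ext x
    rw [ENNReal.ofReal_pow (norm_nonneg _), ofReal_norm]
  have e2 : ENNReal.ofReal (∫ x in Q, ‖V x‖ ^ 2) = ∫⁻ x in Q, ‖V x‖ₑ ^ 2 := by
    rw [ofReal_integral_eq_lintegral_ofReal hVi (Eventually.of_forall fun x => by positivity)]
    congr 1; ext x
    rw [ENNReal.ofReal_pow (norm_nonneg _), ofReal_norm]
  have hm : AEMeasurable (fun y => ‖Q.indicator V y‖ₑ) := by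
    have := (aestronglyMeasurable_indicator_iff hQ.measurableSet).2 hV.1
    exact this.enorm
  have hI0 : 0 ≤ ∫ x in Q, ‖V x‖ ^ 2 := integral_nonneg fun x => by positivity
  rw [e1]
  apply ENNReal.toReal_le_of_le_ofReal (by positivity)
  rw [ENNReal.ofReal_mul (by positivity), e2, ENNReal.ofReal_pow hc]
  calc ∫⁻ x in K, ‖T x‖ₑ ^ 2 ≤ ∫⁻ x in K, (ENNReal.ofReal c * ∫⁻ y, ENNReal.ofReal (b.normed volume (x - y)) * ‖Q.indicator V y‖ₑ) ^ 2 := by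
        apply setLIntegral_mono' hK.measurableSet
        intro x hx
        gcongr
        exact h x hx
    _ ≤ ∫⁻ x, (ENNReal.ofReal c * ∫⁻ y, ENNReal.ofReal (b.normed volume (x - y)) * ‖Q.indicator V y‖ₑ) ^ 2 :=
        setLIntegral_le_lintegral _ _
    _ = ENNReal.ofReal c ^ 2 * ∫⁻ x, (∫⁻ y, ENNReal.ofReal (b.normed volume (x - y)) * ‖Q.indicator V y‖ₑ) ^ 2 := by
        rw [← lintegral_const_mul' _ _ (by finiteness)]
        congr 1; ext x; rw [mul_pow]
    _ ≤ ENNReal.ofReal c ^ 2 * ∫⁻ y, ‖Q.indicator V y‖ₑ ^ 2 := by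
        apply mul_le_mul_right
        exact moll_sq _ b.continuous_normed (fun x => b.nonneg_normed x) b.integrable_normed b.integral_normed _ hm
    _ = _ := by
        congr 1
        rw [← lintegral_indicator hQ.measurableSet]
        congr 1; ext x
        by_cases hx : x ∈ Q <;> simp [hx]

lemma core_s6 {d N : ℕ} {Q : Set (Ed d)} (hQ : IsOpen Q) (hQf : volume Q ≠ ∞)
    {v : Ed d → En N} {g V : Ed d → Mat N d} {W : Ed d → EuclideanSpace ℝ ((Fin N × Fin d) × Fin d)}
    (hv : IntegrableOn v Q) (hvg : IsWeakGrad Q v g)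
    (hg : IntegrableOn g Q) (hV : MemLp V 2 (volume.restrict Q)) (hW : MemLp W 2 (volume.restrict Q))
    (hVW : IsWeakGrad Q V W)
    {s M : ℝ} (hs : 0 < s) {Ψ : Mat N d → ℝ} (hΨ : GoodPsi s M Ψ) (hgV : ∀ x, ⟪g x, V x⟫ = ‖V x‖ ^ s)
    {ω : ℝ} (hω0 : 0 ≤ ω) (v0 : En N) (hω : ∀ x ∈ Q, ‖v x - v0‖ ≤ ω)
    {η : Ed d → ℝ} (hη : ContDiff ℝ (⊤ : ℕ∞) η) (hηc : HasCompactSupport η) (hηQ : tsupport η ⊆ Q)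
    (h0 : ∀ x, 0 ≤ η x) (h1 : ∀ x, η x ≤ 1) {L : ℝ} (hL : ∀ x, ‖fderiv ℝ η x‖ ≤ L) :
    ∫ x in Q, Ψ (V x) * ‖V x‖ ^ s * η x ^ 2 ≤
      2 * (((N * d : ℝ) * ω) ^ 2 * (289 * ((d * (N * d) : ℝ) ^ 2 * ∫ x in Q, ‖W x‖ ^ 2)
        + 4 * L ^ 2 * (1 ^ 2 * ∫ x in Q, ‖V x‖ ^ 2))) := by
  have : IsFiniteMeasure (volume.restrict Q) := ⟨by simpa using hQf.lt_top⟩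
  have hL0 : 0 ≤ L := (norm_nonneg _).trans (hL 0)
  have hV1 : IntegrableOn V Q := hV.integrable (by norm_num)
  set b : ℕ → ContDiffBump (0 : Ed d) := fun k => ⟨1 / ((k : ℝ) + 1), 2 * (1 / ((k : ℝ) + 1)), by positivity, by
    have : (0 : ℝ) < 1 / ((k : ℝ) + 1) := by positivity
    linarith⟩ with hb
  have hb0 : Tendsto (fun k => (b k).rOut) atTop (𝓝 0) := by
    have : Tendsto (fun k : ℕ => 2 * (1 / ((k : ℝ) + 1))) atTop (𝓝 (2 * 0)) :=
      tendsto_one_div_add_atTop_nhds_zero_nat.const_mul 2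
    simpa [hb] using this
  set T : ℕ → Ed d → Mat N d := fun k => convolution ((b k).normed volume) (Q.indicator V) (ContinuousLinearMap.lsmul ℝ ℝ) volume with hT
  have hfacts := fun k => moll_facts hQ hV1 hVW (b k)
  have hTs : ∀ k, ContDiff ℝ (⊤ : ℕ∞) (T k) := fun k => (hfacts k).1
  have hae : ∀ᵐ x ∂(volume.restrict Q), Tendsto (fun k => T k x) atTop (𝓝 (V x)) := by
    have hli : LocallyIntegrable (Q.indicator V) := (hV1.integrable_indicator hQ.measurableSet).locallyIntegrable
    have := ContDiffBump.ae_convolution_tendsto_right_of_locallyIntegrable (φ := b) (l := atTop) (K := 2) (μ := (volume : Measure (Ed d)))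
      hb0 (Eventually.of_forall fun k => by simp [hb]) hli
    filter_upwards [ae_restrict_of_ae this, ae_restrict_mem hQ.measurableSet] with x hx hxQ
    rw [indicator_of_mem hxQ] at hx
    exact hx
  obtain ⟨ε, hε, hεQ⟩ := IsCompact.exists_cthickening_subset_open (s := tsupport η) hηc hQ hηQ
  have hev : ∀ᶠ k in atTop, (b k).rOut < ε := hb0.eventually (gt_mem_nhds hε)
  set B := ((N * d : ℝ) * ω) ^ 2 * (289 * ((d * (N * d) : ℝ) ^ 2 * ∫ x in Q, ‖W x‖ ^ 2)
        + 4 * L ^ 2 * (1 ^ 2 * ∫ x in Q, ‖V x‖ ^ 2)) with hB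
  have hineq : ∀ᶠ k in atTop, ∫ x in Q, Ψ (T k x) * η x ^ 2 * ⟪g x, T k x⟫ ≤
      (1 / 2) * (∫ x in Q, Ψ (T k x) * ‖T k x‖ ^ s * η x ^ 2) + B := by
    filter_upwards [hev] with k hk
    refine (step1 hQ hv hvg hg hs hΨ (hTs k) hω0 v0 hω hη hηc hηQ h0 h1 hL).trans ?_
    have hball : ∀ x ∈ tsupport η, closedBall x (b k).rOut ⊆ Q := fun x hx =>
      (closedBall_subset_closedBall hk.le).trans ((closedBall_subset_cthickening hx ε).trans hεQ)
    have c1 : ∫ x in tsupport η, (∑ i, ‖fderiv ℝ (T k) x (EuclideanSpace.single i 1)‖) ^ 2 ≤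
        (d * (N * d) : ℝ) ^ 2 * ∫ x in Q, ‖W x‖ ^ 2 := by
      have := sq_contr (F := ℝ) hQ hW (b k) (fun x => ∑ i, ‖fderiv ℝ (T k) x (EuclideanSpace.single i 1)‖)
        (by
          apply continuous_finsetSum; intro i _
          exact (((hTs k).continuous_fderiv (by simp)).clm_apply continuous_const).norm) (K := tsupport η) hηc
        (d * (N * d) : ℝ) (by positivity) ?_
      · simpa using this
      · intro x hx
        have hi := fun i => (hfacts k).2.2 x (hball x hx) i
        rw [Real.enorm_of_nonneg (Finset.sum_nonneg fun _ _ => norm_nonneg _),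
          ENNReal.ofReal_sum_of_nonneg (fun _ _ => norm_nonneg _)]
        simp_rw [ofReal_norm]
        refine (Finset.sum_le_sum fun i _ => hi i).trans (le_of_eq ?_)
        rw [Finset.sum_const]
        simp only [Finset.card_univ, Fintype.card_prod, Fintype.card_fin, nsmul_eq_mul]
        rw [← mul_assoc]
        congr 1
        rw [ENNReal.ofReal_mul (by positivity), ENNReal.ofReal_mul (by positivity)]
        simp
    have c2 : ∫ x in tsupport η, ‖T k x‖ ^ 2 ≤ 1 ^ 2 * ∫ x in Q, ‖V x‖ ^ 2 := by
      apply sq_contr hQ hV (b k) (T k) (hTs k).continuous (K := tsupport η) hηc 1 (by norm_num)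
      intro x hx
      simpa using (hfacts k).2.1 x
    rw [hB]
    gcongr
  have lim1 : Tendsto (fun k => ∫ x in Q, Ψ (T k x) * η x ^ 2 * ⟪g x, T k x⟫) atTop
      (𝓝 (∫ x in Q, Ψ (V x) * η x ^ 2 * ⟪g x, V x⟫)) := by
    apply tendsto_integral_of_dominated_convergence (fun x => M * ‖g x‖)
    · intro k
      have hc := (hTs k).continuous
      exact (((hΨ.smooth.continuous.comp hc).mul (hη.continuous.pow 2)).aestronglyMeasurable).mul
        (hg.1.inner hc.aestronglyMeasurable)
    · exact hg.norm.const_mul M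
    · intro k
      refine Eventually.of_forall fun x => ?_
      have p0 := hΨ.nonneg (T k x)
      have p1 := hΨ.bdd1 (T k x)
      have e2 : η x ^ 2 ≤ 1 := pow_le_one₀ (h0 x) (h1 x)
      rw [norm_mul, Real.norm_of_nonneg (by positivity)]
      calc Ψ (T k x) * η x ^ 2 * ‖⟪g x, T k x⟫‖ ≤ Ψ (T k x) * 1 * (‖g x‖ * ‖T k x‖) := by
            gcongr
            exact norm_inner_le_norm _ _
        _ = (Ψ (T k x) * ‖T k x‖) * ‖g x‖ := by ring
        _ ≤ M * ‖g x‖ := by gcongr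
    · filter_upwards [hae] with x hx
      exact (((hΨ.smooth.continuous.tendsto _).comp hx).mul tendsto_const_nhds).mul (tendsto_const_nhds.inner hx)
  have lim2 : Tendsto (fun k => ∫ x in Q, Ψ (T k x) * ‖T k x‖ ^ s * η x ^ 2) atTop
      (𝓝 (∫ x in Q, Ψ (V x) * ‖V x‖ ^ s * η x ^ 2)) := by
    apply tendsto_integral_of_dominated_convergence (fun x => M)
    · intro k
      have hc := (hTs k).continuous
      exact (((hΨ.smooth.continuous.comp hc).mul (hc.norm.rpow_const (fun _ => Or.inr hs.le))).mul (hη.continuous.pow 2)).aestronglyMeasurable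
    · exact integrable_const M
    · intro k
      refine Eventually.of_forall fun x => ?_
      have p0 := hΨ.nonneg (T k x)
      have p1 := hΨ.bdd (T k x)
      have e2 : η x ^ 2 ≤ 1 := pow_le_one₀ (h0 x) (h1 x)
      rw [Real.norm_of_nonneg (by positivity)]
      have : 0 ≤ Ψ (T k x) * ‖T k x‖ ^ s := by positivity
      nlinarith
    · filter_upwards [hae] with x hx
      exact (((hΨ.smooth.continuous.tendsto _).comp hx).mul (hx.norm.rpow_const (Or.inr hs.le))).mul tendsto_const_nhds
  have hfin := le_of_tendsto_of_tendsto lim1 ((lim2.const_mul (1 / 2)).add_const B) hineq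
  have heq : ∫ x in Q, Ψ (V x) * η x ^ 2 * ⟪g x, V x⟫ = ∫ x in Q, Ψ (V x) * ‖V x‖ ^ s * η x ^ 2 := by
    congr 1; ext x; rw [hgV]; ring
  rw [heq] at hfin
  linarith

lemma core2 {d N : ℕ} {Q : Set (Ed d)} (hQ : IsOpen Q) (hQf : volume Q ≠ ∞)
    {v : Ed d → En N} {g V : Ed d → Mat N d} {W : Ed d → EuclideanSpace ℝ ((Fin N × Fin d) × Fin d)}
    (hv : IntegrableOn v Q) (hvg : IsWeakGrad Q v g)
    (hg : IntegrableOn g Q) (hV : MemLp V 2 (volume.restrict Q)) (hW : MemLp W 2 (volume.restrict Q))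
    (hVW : IsWeakGrad Q V W)
    {s : ℝ} (hs : 1 < s) (hs3 : s < 3) (hgV : ∀ x, ⟪g x, V x⟫ = ‖V x‖ ^ s)
    {ω : ℝ} (hω0 : 0 ≤ ω) (v0 : En N) (hω : ∀ x ∈ Q, ‖v x - v0‖ ≤ ω)
    {η : Ed d → ℝ} (hη : ContDiff ℝ (⊤ : ℕ∞) η) (hηc : HasCompactSupport η) (hηQ : tsupport η ⊆ Q)
    (h0 : ∀ x, 0 ≤ η x) (h1 : ∀ x, η x ≤ 1) {L : ℝ} (hL : ∀ x, ‖fderiv ℝ η x‖ ≤ L) :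
    ∫⁻ x in Q, ENNReal.ofReal (‖V x‖ ^ s * ‖V x‖ ^ s * η x ^ 2) ≤
      ENNReal.ofReal (2 * (((N * d : ℝ) * ω) ^ 2 * (289 * ((d * (N * d) : ℝ) ^ 2 * ∫ x in Q, ‖W x‖ ^ 2)
        + 4 * L ^ 2 * (1 ^ 2 * ∫ x in Q, ‖V x‖ ^ 2)))) := by
  have : IsFiniteMeasure (volume.restrict Q) := ⟨by simpa using hQf.lt_top⟩
  set δ : ℕ → ℝ := fun n => 1 / ((n : ℝ) + 1) with hδ
  have hδ0 : ∀ n, 0 < δ n := fun n => by simp only [hδ]; positivity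
  have hG := fun n => goodPsi (E := Mat N d) s (δ n) hs hs3 (hδ0 n)
  have hs0 : 0 < s := by linarith
  set F : ℕ → Ed d → ℝ := fun n x => PsiT s (δ n) (‖V x‖ ^ 2) * ‖V x‖ ^ s * η x ^ 2 with hF
  have hFm : ∀ n, AEStronglyMeasurable (F n) (volume.restrict Q) := fun n => by
    have c1 : Continuous fun y : Mat N d => PsiT s (δ n) (‖y‖ ^ 2) * ‖y‖ ^ s :=
      (hG n).smooth.continuous.mul (continuous_norm.rpow_const (fun _ => Or.inr hs0.le))
    exact (c1.comp_aestronglyMeasurable hV.1).mul (hη.continuous.pow 2).aestronglyMeasurable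
  have hF0 : ∀ n x, 0 ≤ F n x := fun n x => by
    have := (hG n).nonneg (V x)
    simp only [hF]; positivity
  have hFi : ∀ n, Integrable (F n) (volume.restrict Q) := fun n => by
    refine Integrable.of_bound (hFm n) (1 + (δ n ^ 3)⁻¹) (Eventually.of_forall fun x => ?_)
    rw [Real.norm_of_nonneg (hF0 n x)]
    have p1 := (hG n).bdd (V x)
    have p0 := (hG n).nonneg (V x)
    have e2 : η x ^ 2 ≤ 1 := pow_le_one₀ (h0 x) (h1 x)
    refine le_trans ?_ p1
    exact mul_le_of_le_one_right (by positivity) e2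
  have hbound : ∀ n, ∫⁻ x in Q, ENNReal.ofReal (F n x) ≤ ENNReal.ofReal (2 * (((N * d : ℝ) * ω) ^ 2 * (289 * ((d * (N * d) : ℝ) ^ 2 * ∫ x in Q, ‖W x‖ ^ 2)
        + 4 * L ^ 2 * (1 ^ 2 * ∫ x in Q, ‖V x‖ ^ 2)))) := fun n => by
    rw [← ofReal_integral_eq_lintegral_ofReal (hFi n) (Eventually.of_forall (hF0 n))]
    exact ENNReal.ofReal_le_ofReal (core_s6 hQ hQf hv hvg hg hV hW hVW hs0 (hG n) hgV hω0 v0 hω hη hηc hηQ h0 h1 hL)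
  have hlim : ∀ x, Tendsto (fun n => ENNReal.ofReal (F n x)) atTop (𝓝 (ENNReal.ofReal (‖V x‖ ^ s * ‖V x‖ ^ s * η x ^ 2))) := by
    intro x
    apply (ENNReal.continuous_ofReal.tendsto _).comp
    have := psiT_tendsto s (‖V x‖ ^ 2) hs (by positivity)
    have e : (‖V x‖ ^ 2) ^ (s / 2) = ‖V x‖ ^ s := by
      rw [← Real.rpow_natCast, ← Real.rpow_mul (norm_nonneg _)]; congr 1; push_cast; ring
    rw [e] at this
    exact (this.mul_const _).mul_const _
  calc _ = ∫⁻ x in Q, liminf (fun n => ENNReal.ofReal (F n x)) atTop := by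
        congr 1; ext x; exact (hlim x).liminf_eq.symm
    _ ≤ liminf (fun n => ∫⁻ x in Q, ENNReal.ofReal (F n x)) atTop :=
        lintegral_liminf_le' fun n => (hFm n).aemeasurable.ennreal_ofReal
    _ ≤ _ := by
        refine liminf_le_of_le (by isBoundedDefault) ?_
        intro c hc
        obtain ⟨n, hn⟩ := hc.exists
        exact hn.trans (hbound n)


lemma cube_dist {d : ℕ} {c x : Ed d} {R : ℝ} (hx : x ∈ cube c R) : dist x c ≤ d * (R / 2) := by
  rw [dist_eq_norm]
  refine (pi_norm_le _).trans ?_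
  calc ∑ i, |(x - c) i| ≤ ∑ _i : Fin d, R / 2 := Finset.sum_le_sum fun i _ => by
        simpa using (hx i).le
    _ = _ := by simp

lemma cube_mono {d : ℕ} (c : Ed d) {r R : ℝ} (h : r ≤ R) : cube c r ⊆ cube c R := fun x hx i =>
  (hx i).trans_le (by linarith)

open scoped ContDiff Manifold in
lemma cutoff0 (d : ℕ) : ∃ η : Ed d → ℝ, ContDiff ℝ (⊤ : ℕ∞) η ∧ HasCompactSupport η ∧
    tsupport η ⊆ cube 0 1 ∧ (∀ x, 0 ≤ η x) ∧ (∀ x, η x ≤ 1) ∧ (∀ x ∈ cube (0 : Ed d) (1 / 4), η x = 1) := by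
  set s : Set (Ed d) := {x | ∀ i, |x i| ≤ 1 / 8} with hs
  have hsc : IsClosed s := by
    have : s = ⋂ i, {x : Ed d | |x i| ≤ 1 / 8} := by ext x; simp [s]
    rw [this]
    exact isClosed_iInter fun i => isClosed_le (by fun_prop) continuous_const
  set t : Set (Ed d) := {x | ∀ i, |x i| ≤ 1 / 4} with ht
  have htc : IsClosed t := by
    have : t = ⋂ i, {x : Ed d | |x i| ≤ 1 / 4} := by ext x; simp [t]
    rw [this]
    exact isClosed_iInter fun i => isClosed_le (by fun_prop) continuous_const
  have h_incl : s ⊆ interior t := by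
    have : cube (0 : Ed d) (1 / 2) ⊆ interior t := by
      apply interior_maximal _ (cube_open _ _)
      intro x hx i
      have := hx i
      simp at this
      linarith
    refine subset_trans ?_ this
    intro x hx i
    have := hx i
    simp only [PiLp.zero_apply, sub_zero]
    linarith
  obtain ⟨f, hf1, hf0, hf⟩ := exists_contMDiffMap_one_nhds_of_subset_interior 𝓘(ℝ, Ed d) (n := ⊤) hsc h_incl
  have hsupp : Function.support f ⊆ t := by
    intro x hx
    by_contra h
    exact hx (hf0 x h)
  have hts : tsupport f ⊆ t := closure_minimal hsupp htc
  have ht1 : t ⊆ cube 0 1 := by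
    intro x hx i
    have := hx i
    simp only [PiLp.zero_apply, sub_zero]
    linarith
  refine ⟨f, f.contMDiff.contDiff, ?_, hts.trans ht1, fun x => (hf x).1, fun x => (hf x).2, ?_⟩
  · apply HasCompactSupport.of_support_subset_isCompact (isCompact_closedBall (0 : Ed d) (d * (1 / 2)))
    intro x hx
    exact cube_dist (ht1 (hsupp hx))
  · intro x hx
    apply hf1.self_of_nhdsSet
    intro i
    have := hx i
    simp only [PiLp.zero_apply, sub_zero] at this
    linarith

lemma cutoff (d : ℕ) : ∃ L0 : ℝ, 0 ≤ L0 ∧ ∀ (x0 : Ed d) (r : ℝ), 0 < r → ∃ η : Ed d → ℝ, ContDiff ℝ (⊤ : ℕ∞) η ∧ HasCompactSupport η ∧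
    tsupport η ⊆ cube x0 r ∧ (∀ x, 0 ≤ η x) ∧ (∀ x, η x ≤ 1) ∧ (∀ x ∈ cube x0 (r / 4), η x = 1) ∧
    ∀ x, ‖fderiv ℝ η x‖ ≤ L0 / r := by
  obtain ⟨η, h1, h2, h3, h4, h5, h6⟩ := cutoff0 d
  obtain ⟨L0, hL0⟩ := (h1.continuous_fderiv (by simp)).bounded_above_of_compact_support (h2.fderiv ℝ)
  have hL00 : 0 ≤ L0 := (norm_nonneg _).trans (hL0 0)
  refine ⟨L0, hL00, fun x0 r hr => ⟨fun x => η (r⁻¹ • (x - x0)), ?_, ?_, ?_, fun x => h4 _, fun x => h5 _, ?_, ?_⟩⟩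
  · have hc : ContDiff ℝ (⊤ : ℕ∞) fun x : Ed d => r⁻¹ • (x - x0) := by fun_prop
    exact h1.comp hc
  all_goals
    have hcube : ∀ (x : Ed d) (a : ℝ), r⁻¹ • (x - x0) ∈ cube 0 a ↔ x ∈ cube x0 (r * a) := by
      intro x a
      unfold cube
      simp only [Set.mem_ofPred_eq, PiLp.smul_apply, PiLp.sub_apply, PiLp.zero_apply, sub_zero, smul_eq_mul]
      apply forall_congr'
      intro i
      rw [abs_mul, abs_of_pos (inv_pos.2 hr), inv_mul_lt_iff₀ hr, mul_div_assoc]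
    have hts : tsupport (fun x => η (r⁻¹ • (x - x0))) ⊆ cube x0 r := by
      have hc : Continuous fun x : Ed d => r⁻¹ • (x - x0) := by fun_prop
      have : tsupport (fun x => η (r⁻¹ • (x - x0))) ⊆ (fun x : Ed d => r⁻¹ • (x - x0)) ⁻¹' tsupport η := by
        apply closure_minimal _ ((isClosed_tsupport η).preimage hc)
        intro x hx
        exact subset_closure (show r⁻¹ • (x - x0) ∈ Function.support η from hx)
      intro x hx
      have := (hcube x 1).1 (h3 (this hx))
      rwa [mul_one] at this
  · apply HasCompactSupport.of_support_subset_isCompact (isCompact_closedBall x0 (d * (r / 2)))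
    intro x hx
    exact cube_dist (hts (subset_closure hx))
  · exact hts
  · intro x hx
    apply h6
    rw [hcube]
    convert hx using 2
    ring
  · intro x
    have hd : HasFDerivAt (fun x : Ed d => r⁻¹ • (x - x0)) (r⁻¹ • ContinuousLinearMap.id ℝ (Ed d)) x :=
      ((hasFDerivAt_id x).sub_const x0).const_smul r⁻¹
    have := (h1.differentiable (by simp) (r⁻¹ • (x - x0))).hasFDerivAt.comp x hd
    have e : fderiv ℝ (fun x => η (r⁻¹ • (x - x0))) x = _ := HasFDerivAt.fderiv this
    rw [e]
    apply ContinuousLinearMap.opNorm_le_bound _ (by positivity)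
    intro y
    simp only [ContinuousLinearMap.comp_apply, smul_apply, ContinuousLinearMap.id_apply]
    refine ((fderiv ℝ η _).le_of_opNorm_le (hL0 _) _).trans (le_of_eq ?_)
    rw [norm_smul, Real.norm_of_nonneg (inv_pos.2 hr).le]; field_simp

lemma Vm_norm {ι : Type} [Fintype ι] {p : ℝ} (hp : 1 < p) (y : EuclideanSpace ℝ ι) : ‖Vm p y‖ = ‖y‖ ^ (p / 2) := by
  unfold Vm
  rw [norm_smul, Real.norm_of_nonneg (by positivity)]
  rcases (norm_nonneg y).eq_or_lt with h | h
  · rw [← h, Real.zero_rpow (by linarith : p / 2 ≠ 0)]; simp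
  · rw [← Real.rpow_add_one h.ne']; congr 1; ring

lemma Vm_norm_sq {ι : Type} [Fintype ι] {p : ℝ} (hp : 1 < p) (y : EuclideanSpace ℝ ι) : ‖Vm p y‖ ^ 2 = ‖y‖ ^ p := by
  rw [Vm_norm hp, ← Real.rpow_natCast, ← Real.rpow_mul (norm_nonneg _)]; congr 1; push_cast; ring

lemma Vm_norm_s {ι : Type} [Fintype ι] {p : ℝ} (hp : 1 < p) (y : EuclideanSpace ℝ ι) :
    ‖Vm p y‖ ^ (1 + 2 / p) = ‖y‖ ^ (p / 2 + 1) := by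
  rw [Vm_norm hp, ← Real.rpow_mul (norm_nonneg _)]; congr 1; field_simp

lemma Vm_inner {ι : Type} [Fintype ι] {p : ℝ} (hp : 1 < p) (y : EuclideanSpace ℝ ι) :
    ⟪y, Vm p y⟫ = ‖Vm p y‖ ^ (1 + 2 / p) := by
  rw [Vm_norm_s hp]
  unfold Vm
  rw [real_inner_smul_right, real_inner_self_eq_norm_sq]
  rcases (norm_nonneg y).eq_or_lt with h | h
  · rw [← h, Real.zero_rpow (by linarith : p / 2 + 1 ≠ 0)]; simp
  · rw [← Real.rpow_natCast, ← Real.rpow_add h]; congr 1; push_cast; ring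

lemma Vm_measurable {ι : Type} [Fintype ι] (p : ℝ) : Measurable (Vm p : EuclideanSpace ℝ ι → _) := by
  unfold Vm
  exact (measurable_norm.pow_const _).smul measurable_id

lemma local_est_s6 {d N : ℕ} {p c₁ : ℝ} (hp : 1 < p) (hc₁ : 0 < c₁) {L0 : ℝ} (hL0 : 0 ≤ L0)
    {U : Set (Ed d)} (hU : MeasurableSet U) (hUf : volume U ≠ ∞)
    {v : Ed d → En N} {g : Ed d → Mat N d} {W : Ed d → EuclideanSpace ℝ ((Fin N × Fin d) × Fin d)}
    (hv : MemLp v (ENNReal.ofReal p) (volume.restrict U)) (hvg : IsWeakGrad U v g)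
    (hg : MemLp g (ENNReal.ofReal p) (volume.restrict U))
    (hgp : IntegrableOn (fun x => ‖g x‖ ^ p) U)
    (hVW : IsWeakGrad U (fun x => Vm p (g x)) W)
    {x0 : Ed d} {r : ℝ} (hr : 0 < r) (hsub : cube x0 (4 * r) ⊆ U)
    (hW : MemLp W 2 (volume.restrict (cube x0 r)))
    (hcacc : ∫⁻ x in cube x0 r, (‖W x‖₊ : ℝ≥0∞) ^ 2 ≤
            ENNReal.ofReal (c₁ / r ^ 2) *
              ∫⁻ x in cube x0 (4 * r), (‖Vm p (g x)‖₊ : ℝ≥0∞) ^ 2)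
    {ω : ℝ} (hω0 : 0 ≤ ω) (v0 : En N) (hω : ∀ x ∈ cube x0 r, ‖v x - v0‖ ≤ ω)
    {η : Ed d → ℝ} (hη : ContDiff ℝ (⊤ : ℕ∞) η) (hηc : HasCompactSupport η) (hηQ : tsupport η ⊆ cube x0 r)
    (h0 : ∀ x, 0 ≤ η x) (h1 : ∀ x, η x ≤ 1) (hη1 : ∀ x ∈ cube x0 (r / 4), η x = 1) (hL : ∀ x, ‖fderiv ℝ η x‖ ≤ L0 / r) :
    ∫⁻ x in cube x0 (r / 4), ENNReal.ofReal (‖g x‖ ^ (p + 2)) ≤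
      ENNReal.ofReal (2 * (N * d : ℝ) ^ 2 * (289 * (d * (N * d) : ℝ) ^ 2 * c₁ + 4 * L0 ^ 2) * (ω / r) ^ 2 *
        ∫ x in U, ‖g x‖ ^ p) := by
  have hfin : IsFiniteMeasure (volume.restrict U) := ⟨by simpa using hUf.lt_top⟩
  have hp1 : 1 ≤ ENNReal.ofReal p := by rw [ENNReal.one_le_ofReal]; exact hp.le
  have hQU : cube x0 r ⊆ U := (cube_mono x0 (by linarith)).trans hsub
  have hQ := cube_open x0 r
  have hQf : volume (cube x0 r) ≠ ∞ := ((measure_mono hQU).trans_lt hUf.lt_top).ne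
  have hVm : AEStronglyMeasurable (fun x => Vm p (g x)) (volume.restrict U) :=
    ((Vm_measurable p).comp_aemeasurable hg.1.aemeasurable).aestronglyMeasurable
  have hV : MemLp (fun x => Vm p (g x)) 2 (volume.restrict U) := by
    rw [memLp_two_iff_integrable_sq_norm hVm]
    simp_rw [Vm_norm_sq hp]
    exact hgp
  have hmono := Measure.restrict_mono hQU (le_refl (volume : Measure (Ed d)))
  have hs1 : 1 < 1 + 2 / p := by have : 0 < 2 / p := by positivity
                                 linarith
  have hs3 : 1 + 2 / p < 3 := by
    have : 2 / p < 2 := by rw [div_lt_iff₀ (by linarith)]; linarith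
    linarith
  have main := core2 hQ hQf (v := v) (g := g) (V := fun x => Vm p (g x)) (W := W)
    ((hv.integrable hp1).mono_measure hmono) (weakGrad_mono hU hQU hvg)
    ((hg.integrable hp1).mono_measure hmono) (hV.mono_measure hmono) hW (weakGrad_mono hU hQU hVW)
    hs1 hs3 (fun x => Vm_inner hp (g x)) hω0 v0 hω hη hηc hηQ h0 h1 hL
  set I := ∫ x in U, ‖g x‖ ^ p with hI
  have hI0 : 0 ≤ I := integral_nonneg fun x => by positivity
  have hlI : ENNReal.ofReal I = ∫⁻ x in U, ENNReal.ofReal (‖g x‖ ^ p) :=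
    ofReal_integral_eq_lintegral_ofReal hgp (Eventually.of_forall fun x => by positivity)
  have b1 : ∫ x in cube x0 r, ‖Vm p (g x)‖ ^ 2 ≤ I := by
    simp_rw [Vm_norm_sq hp]
    exact setIntegral_mono_set hgp (Eventually.of_forall fun x => by positivity) hQU.eventuallyLE
  have b2 : ∫ x in cube x0 r, ‖W x‖ ^ 2 ≤ c₁ / r ^ 2 * I := by
    rw [integral_eq_lintegral_of_nonneg_ae (Eventually.of_forall fun x => by positivity) (show AEStronglyMeasurable (fun x => ‖W x‖ ^ 2) _ from hW.1.norm.pow 2)]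
    apply ENNReal.toReal_le_of_le_ofReal (by positivity)
    rw [ENNReal.ofReal_mul (by positivity), hlI]
    have e : ∀ x, ENNReal.ofReal (‖W x‖ ^ 2) = (‖W x‖₊ : ℝ≥0∞) ^ 2 := fun x => by
      rw [ENNReal.ofReal_pow (norm_nonneg _), ofReal_norm]; rfl
    have e2 : ∀ x, ENNReal.ofReal (‖g x‖ ^ p) = (‖Vm p (g x)‖₊ : ℝ≥0∞) ^ 2 := fun x => by
      rw [← Vm_norm_sq hp, ENNReal.ofReal_pow (norm_nonneg _), ofReal_norm]; rfl
    simp_rw [e, e2]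
    refine hcacc.trans ?_
    gcongr
  calc ∫⁻ x in cube x0 (r / 4), ENNReal.ofReal (‖g x‖ ^ (p + 2))
      = ∫⁻ x in cube x0 (r / 4), ENNReal.ofReal (‖Vm p (g x)‖ ^ (1 + 2 / p) * ‖Vm p (g x)‖ ^ (1 + 2 / p) * η x ^ 2) := by
        apply setLIntegral_congr_fun (cube_open _ _).measurableSet
        intro x hx
        simp only
        rw [hη1 x hx, Vm_norm_s hp]
        congr 1
        rw [← Real.rpow_add_of_nonneg (norm_nonneg _) (by linarith) (by linarith)]
        simp only [one_pow, mul_one]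
        congr 1; ring
    _ ≤ ∫⁻ x in cube x0 r, ENNReal.ofReal (‖Vm p (g x)‖ ^ (1 + 2 / p) * ‖Vm p (g x)‖ ^ (1 + 2 / p) * η x ^ 2) :=
        lintegral_mono_set (cube_mono _ (by linarith))
    _ ≤ _ := main
    _ ≤ _ := by
        apply ENNReal.ofReal_le_ofReal
        calc 2 * (((N * d : ℝ) * ω) ^ 2 * (289 * ((d * (N * d) : ℝ) ^ 2 * ∫ x in cube x0 r, ‖W x‖ ^ 2)
              + 4 * (L0 / r) ^ 2 * (1 ^ 2 * ∫ x in cube x0 r, ‖Vm p (g x)‖ ^ 2)))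
            ≤ 2 * (((N * d : ℝ) * ω) ^ 2 * (289 * ((d * (N * d) : ℝ) ^ 2 * (c₁ / r ^ 2 * I))
              + 4 * (L0 / r) ^ 2 * (1 ^ 2 * I))) := by gcongr
          _ = _ := by field_simp

def xk {d : ℕ} (cq : Ed d) (R : ℝ) (k : Fin d → Fin 33) : Ed d :=
  WithLp.toLp 2 (fun i => cq i + R / 32 * (((k i : ℕ) : ℝ) - 16))

lemma xk_sub {d : ℕ} (cq : Ed d) {R : ℝ} (hR : 0 < R) (k : Fin d → Fin 33) (i : Fin d) :
    |xk cq R k i - cq i| ≤ R / 2 := by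
  have h1 : ((k i : ℕ) : ℝ) ≤ 32 := by
    have := (k i).2
    exact_mod_cast (by omega : (k i : ℕ) ≤ 32)
  have h2 : (0 : ℝ) ≤ ((k i : ℕ) : ℝ) := by positivity
  have h3 : xk cq R k i - cq i = R / 32 * (((k i : ℕ) : ℝ) - 16) := by
    simp [xk]
  rw [h3, abs_le]
  constructor <;> nlinarith

lemma xk_cube {d : ℕ} (cq : Ed d) {R : ℝ} (hR : 0 < R) (k : Fin d → Fin 33) {s : ℝ} (hs : s ≤ R) :
    cube (xk cq R k) s ⊆ cube cq (2 * R) := by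
  intro x hx i
  have h1 := hx i
  have h2 := xk_sub cq hR k i
  calc |x i - cq i| = |(x i - xk cq R k i) + (xk cq R k i - cq i)| := by ring_nf
    _ ≤ _ := abs_add_le _ _
    _ < _ := by linarith

lemma cover {d : ℕ} (cq : Ed d) {R : ℝ} (hR : 0 < R) :
    cube cq R ⊆ ⋃ k : Fin d → Fin 33, cube (xk cq R k) (R / 16) := by
  intro x hx
  rw [mem_iUnion]
  have key : ∀ i, ∃ n : Fin 33, |x i - (cq i + R / 32 * (((n : ℕ) : ℝ) - 16))| < R / 16 / 2 := by
    intro i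
    have h := abs_lt.1 (hx i)
    set y : ℝ := 32 * (x i - cq i) / R + 16 with hy
    have hxy : x i - cq i = R / 32 * (y - 16) := by rw [hy]; field_simp; ring
    have y0 : 0 < y := by
      by_contra hc
      push Not at hc
      nlinarith
    have y1 : y < 32 := by
      by_contra hc
      push Not at hc
      nlinarith
    have f1 := Nat.floor_le y0.le
    have f2 := Nat.lt_floor_add_one y
    have f3 : ⌊y⌋₊ < 33 := by
      have : (⌊y⌋₊ : ℝ) < 33 := by linarith
      exact_mod_cast this
    refine ⟨⟨⌊y⌋₊, f3⟩, ?_⟩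
    have : x i - (cq i + R / 32 * ((⌊y⌋₊ : ℝ) - 16)) = R / 32 * (y - ⌊y⌋₊) := by
      linear_combination hxy
    simp only [this]
    rw [abs_of_nonneg (by have : 0 ≤ y - ⌊y⌋₊ := by linarith
                          positivity)]
    nlinarith
  choose k hk using key
  exact ⟨k, fun i => by simpa [xk] using hk i⟩

lemma avg_eq {d : ℕ} (c : Ed d) {R : ℝ} (hR : 0 < R) (f : Ed d → ℝ) :
    ⨍ x in cube c R, f x = (R ^ d)⁻¹ * ∫ x in cube c R, f x := by
  rw [setAverage_eq, Measure.real, cube_volume c R hR, ENNReal.toReal_ofReal (by positivity), smul_eq_mul]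

lemma osc {d N : ℕ} {p α c₂ : ℝ} (hp : 1 < p) (hα : α ∈ Set.Ioo (0 : ℝ) 1) (hc₂ : 0 < c₂)
    {v : Ed d → En N} {g : Ed d → Mat N d} {cq x0 : Ed d} {r : ℝ} (hr : 0 < r)
    (hsub : cube x0 (2 * r) ⊆ cube cq (8 * r))
    (hgp : IntegrableOn (fun x => ‖g x‖ ^ p) (cube cq (8 * r)))
    (hh : ∀ x ∈ cube x0 r, ∀ y ∈ cube x0 r,
            ‖v x - v y‖ ≤
              c₂ * r ^ (1 - α) * ((⨍ z in cube x0 (2 * r), ‖g z‖ ^ p) ^ (1 / p) + 1) *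
                dist x y ^ α) :
    ∀ x ∈ cube x0 r, ‖v x - v x0‖ ≤
      c₂ * (d + 1) * 4 ^ d * ((⨍ z in cube cq (8 * r), ‖g z‖ ^ p) ^ (1 / p) + 1) * r := by
  intro x hx
  have hx0 : x0 ∈ cube x0 r := fun i => by simpa using hr
  have hp0 : 0 < p := by linarith
  have e1 := hh x hx x0 hx0
  have hd : dist x x0 ≤ (d + 1) * r := by
    have := cube_dist hx
    have : (0 : ℝ) ≤ d := by positivity
    nlinarith
  have hdα : dist x x0 ^ α ≤ (d + 1) * r ^ α := by
    calc dist x x0 ^ α ≤ ((d + 1) * r) ^ α := Real.rpow_le_rpow dist_nonneg hd hα.1.le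
      _ = (d + 1 : ℝ) ^ α * r ^ α := Real.mul_rpow (by positivity) hr.le
      _ ≤ (d + 1 : ℝ) * r ^ α := by
        gcongr
        calc (d + 1 : ℝ) ^ α ≤ (d + 1 : ℝ) ^ (1 : ℝ) :=
              Real.rpow_le_rpow_of_exponent_le (by linarith [(by positivity : (0 : ℝ) ≤ d)]) hα.2.le
          _ = _ := Real.rpow_one _
  set I := ∫ z in cube cq (8 * r), ‖g z‖ ^ p with hI
  have hI0 : 0 ≤ I := by rw [hI]; positivity
  have hA : ⨍ z in cube x0 (2 * r), ‖g z‖ ^ p ≤ 4 ^ d * ⨍ z in cube cq (8 * r), ‖g z‖ ^ p := by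
    rw [avg_eq _ (by positivity), avg_eq _ (by positivity), ← hI]
    have i1 : ∫ z in cube x0 (2 * r), ‖g z‖ ^ p ≤ I :=
      setIntegral_mono_set hgp (Eventually.of_forall fun x => by positivity) hsub.eventuallyLE
    have : (4 : ℝ) ^ d * (((8 * r) ^ d)⁻¹ * I) = ((2 * r) ^ d)⁻¹ * I := by
      rw [show 8 * r = 4 * (2 * r) by ring, mul_pow 4]
      field_simp
    rw [this]
    gcongr
  have hA0 : 0 ≤ ⨍ z in cube cq (8 * r), ‖g z‖ ^ p := by
    rw [avg_eq _ (by positivity)]; positivity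
  have hA0' : 0 ≤ ⨍ z in cube x0 (2 * r), ‖g z‖ ^ p := by
    rw [avg_eq _ (by positivity)]; positivity
  set A := (⨍ z in cube cq (8 * r), ‖g z‖ ^ p) ^ (1 / p) with hAdef
  have hA0p : 0 ≤ A := by positivity
  have h4 : (1 : ℝ) ≤ 4 ^ d := one_le_pow₀ (by norm_num)
  have hAp : (⨍ z in cube x0 (2 * r), ‖g z‖ ^ p) ^ (1 / p) ≤ 4 ^ d * A := by
    calc _ ≤ (4 ^ d * ⨍ z in cube cq (8 * r), ‖g z‖ ^ p) ^ (1 / p) :=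
          Real.rpow_le_rpow hA0' hA (by positivity)
      _ = ((4 : ℝ) ^ d) ^ (1 / p) * A := Real.mul_rpow (by positivity) hA0
      _ ≤ 4 ^ d * A := by
        gcongr
        calc ((4 : ℝ) ^ d) ^ (1 / p) ≤ ((4 : ℝ) ^ d) ^ (1 : ℝ) :=
              Real.rpow_le_rpow_of_exponent_le h4 (by rw [div_le_one hp0]; exact hp.le)
          _ = _ := Real.rpow_one _
  calc ‖v x - v x0‖ ≤ _ := e1
    _ ≤ c₂ * r ^ (1 - α) * (4 ^ d * A + 4 ^ d) * ((d + 1) * r ^ α) := by gcongr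
    _ = c₂ * (d + 1) * 4 ^ d * (A + 1) * (r ^ (1 - α) * r ^ α) := by ring
    _ = _ := by rw [← Real.rpow_add hr]; simp

lemma final_real {d : ℕ} {p C A R L : ℝ} (hp : 1 < p) (hC : 0 ≤ C) (hA : 0 ≤ A) (hR : 0 < R) (hL : 0 ≤ L)
    (h : L ≤ 33 ^ d * (C * (A + 1) ^ 2 * ((2 * R) ^ d * A ^ p))) :
    ((R ^ d)⁻¹ * L) ^ (1 / (p + 2)) ≤ ((33 ^ d * C * 2 ^ d) ^ (1 / (p + 2)) + 1) * (A + 1) := by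
  have hp2 : 0 < p + 2 := by linarith
  have h1 : (R ^ d)⁻¹ * L ≤ (33 ^ d * C * 2 ^ d) * (A + 1) ^ (p + 2) := by
    have e : (A + 1) ^ (p + 2) = (A + 1) ^ p * (A + 1) ^ 2 := by
      rw [Real.rpow_add (by linarith)]; norm_num
    have e2 : A ^ p ≤ (A + 1) ^ p := Real.rpow_le_rpow hA (by linarith) (by linarith)
    rw [inv_mul_le_iff₀ (by positivity), e]
    calc L ≤ _ := h
      _ ≤ 33 ^ d * (C * (A + 1) ^ 2 * ((2 * R) ^ d * (A + 1) ^ p)) := by gcongr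
      _ = _ := by rw [mul_pow]; ring
  calc ((R ^ d)⁻¹ * L) ^ (1 / (p + 2)) ≤ ((33 ^ d * C * 2 ^ d) * (A + 1) ^ (p + 2)) ^ (1 / (p + 2)) :=
        Real.rpow_le_rpow (by positivity) h1 (by positivity)
    _ = (33 ^ d * C * 2 ^ d) ^ (1 / (p + 2)) * (A + 1) := by
        rw [Real.mul_rpow (by positivity) (by positivity), ← Real.rpow_mul (by positivity),
          mul_one_div_cancel hp2.ne', Real.rpow_one]
    _ ≤ _ := by gcongr; linarith


/-- `L^{p+2}` interpolation estimate: under the Caccioppoli estimate for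
`V(∇u)` and the interior Hölder estimate for `u`, one has
`(⨍_Q |∇u|^{p+2})^{1/(p+2)} ≤ c((⨍_{2Q}|∇u|^p)^{1/p} + 1)` whenever `2Q ⊆ Q₀`, with
`c = c(d,N,p,α,c₁,c₂)`. -/
theorem stmt6 (d N : ℕ) (p α c₁ c₂ : ℝ) (hp : 1 < p) (hα : α ∈ Set.Ioo (0 : ℝ) 1)
    (hc₁ : 0 < c₁) (hc₂ : 0 < c₂) :
    ∃ c : ℝ, 0 < c ∧
      ∀ (c₀ : Ed d) (R₀ : ℝ), 0 < R₀ →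
      ∀ (u v : Ed d → En N) (g : Ed d → Mat N d)
        (W : Ed d → EuclideanSpace ℝ ((Fin N × Fin d) × Fin d)),
        -- `u ∈ W^{1,p}(Q₀;ℝ^N)` with weak gradient `g`
        MemLp u (ENNReal.ofReal p) (volume.restrict (cube c₀ R₀)) →
        IsWeakGrad (cube c₀ R₀) u g →
        MemLp g (ENNReal.ofReal p) (volume.restrict (cube c₀ R₀)) →
        -- (i) `V(∇u) ∈ W^{1,2}_loc(Q₀)` with the Caccioppoli estimate
        IsWeakGrad (cube c₀ R₀) (fun x => Vm p (g x)) W →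
        (∀ (cq : Ed d) (R : ℝ), 0 < R → cube cq (4 * R) ⊆ cube c₀ R₀ →
          MemLp W 2 (volume.restrict (cube cq R)) ∧
          ∫⁻ x in cube cq R, (‖W x‖₊ : ℝ≥0∞) ^ 2 ≤
            ENNReal.ofReal (c₁ / R ^ 2) *
              ∫⁻ x in cube cq (4 * R), (‖Vm p (g x)‖₊ : ℝ≥0∞) ^ 2) →
        -- (ii) `v` is a continuous representative satisfying the Hölder estimate
        ContinuousOn v (cube c₀ R₀) →
        u =ᵐ[volume.restrict (cube c₀ R₀)] v →
        (∀ (cq : Ed d) (R : ℝ), 0 < R → cube cq (3 * R) ⊆ cube c₀ R₀ →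
          ∀ x ∈ cube cq R, ∀ y ∈ cube cq R,
            ‖v x - v y‖ ≤
              c₂ * R ^ (1 - α) * ((⨍ z in cube cq (2 * R), ‖g z‖ ^ p) ^ (1 / p) + 1) *
                dist x y ^ α) →
      ∀ (cq : Ed d) (R : ℝ), 0 < R → cube cq (2 * R) ⊆ cube c₀ R₀ →
        MemLp g (ENNReal.ofReal (p + 2)) (volume.restrict (cube cq R)) ∧
        (⨍ x in cube cq R, ‖g x‖ ^ (p + 2)) ^ (1 / (p + 2)) ≤
          c * ((⨍ x in cube cq (2 * R), ‖g x‖ ^ p) ^ (1 / p) + 1) := by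
  obtain ⟨L0, hL0, hcut⟩ := cutoff d
  set Cl : ℝ := 2 * (N * d : ℝ) ^ 2 * (289 * (d * (N * d) : ℝ) ^ 2 * c₁ + 4 * L0 ^ 2) with hCl
  have hCl0 : 0 ≤ Cl := by rw [hCl]; positivity
  set C : ℝ := Cl * (c₂ * (d + 1) * 4 ^ d) ^ 2 with hC
  have hC0 : 0 ≤ C := by rw [hC]; positivity
  have hp2 : 0 < p + 2 := by linarith
  have hp0 : 0 < p := by linarith
  refine ⟨(33 ^ d * C * 2 ^ d) ^ (1 / (p + 2)) + 1, by positivity, ?_⟩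
  intro c₀ R₀ hR₀ u v g W hu hug hg hVW hcacc hvc huv hhol cq R hR hsub
  have hmono := Measure.restrict_mono hsub (le_refl (volume : Measure (Ed d)))
  have hUm : MeasurableSet (cube cq (2 * R)) := (cube_open _ _).measurableSet
  have hUf : volume (cube cq (2 * R)) ≠ ∞ := by
    rw [cube_volume _ _ (by positivity)]; exact ENNReal.ofReal_ne_top
  have hv : MemLp v (ENNReal.ofReal p) (volume.restrict (cube cq (2 * R))) :=
    (hu.ae_eq huv).mono_measure hmono
  have hvg0 : IsWeakGrad (cube c₀ R₀) v g := by
    intro φ h1 h2 h3 a i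
    rw [← hug φ h1 h2 h3 a i]
    refine integral_congr_ae ?_
    filter_upwards [huv] with x hx
    rw [hx]
  have hvg := weakGrad_mono (cube_open c₀ R₀).measurableSet hsub hvg0
  have hVW' := weakGrad_mono (cube_open c₀ R₀).measurableSet hsub hVW
  have hg' := hg.mono_measure hmono
  have hgp : IntegrableOn (fun x => ‖g x‖ ^ p) (cube cq (2 * R)) := by
    have := hg'.integrable_norm_rpow (by simpa using hp0) ENNReal.ofReal_ne_top
    rwa [ENNReal.toReal_ofReal hp0.le] at this
  set A := (⨍ x in cube cq (2 * R), ‖g x‖ ^ p) ^ (1 / p) with hA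
  have hAv0 : 0 ≤ ⨍ x in cube cq (2 * R), ‖g x‖ ^ p := by
    rw [avg_eq _ (by positivity)]; positivity
  have hA0 : 0 ≤ A := by positivity
  have hAp : ∫ x in cube cq (2 * R), ‖g x‖ ^ p = (2 * R) ^ d * A ^ p := by
    rw [hA, ← Real.rpow_mul hAv0, one_div_mul_cancel hp0.ne', Real.rpow_one, avg_eq _ (by positivity)]
    field_simp
  have hr : 0 < R / 4 := by positivity
  have h8 : 8 * (R / 4) = 2 * R := by ring
  have hloc : ∀ k : Fin d → Fin 33, ∫⁻ x in cube (xk cq R k) (R / 16), ENNReal.ofReal (‖g x‖ ^ (p + 2)) ≤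
      ENNReal.ofReal (C * (A + 1) ^ 2 * ((2 * R) ^ d * A ^ p)) := by
    intro k
    obtain ⟨η, e1, e2, e3, e4, e5, e6, e7⟩ := hcut (xk cq R k) (R / 4) hr
    have s4 : cube (xk cq R k) (4 * (R / 4)) ⊆ cube cq (2 * R) := xk_cube cq hR k (by linarith)
    have s3 : cube (xk cq R k) (3 * (R / 4)) ⊆ cube cq (2 * R) := xk_cube cq hR k (by linarith)
    have s2 : cube (xk cq R k) (2 * (R / 4)) ⊆ cube cq (2 * R) := xk_cube cq hR k (by linarith)
    obtain ⟨w1, w2⟩ := hcacc _ _ hr (s4.trans hsub)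
    have ho := osc hp hα hc₂ (v := v) (g := g) (cq := cq) hr (by rw [h8]; exact s2) (by rw [h8]; exact hgp)
      (hhol _ _ hr (s3.trans hsub))
    rw [h8, ← hA] at ho
    have := local_est_s6 hp hc₁ hL0 hUm hUf hv hvg hg' hgp hVW' hr s4 w1 w2 (by positivity) _ ho e1 e2 e3 e4 e5 e6 e7
    rw [show R / 4 / 4 = R / 16 by ring, hAp] at this
    refine this.trans (le_of_eq ?_)
    congr 1
    rw [mul_div_assoc, div_self hr.ne', hC, hCl]
    ring
  have hsum : ∫⁻ x in cube cq R, ENNReal.ofReal (‖g x‖ ^ (p + 2)) ≤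
      ENNReal.ofReal (33 ^ d * (C * (A + 1) ^ 2 * ((2 * R) ^ d * A ^ p))) := by
    calc _ ≤ ∫⁻ x in ⋃ k : Fin d → Fin 33, cube (xk cq R k) (R / 16), ENNReal.ofReal (‖g x‖ ^ (p + 2)) :=
          lintegral_mono_set (cover cq hR)
      _ ≤ ∑' k : Fin d → Fin 33, ∫⁻ x in cube (xk cq R k) (R / 16), ENNReal.ofReal (‖g x‖ ^ (p + 2)) :=
          lintegral_iUnion_le _ _
      _ = ∑ k : Fin d → Fin 33, ∫⁻ x in cube (xk cq R k) (R / 16), ENNReal.ofReal (‖g x‖ ^ (p + 2)) :=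
          tsum_fintype _
      _ ≤ ∑ k : Fin d → Fin 33, ENNReal.ofReal (C * (A + 1) ^ 2 * ((2 * R) ^ d * A ^ p)) :=
          Finset.sum_le_sum fun k _ => hloc k
      _ = _ := by
          rw [Finset.sum_const, nsmul_eq_mul, ENNReal.ofReal_mul (p := (33 : ℝ) ^ d) (by positivity)]
          congr 1
          simp [ENNReal.ofReal_pow]
  have hQ2 : cube cq R ⊆ cube cq (2 * R) := cube_mono cq (by linarith)
  have hgm : AEStronglyMeasurable g (volume.restrict (cube cq R)) :=
    hg'.1.mono_measure (Measure.restrict_mono hQ2 le_rfl)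
  refine ⟨⟨hgm, ?_⟩, ?_⟩
  · rw [eLpNorm_lt_top_iff_lintegral_rpow_enorm_lt_top (by simpa using hp2) ENNReal.ofReal_ne_top,
      ENNReal.toReal_ofReal hp2.le]
    refine lt_of_le_of_lt (le_trans (le_of_eq ?_) hsum) ENNReal.ofReal_lt_top
    refine lintegral_congr fun x => ?_
    rw [← ofReal_norm, ENNReal.ofReal_rpow_of_nonneg (norm_nonneg _) hp2.le]
  · rw [avg_eq _ hR]
    refine final_real hp hC0 hA0 hR (by positivity) ?_
    rw [integral_eq_lintegral_of_nonneg_ae (Eventually.of_forall fun x => by positivity)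
      (by exact (hgm.norm.aemeasurable.pow_const _).aestronglyMeasurable)]
    exact ENNReal.toReal_le_of_le_ofReal (by positivity) hsum
end
end
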